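/- arXiv:2002.04282 — 2 statements merged into one kernel-verified Lean document; each statement's English description precedes it below -/
import Mathlib

section
/- Let n ≥ 1 and let X ⊆ ℝ^n be ⟨ℝ,+,<,ℤ⟩-definable. Then X is ⟨ℝ,+,<,1⟩-definable if and only if for every rational generalized section of X, viewed (via deletion of the frozen coordinates) as a subset Y of ℝ^{n−r}, the set of Y-singular points in ℝ^{n−r} is finite. -/
/-!
The proof replaces definability by a combinatorial invariance. A set is `SsInv` if membership depends
only on the signs of finitely many rational affine forms; by Fourier–Motzkin elimination this is the
same as `⟨ℝ,+,<,1⟩`-definability (`SsInv.of_definable`, `SsInv.definable`). A set is `LsInv` if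
membership depends only on the signs of `ev j x + c` for finitely many rational linear forms `j ∈ J` and
all integers `c`; every `⟨ℝ,+,<,ℤ⟩`-definable set has this weaker property (`LsInv.of_definable`), and
nothing else about such sets is needed.

If `X` is `SsInv`, so are its rational sections. A singular point of an `SsInv` set is determined by
the set of forms vanishing at it, so there are finitely many (`SsInv.finite_singular`).

Conversely, by induction on the number of free coordinates it is enough to show (`LsInv.ssInv`): an
`LsInv` set `X` with finitely many singular points and with `SsInv` sections by all rational coordinate
hyperplanes is `SsInv`. The germ of `X` at `x` is a cone cut out by the signs of the forms in `J`, so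
only finitely many germs `E` occur, and `X` is the union of the classes `{x | germ X x = E}` for which
`0 ∈ E`. Each class is `SsInv`, by induction on the dimension of the stabiliser of `E`
(`ssInv_germ_class`).

* If the stabiliser is zero, the class consists of singular points, hence is finite, and each
  such point is cut out by forms `ev j x + c`.
* Otherwise `stab E` contains a nonzero rational vector `v`, say with `v i ≠ 0`. Moving from a point of
  the class in the direction `± v`, the germ is constant until a point whose germ has a smaller
  stabiliser is met (`exit_point`). If there is such a point on the line, the first one remembers
  `E` in the backward direction, and the induction hypothesis describes it. If there is none, the germ
  is constant along the whole line. Sampling the line at `card J + 1` rational levels of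
  the coordinate `i`, closely spaced, there is one at which all forms with integral value annihilate `v`
  (`exists_good_level`). There the germ is invariant under `v`, so it is determined by its slice in the
  hyperplane of that level (`germ_of_sliceGerm`), which is described by a rational section.
-/

open FirstOrder

/-- The language of `⟨ℝ,+,<,1⟩`: one constant, one binary function, one binary relation. -/
def SsLang : Language where
  Functions := fun m => match m with
    | 0 => Unit
    | 2 => Unit
    | _ => Empty
  Relations := fun m => match m with
    | 2 => Unit
    | _ => Empty

noncomputable instance ssStructure : SsLang.Structure ℝ where
  funMap := fun {m} f x =>
    match m, f with
    | 0, _ => (1 : ℝ)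
    | 2, _ => x 0 + x 1
  RelMap := fun {m} r x =>
    match m, r with
    | 2, _ => x 0 < x 1

/-- The language of `⟨ℝ,+,<,ℤ⟩`: one binary function, one unary relation, one binary relation. -/
def LsLang : Language where
  Functions := fun m => match m with
    | 2 => Unit
    | _ => Empty
  Relations := fun m => match m with
    | 1 => Unit
    | 2 => Unit
    | _ => Empty

noncomputable instance lsStructure : LsLang.Structure ℝ where
  funMap := fun {m} f x =>
    match m, f with
    | 2, _ => x 0 + x 1
  RelMap := fun {m} r x =>
    match m, r with
    | 1, _ => ∃ k : ℤ, x 0 = (k : ℝ)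
    | 2, _ => x 0 < x 1

/-- `X ⊆ ℝ^n` is definable without parameters in `⟨ℝ,+,<,1⟩`. -/
def SsDefinable {n : ℕ} (X : Set (Fin n → ℝ)) : Prop :=
  Set.Definable (∅ : Set ℝ) SsLang X

/-- `X ⊆ ℝ^n` is definable without parameters in `⟨ℝ,+,<,ℤ⟩`. -/
def LsDefinable {n : ℕ} (X : Set (Fin n → ℝ)) : Prop :=
  Set.Definable (∅ : Set ℝ) LsLang X

def SsDefinable1 (A : Set ℝ) : Prop := SsDefinable {f : Fin 1 → ℝ | f 0 ∈ A}
def LsDefinable1 (A : Set ℝ) : Prop := LsDefinable {f : Fin 1 → ℝ | f 0 ∈ A}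

/-- `v` is an `X`-stratum at `x`: for some `r > 0`,
`B(x,r) ∩ L_v(X ∩ B(x,r)) ⊆ X`.  (The sup norm/metric is the default one on `ι → ℝ`.) -/
def IsStratum {ι : Type} [Fintype ι] (X : Set (ι → ℝ)) (x v : ι → ℝ) : Prop :=
  ∃ r > (0 : ℝ), ∀ y ∈ Metric.ball x r,
    (∃ z ∈ X ∩ Metric.ball x r, ∃ α : ℝ, y = z + α • v) → y ∈ X

/-- `x` is `X`-singular: `Str_X(x) = {0}`. -/
def IsSingular {ι : Type} [Fintype ι] (X : Set (ι → ℝ)) (x : ι → ℝ) : Prop :=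
  ∀ v, IsStratum X x v → v = 0

/-- `x ∼_X y`: some translation of a small ball around `x` identifies `X` near `x` and near `y`. -/
def SimX {n : ℕ} (X : Set (Fin n → ℝ)) (x y : Fin n → ℝ) : Prop :=
  ∃ r > (0 : ℝ), ∀ w : Fin n → ℝ, ‖w‖ < r → (x + w ∈ X ↔ y + w ∈ X)

/-- the dimension of the subspace `Str_X(x)` of strata at `x`. -/
noncomputable def strDim {n : ℕ} (X : Set (Fin n → ℝ)) (x : Fin n → ℝ) : ℕ :=
  Module.finrank ℝ (Submodule.span ℝ {v | IsStratum X x v})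

/-- An interval of `ℝ` all of whose finite endpoints are rational: an order-convex set
whose frontier points (i.e. finite endpoints) are all rational. -/
def IsRatInterval (I : Set ℝ) : Prop :=
  I.OrdConnected ∧ ∀ x ∈ frontier I, ∃ q : ℚ, x = (q : ℝ)

namespace RealAdd

open SignType Filter Topology

/-! ### Rational affine forms and their signs -/

section Forms

variable {ι κ : Type} [Fintype ι] [Fintype κ] {K : Type} [Field K]

/-- The linear form with rational coefficients `a`, evaluated at a point over any field `K`
(in practice `ℝ` or `ℚ`). -/
def ev (a : ι → ℚ) (x : ι → K) : K := ∑ i, (a i : K) * x i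

/-- The affine form with linear part `p.1` and constant term `p.2`. -/
def aff (p : (ι → ℚ) × ℚ) (x : ι → K) : K := ev p.1 x + (p.2 : K)

lemma ev_add (a : ι → ℚ) (x y : ι → K) : ev a (x + y) = ev a x + ev a y := by
  simp [ev, mul_add, Finset.sum_add_distrib]

lemma ev_smul (a : ι → ℚ) (t : K) (x : ι → K) : ev a (t • x) = t * ev a x := by
  simp only [ev, Finset.mul_sum, Pi.smul_apply, smul_eq_mul]
  exact Finset.sum_congr rfl fun i _ => by ring

lemma ev_sub (a : ι → ℚ) (x y : ι → K) : ev a (x - y) = ev a x - ev a y := by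
  simp [ev, mul_sub, Finset.sum_sub_distrib]

lemma ev_zero (a : ι → ℚ) : ev a (0 : ι → K) = 0 := by
  simp [ev]

lemma ev_add_left [CharZero K] (a b : ι → ℚ) (x : ι → K) : ev (a + b) x = ev a x + ev b x := by
  simp [ev, add_mul, Finset.sum_add_distrib]

lemma ev_sub_left [CharZero K] (a b : ι → ℚ) (x : ι → K) : ev (a - b) x = ev a x - ev b x := by
  simp [ev, sub_mul, Finset.sum_sub_distrib]

lemma ev_smul_left [CharZero K] (c : ℚ) (a : ι → ℚ) (x : ι → K) :
    ev (c • a) x = (c : K) * ev a x := by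
  simp only [ev, Finset.mul_sum, Pi.smul_apply, smul_eq_mul, Rat.cast_mul]
  exact Finset.sum_congr rfl fun i _ => by ring

lemma ev_zero_left (x : ι → K) : ev (0 : ι → ℚ) x = 0 := by
  simp [ev]

lemma ev_single [DecidableEq ι] [CharZero K] (i : ι) (x : ι → K) :
    ev (Pi.single i 1) x = x i := by
  rw [ev, Finset.sum_eq_single i] <;> simp +contextual

lemma ev_option (a : Option ι → ℚ) (y : K) (x : ι → K) :
    ev a (fun o => o.elim y x) = (a none : K) * y + ev (fun i => a (some i)) x := by
  simp [ev, Fintype.sum_option]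

lemma aff_sub_smul [CharZero K] (p q : (ι → ℚ) × ℚ) (s t : ℚ) (x : ι → K) :
    aff (s • p - t • q) x = s * aff p x - t * aff q x := by
  simp only [aff, Prod.fst_sub, Prod.snd_sub, Prod.smul_fst, Prod.smul_snd, ev_sub_left,
    ev_smul_left, smul_eq_mul, Rat.cast_sub, Rat.cast_mul]
  ring

/-- The affine form on the remaining variables when the coefficient of the variable `none` is
dropped. -/
def tailForm (p : (Option ι → ℚ) × ℚ) : (ι → ℚ) × ℚ := (fun i => p.1 (some i), p.2)

lemma aff_option (p : (Option ι → ℚ) × ℚ) (y : K) (x : ι → K) :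
    aff p (fun o => o.elim y x) = (p.1 none : K) * y + aff (tailForm p) x := by
  simp [aff, tailForm, ev_option, add_assoc]

/-- Eliminating the variable `none` between two forms `p`, `q` with nonzero coefficients: the sign of
this form compares the zeros of `p` and `q` as functions of that variable. -/
def elimForm (p q : (Option ι → ℚ) × ℚ) : (ι → ℚ) × ℚ :=
  (p.1 none)⁻¹ • tailForm p - (q.1 none)⁻¹ • tailForm q

end Forms

lemma sign_eq_iff_cmp {α β : Type} [Field α] [LinearOrder α] [IsStrictOrderedRing α]
    [Field β] [LinearOrder β] [IsStrictOrderedRing β] {a b : α} {c d : β} :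
    sign (a - b) = sign (c - d) ↔ cmp a b = cmp c d := by
  rcases lt_trichotomy a b with h | h | h <;> rcases lt_trichotomy c d with h' | h' | h'
  all_goals
    simp only [sign_apply, sub_pos, sub_neg, cmp, cmpUsing]
    simp [h, h', h.not_gt, h'.not_gt]

/-- One step of back-and-forth. If `x` and `x'` have the same signs on all forms obtained from `A`
by eliminating the variable `none`, then every extension of `x` by a coordinate `y` is matched by
an extension of `x'` with the same signs on `A`. The two points may live over different fields. -/
lemma extend {ι : Type} [Fintype ι] {K : Type} [Field K] [LinearOrder K] [IsStrictOrderedRing K]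
    {A : Set ((Option ι → ℚ) × ℚ)} (hA : A.Finite) (x : ι → ℝ) (x' : ι → K) (y : ℝ)
    (h0 : ∀ p ∈ A, p.1 none = 0 → sign (aff (tailForm p) x) = sign (aff (tailForm p) x'))
    (h1 : ∀ p ∈ A, ∀ q ∈ A, p.1 none ≠ 0 → q.1 none ≠ 0 →
      sign (aff (elimForm p q) x) = sign (aff (elimForm p q) x')) :
    ∃ y' : K, ∀ p ∈ A, sign (aff p (fun o => o.elim y x)) =
      sign (aff p (fun o => o.elim y' x')) := by
  classical
  let g : (Option ι → ℚ) × ℚ → ℝ × K := fun p =>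
    (-(((p.1 none)⁻¹ : ℚ) * aff (tailForm p) x), -(((p.1 none)⁻¹ : ℚ) * aff (tailForm p) x'))
  obtain ⟨y', hy'⟩ := Order.PartialIso.exists_across (α := ℝ) (β := K)
    ⟨(hA.toFinset.filter fun p => p.1 none ≠ 0).image g, by
      intro u hu w hw
      simp only [Finset.mem_image, Finset.mem_filter, Set.Finite.mem_toFinset] at hu hw
      obtain ⟨p, ⟨hp, hp0⟩, rfl⟩ := hu
      obtain ⟨q, ⟨hq, hq0⟩, rfl⟩ := hw
      rw [← sign_eq_iff_cmp]
      have := h1 q hq p hp hq0 hp0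
      rw [elimForm, aff_sub_smul, aff_sub_smul] at this
      simp only [g]
      convert this using 2 <;> ring⟩ y
  refine ⟨y', fun p hp => ?_⟩
  rw [aff_option, aff_option]
  by_cases hp0 : p.1 none = 0
  · simpa [hp0] using h0 p hp hp0
  · have h2 := hy' (g p) (Finset.mem_image_of_mem g
      (by simp only [Finset.mem_filter, Set.Finite.mem_toFinset]; exact ⟨hp, hp0⟩))
    rw [← sign_eq_iff_cmp] at h2
    have hR : ((p.1 none : ℚ) : ℝ) ≠ 0 := by exact_mod_cast hp0
    have hK : ((p.1 none : ℚ) : K) ≠ 0 := by exact_mod_cast hp0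
    have e1 : (p.1 none : ℝ) * y + aff (tailForm p) x = (-(p.1 none : ℝ)) * ((g p).1 - y) := by
      simp only [g, Rat.cast_inv]; field_simp; ring
    have e2 : (p.1 none : K) * y' + aff (tailForm p) x' = (-(p.1 none : K)) * ((g p).2 - y') := by
      simp only [g, Rat.cast_inv]; field_simp; ring
    rw [e1, e2, sign_mul, sign_mul, h2]
    congr 1
    rcases lt_trichotomy (p.1 none) 0 with h | h | h
    · rw [sign_pos, sign_pos]
      · exact neg_pos.2 (by exact_mod_cast h)
      · exact neg_pos.2 (by exact_mod_cast h)
    · exact absurd h hp0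
    · rw [sign_neg, sign_neg]
      · exact neg_neg_iff_pos.2 (by exact_mod_cast h)
      · exact neg_neg_iff_pos.2 (by exact_mod_cast h)

/-! ### Sets described by finitely many rational forms -/

section Ss

variable {ι κ : Type} [Fintype ι] [Fintype κ]

/-- `X` is a union of sign cells of a finite family of rational affine forms. This is the
quantifier-free description of the `⟨ℝ,+,<,1⟩`-definable sets. -/
def SsInv (X : Set (ι → ℝ)) : Prop :=
  ∃ A : Set ((ι → ℚ) × ℚ), A.Finite ∧
    ∀ x y, (∀ p ∈ A, sign (aff p x) = sign (aff p y)) → x ∈ X → y ∈ X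

/-- Real functions given by a rational affine form. -/
def RatAff (f : (ι → ℝ) → ℝ) : Prop := ∃ p : (ι → ℚ) × ℚ, ∀ x, f x = aff p x

lemma RatAff.add {f g : (ι → ℝ) → ℝ} (hf : RatAff f) (hg : RatAff g) :
    RatAff fun x => f x + g x := by
  obtain ⟨p, hp⟩ := hf
  obtain ⟨q, hq⟩ := hg
  refine ⟨p + q, fun x => ?_⟩
  simp only [hp, hq, aff, Prod.fst_add, Prod.snd_add, ev_add_left, Rat.cast_add]
  ring

lemma RatAff.const_mul {f : (ι → ℝ) → ℝ} (c : ℚ) (hf : RatAff f) :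
    RatAff fun x => c * f x := by
  obtain ⟨p, hp⟩ := hf
  refine ⟨c • p, fun x => ?_⟩
  simp only [hp, aff, Prod.smul_fst, Prod.smul_snd, ev_smul_left, smul_eq_mul, Rat.cast_mul]
  ring

lemma RatAff.mul_const {f : (ι → ℝ) → ℝ} (c : ℚ) (hf : RatAff f) :
    RatAff fun x => f x * c := by
  simpa only [mul_comm] using hf.const_mul c

lemma RatAff.neg {f : (ι → ℝ) → ℝ} (hf : RatAff f) : RatAff fun x => - f x := by
  simpa using hf.const_mul (-1)

lemma RatAff.sub {f g : (ι → ℝ) → ℝ} (hf : RatAff f) (hg : RatAff g) :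
    RatAff fun x => f x - g x := by
  simpa only [sub_eq_add_neg] using hf.add hg.neg

lemma RatAff.coord (i : ι) : RatAff fun x : ι → ℝ => x i := by
  classical
  exact ⟨(Pi.single i 1, 0), fun x => by simp [aff, ev_single]⟩

lemma RatAff.const (c : ℚ) : RatAff fun _ : ι → ℝ => (c : ℝ) :=
  ⟨(0, c), fun x => by simp [aff, ev_zero_left]⟩

lemma RatAff.zero : RatAff fun _ : ι → ℝ => (0 : ℝ) := by
  simpa using RatAff.const (ι := ι) 0

lemma RatAff.one : RatAff fun _ : ι → ℝ => (1 : ℝ) := by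
  simpa using RatAff.const (ι := ι) 1

lemma RatAff.sum {τ : Type} (s : Finset τ) {f : τ → (ι → ℝ) → ℝ} (hf : ∀ i, RatAff (f i)) :
    RatAff fun x => ∑ i ∈ s, f i x := by
  classical
  induction s using Finset.induction_on with
  | empty => simpa using RatAff.zero
  | insert a s ha ih => simpa [Finset.sum_insert ha] using (hf a).add ih

lemma SsInv.compl {X : Set (ι → ℝ)} (h : SsInv X) : SsInv Xᶜ := by
  obtain ⟨A, hA, h⟩ := h
  exact ⟨A, hA, fun x y hxy hx hy => hx (h y x (fun p hp => (hxy p hp).symm) hy)⟩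

lemma SsInv.inter {X Y : Set (ι → ℝ)} (hX : SsInv X) (hY : SsInv Y) : SsInv (X ∩ Y) := by
  obtain ⟨A, hA, h⟩ := hX
  obtain ⟨B, hB, h'⟩ := hY
  exact ⟨A ∪ B, hA.union hB, fun x y hxy hx =>
    ⟨h x y (fun p hp => hxy p (Or.inl hp)) hx.1, h' x y (fun p hp => hxy p (Or.inr hp)) hx.2⟩⟩

lemma SsInv.and {P Q : (ι → ℝ) → Prop} (hP : SsInv {x | P x}) (hQ : SsInv {x | Q x}) :
    SsInv {x | P x ∧ Q x} := hP.inter hQ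

lemma SsInv.not {P : (ι → ℝ) → Prop} (hP : SsInv {x | P x}) : SsInv {x | ¬ P x} := hP.compl

lemma SsInv.or {P Q : (ι → ℝ) → Prop} (hP : SsInv {x | P x}) (hQ : SsInv {x | Q x}) :
    SsInv {x | P x ∨ Q x} := by
  have := (hP.not.and hQ.not).not
  simpa only [not_and_or, not_not] using this

lemma SsInv.imp {P Q : (ι → ℝ) → Prop} (hP : SsInv {x | P x}) (hQ : SsInv {x | Q x}) :
    SsInv {x | P x → Q x} := by
  have := hP.not.or hQ
  simpa only [← imp_iff_not_or] using this

lemma SsInv.iff {P Q : (ι → ℝ) → Prop} (hP : SsInv {x | P x}) (hQ : SsInv {x | Q x}) :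
    SsInv {x | P x ↔ Q x} := by
  have := (hP.imp hQ).and (hQ.imp hP)
  simpa only [← iff_iff_implies_and_implies] using this

lemma SsInv.const (P : Prop) : SsInv {_x : ι → ℝ | P} :=
  ⟨∅, Set.finite_empty, fun _ _ _ h => h⟩

lemma SsInv.biUnion {τ : Type} {s : Set τ} (hs : s.Finite) {X : τ → Set (ι → ℝ)}
    (h : ∀ t ∈ s, SsInv (X t)) : SsInv (⋃ t ∈ s, X t) := by
  induction s, hs using Set.Finite.induction_on with
  | empty => simpa using SsInv.const (ι := ι) False
  | insert _ _ ih =>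
    rw [Set.biUnion_insert]
    exact (h _ (Set.mem_insert _ _)).or (ih fun t ht => h t (Set.mem_insert_of_mem _ ht))

lemma SsInv.all_finite {τ : Type} {s : Set τ} (hs : s.Finite) {P : τ → (ι → ℝ) → Prop}
    (h : ∀ t ∈ s, SsInv {x | P t x}) : SsInv {x | ∀ t ∈ s, P t x} := by
  have := (SsInv.biUnion hs fun t ht => (h t ht).not).compl
  convert this using 1
  ext x
  simp

lemma SsInv.preimage {X : Set (ι → ℝ)} (h : SsInv X) {φ : (κ → ℝ) → ι → ℝ}
    (hφ : ∀ i, RatAff fun x => φ x i) : SsInv {x | φ x ∈ X} := by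
  obtain ⟨A, hA, h⟩ := h
  have key : ∀ p : (ι → ℚ) × ℚ, RatAff fun x => aff p (φ x) := fun p =>
    (RatAff.sum _ fun i => (hφ i).const_mul (p.1 i)).add (RatAff.const p.2)
  choose g hg using key
  refine ⟨g '' A, hA.image g, fun x y hxy hx => h _ _ (fun p hp => ?_) hx⟩
  refine (congrArg sign (hg p x)).trans (Eq.trans ?_ (congrArg sign (hg p y)).symm)
  exact hxy _ (Set.mem_image_of_mem g hp)

lemma SsInv.pos {f : (ι → ℝ) → ℝ} (hf : RatAff f) : SsInv {x | 0 < f x} := by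
  obtain ⟨p, hp⟩ := hf
  refine ⟨{p}, Set.finite_singleton p, fun x y hxy hx => ?_⟩
  have := hxy p rfl
  simp only [Set.mem_ofPred_eq, hp, ← sign_eq_one_iff] at hx ⊢
  rw [← this, hx]

lemma SsInv.lt {f g : (ι → ℝ) → ℝ} (hf : RatAff f) (hg : RatAff g) : SsInv {x | f x < g x} := by
  simpa only [sub_pos] using SsInv.pos (hg.sub hf)

lemma SsInv.eq {f g : (ι → ℝ) → ℝ} (hf : RatAff f) (hg : RatAff g) : SsInv {x | f x = g x} := by
  have := ((SsInv.lt hf hg).or (SsInv.lt hg hf)).not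
  simpa only [← ne_iff_lt_or_gt, ne_eq, not_not] using this

/-- Elimination of one real quantifier. -/
lemma SsInv.ex {P : (ι → ℝ) → ℝ → Prop}
    (h : SsInv {z : Option ι → ℝ | P (fun i => z (some i)) (z none)}) :
    SsInv {x | ∃ t, P x t} := by
  obtain ⟨A, hA, h⟩ := h
  refine ⟨tailForm '' A ∪ Set.image2 elimForm A A,
    (hA.image _).union (hA.image2 _ hA), fun x x' hx => ?_⟩
  rintro ⟨t, ht⟩
  obtain ⟨t', ht'⟩ := extend hA x x' t
    (fun p hp _ => hx _ (Or.inl (Set.mem_image_of_mem _ hp)))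
    (fun p hp q hq _ _ => hx _ (Or.inr (Set.mem_image2_of_mem hp hq)))
  exact ⟨t', h _ _ ht' ht⟩

lemma SsInv.all {P : (ι → ℝ) → ℝ → Prop}
    (h : SsInv {z : Option ι → ℝ | P (fun i => z (some i)) (z none)}) :
    SsInv {x | ∀ t, P x t} := by
  have := (SsInv.ex (P := fun x t => ¬ P x t) h.not).not
  simpa only [not_exists, not_not] using this

/-- Elimination of a quantifier over a finite tuple of reals. -/
lemma SsInv.exv {P : (ι → ℝ) → (κ → ℝ) → Prop}
    (h : SsInv {z : ι ⊕ κ → ℝ | P (fun i => z (.inl i)) (fun k => z (.inr k))}) :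
    SsInv {x | ∃ w, P x w} := by
  suffices H : ∀ (κ : Type) [Fintype κ] (ι : Type) [Fintype ι] (P : (ι → ℝ) → (κ → ℝ) → Prop),
      SsInv {z : ι ⊕ κ → ℝ | P (fun i => z (.inl i)) (fun k => z (.inr k))} →
      SsInv {x | ∃ w, P x w} from H κ ι P h
  clear h P
  intro κ _
  refine Fintype.induction_empty_option (P := fun κ _ => ∀ (ι : Type) [Fintype ι]
      (P : (ι → ℝ) → (κ → ℝ) → Prop),
      SsInv {z : ι ⊕ κ → ℝ | P (fun i => z (.inl i)) (fun k => z (.inr k))} →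
      SsInv {x | ∃ w, P x w}) ?_ ?_ ?_ κ
  · intro α β _ e ih ι _ P h
    let _ := Fintype.ofEquiv β e.symm
    have := ih ι (fun x w => P x (fun b => w (e.symm b)))
      (h.preimage (φ := fun z : ι ⊕ α → ℝ => Sum.elim (fun i => z (.inl i))
        (fun b => z (.inr (e.symm b)))) (by rintro (i | b) <;> exact RatAff.coord _))
    convert this using 1
    ext x
    constructor
    · rintro ⟨w, hw⟩
      exact ⟨fun a => w (e a), by simpa using hw⟩
    · rintro ⟨w, hw⟩
      exact ⟨_, hw⟩
  · intro ι _ P h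
    have := h.preimage (φ := fun (x : ι → ℝ) => Sum.elim x (fun k : PEmpty => k.elim))
      (by rintro (i | b); exacts [RatAff.coord i, b.elim])
    convert this using 1
    ext x
    constructor
    · rintro ⟨w, hw⟩
      exact (congrArg (P x) (funext fun k : PEmpty => k.elim)).mp hw
    · intro hw
      exact ⟨_, hw⟩
  · intro α _ ih ι _ P h
    have := ih ι (fun x w => ∃ t, P x (fun o => o.elim t w))
      (SsInv.ex (P := fun (z : ι ⊕ α → ℝ) t => P (fun i => z (.inl i))
          (fun o => o.elim t (fun k => z (.inr k))))
        ?_)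
    · convert this using 1
      ext x
      constructor
      · rintro ⟨w, hw⟩
        refine ⟨fun k => w (some k), w none, ?_⟩
        convert hw using 2
        rename_i o
        cases o <;> rfl
      · rintro ⟨w, t, hw⟩
        exact ⟨_, hw⟩
    · have := h.preimage (φ := fun z : Option (ι ⊕ α) → ℝ => Sum.elim (fun i => z (some (.inl i)))
          (fun o : Option α => o.elim (z none) (fun k => z (some (.inr k)))))
        (by rintro (i | (_ | b)) <;> exact RatAff.coord _)
      exact this

lemma SsInv.allv {P : (ι → ℝ) → (κ → ℝ) → Prop}
    (h : SsInv {z : ι ⊕ κ → ℝ | P (fun i => z (.inl i)) (fun k => z (.inr k))}) :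
    SsInv {x | ∀ w, P x w} := by
  have := (SsInv.exv (P := fun x w => ¬ P x w) h.not).not
  simpa only [not_exists, not_not] using this

/-- Every real point shares its sign cell with a rational point. -/
lemma exists_rat_same_sign {A : Set ((ι → ℚ) × ℚ)} (hA : A.Finite) (x : ι → ℝ) :
    ∃ q : ι → ℚ, ∀ p ∈ A, sign (aff p x) = sign (aff p q) := by
  suffices H : ∀ (ι : Type) [Fintype ι] (A : Set ((ι → ℚ) × ℚ)), A.Finite → ∀ x : ι → ℝ,
      ∃ q : ι → ℚ, ∀ p ∈ A, sign (aff p x) = sign (aff p q) from H ι A hA x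
  clear hA x A
  intro ι _
  refine Fintype.induction_empty_option (P := fun ι _ =>
    ∀ (A : Set ((ι → ℚ) × ℚ)), A.Finite → ∀ x : ι → ℝ,
      ∃ q : ι → ℚ, ∀ p ∈ A, sign (aff p x) = sign (aff p q)) ?_ ?_ ?_ ι
  · intro α β _ e ih A hA x
    let _ := Fintype.ofEquiv β e.symm
    have hev : ∀ {K : Type} [Field K] (p : (β → ℚ) × ℚ) (y : β → K),
        aff p y = aff (fun a => p.1 (e a), p.2) (fun a => y (e a)) := by
      intro K _ p y
      simp only [aff, ev]
      rw [← Equiv.sum_comp e]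
    obtain ⟨q, hq⟩ := ih ((fun p => (fun a => p.1 (e a), p.2)) '' A) (hA.image _)
      (fun a => x (e a))
    refine ⟨fun b => q (e.symm b), fun p hp => ?_⟩
    have := hq _ (Set.mem_image_of_mem _ hp)
    rw [hev, hev p, this]
    simp
  · intro A hA x
    refine ⟨fun k => k.elim, fun p _ => ?_⟩
    simp only [aff, ev, Finset.univ_eq_empty, Finset.sum_empty, zero_add]
    rcases lt_trichotomy p.2 0 with h | h | h
    · rw [sign_neg (by exact_mod_cast h), sign_neg (by exact_mod_cast h)]
    · simp [h]
    · rw [sign_pos (by exact_mod_cast h), sign_pos (by exact_mod_cast h)]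
  · intro α _ ih A hA x
    obtain ⟨q, hq⟩ := ih (tailForm '' A ∪ Set.image2 elimForm A A)
      ((hA.image _).union (hA.image2 _ hA)) (fun a => x (some a))
    obtain ⟨t, ht⟩ := extend hA (fun a => x (some a)) q (x none)
      (fun p hp _ => hq _ (Or.inl (Set.mem_image_of_mem _ hp)))
      (fun p hp r hr _ _ => hq _ (Or.inr (Set.mem_image2_of_mem hp hr)))
    refine ⟨_, fun p hp => (Eq.trans ?_ (ht p hp))⟩
    congr 2
    ext o
    cases o <;> rfl

lemma SsInv.exists_rat {X : Set (ι → ℝ)} (h : SsInv X) (hne : X.Nonempty) :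
    ∃ q : ι → ℚ, (fun i => (q i : ℝ)) ∈ X := by
  obtain ⟨A, hA, h⟩ := h
  obtain ⟨x, hx⟩ := hne
  obtain ⟨q, hq⟩ := exists_rat_same_sign hA x
  refine ⟨q, h x _ (fun p hp => (hq p hp).trans ?_) hx⟩
  have : aff p (fun i => (q i : ℝ)) = ((aff p q : ℚ) : ℝ) := by
    simp [aff, ev]
  rw [this]
  rcases lt_trichotomy (aff p q) 0 with h | h | h
  · rw [sign_neg h, sign_neg (by exact_mod_cast h)]
  · simp [h]
  · rw [sign_pos h, sign_pos (by exact_mod_cast h)]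

end Ss

/-! ### Sets described by finitely many integer-periodic families of forms -/

section Ls

variable {ι κ : Type} [Fintype ι] [Fintype κ]

/-- `X` is a union of cells of the (infinite, integer-periodic) arrangement of hyperplanes
`ev j x + c = 0` with `j ∈ J` and `c ∈ ℤ`. -/
def CellInv (J : Set (ι → ℚ)) (X : Set (ι → ℝ)) : Prop :=
  ∀ x y : ι → ℝ, (∀ j ∈ J, ∀ c : ℤ, sign (ev j x + c) = sign (ev j y + c)) → x ∈ X → y ∈ X

/-- `X` is a union of cells of a periodic arrangement with finitely many directions. Every
`⟨ℝ,+,<,ℤ⟩`-definable set has this property; the converse fails, since no arithmetic condition is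
put on which cells occur. -/
def LsInv (X : Set (ι → ℝ)) : Prop := ∃ J : Set (ι → ℚ), J.Finite ∧ CellInv J X

lemma exists_common_den {S : Set ℚ} (hS : S.Finite) :
    ∃ N : ℕ, 0 < N ∧ ∀ s ∈ S, ∃ m : ℤ, (N : ℚ) * s = m := by
  induction S, hS using Set.Finite.induction_on with
  | empty => exact ⟨1, one_pos, by simp⟩
  | @insert a S _ _ ih =>
    obtain ⟨N, hN, h⟩ := ih
    refine ⟨N * a.den, Nat.mul_pos hN a.den_pos, ?_⟩
    rintro s (rfl | hs)
    · refine ⟨N * s.num, ?_⟩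
      push_cast
      rw [mul_assoc, mul_comm (s.den : ℚ), Rat.mul_den_eq_num]
    · obtain ⟨m, hm⟩ := h s hs
      refine ⟨m * a.den, ?_⟩
      push_cast
      rw [← hm]; ring

lemma sign_mul_pos {c s : ℝ} (hc : 0 < c) : sign (c * s) = sign s := by
  rw [sign_mul, sign_pos hc, one_mul]

/-- The position of `s` with respect to all integers is determined by its position with respect to
`⌊s⌋` and `⌊s⌋ + 1`. -/
lemma sign_add_int {s s' : ℝ} (h0 : sign (s + ((-⌊s⌋ : ℤ) : ℝ)) = sign (s' + ((-⌊s⌋ : ℤ) : ℝ)))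
    (h1 : sign (s + ((-⌊s⌋ - 1 : ℤ) : ℝ)) = sign (s' + ((-⌊s⌋ - 1 : ℤ) : ℝ))) (c : ℤ) :
    sign (s + c) = sign (s' + c) := by
  have a0 := Int.floor_le s
  have a1 := Int.lt_floor_add_one s
  push_cast at h0 h1
  have h1' : s' < ⌊s⌋ + 1 := by
    rw [sign_neg (by linarith)] at h1
    have := sign_eq_neg_one_iff.1 h1.symm
    linarith
  rcases a0.eq_or_lt with h | h
  · rw [h, add_neg_cancel, sign_zero] at h0
    have := sign_eq_zero_iff.1 h0.symm
    have : s' = s := by linarith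
    rw [this]
  · rw [sign_pos (by linarith)] at h0
    have h2 := sign_eq_one_iff.1 h0.symm
    rcases le_or_gt (-c) ⌊s⌋ with h3 | h3
    · have h4 : (-c : ℝ) ≤ ⌊s⌋ := by exact_mod_cast h3
      rw [sign_pos (by linarith), sign_pos (by linarith)]
    · have h4 : (⌊s⌋ : ℝ) + 1 ≤ -c := by exact_mod_cast h3
      rw [sign_neg (by linarith), sign_neg (by linarith)]

lemma LsInv.compl {X : Set (ι → ℝ)} (h : LsInv X) : LsInv Xᶜ := by
  obtain ⟨A, hA, h⟩ := h
  exact ⟨A, hA, fun x y hxy hx hy => hx (h y x (fun p hp c => (hxy p hp c).symm) hy)⟩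

lemma LsInv.inter {X Y : Set (ι → ℝ)} (hX : LsInv X) (hY : LsInv Y) : LsInv (X ∩ Y) := by
  obtain ⟨A, hA, h⟩ := hX
  obtain ⟨B, hB, h'⟩ := hY
  exact ⟨A ∪ B, hA.union hB, fun x y hxy hx =>
    ⟨h x y (fun p hp => hxy p (Or.inl hp)) hx.1, h' x y (fun p hp => hxy p (Or.inr hp)) hx.2⟩⟩

lemma LsInv.imp {P Q : (ι → ℝ) → Prop} (hP : LsInv {x | P x}) (hQ : LsInv {x | Q x}) :
    LsInv {x | P x → Q x} := by
  have := (hP.inter hQ.compl).compl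
  convert this using 1
  ext x
  simp

lemma LsInv.false : LsInv {_x : ι → ℝ | False} :=
  ⟨∅, Set.finite_empty, fun _ _ _ h => h⟩

lemma LsInv.preimage {X : Set (ι → ℝ)} (h : LsInv X) {φ : (κ → ℝ) → ι → ℝ}
    (hφ : ∀ i, RatAff fun x => φ x i) : LsInv {x | φ x ∈ X} := by
  obtain ⟨J, hJ, h⟩ := h
  have key : ∀ j : ι → ℚ, ∃ p : (κ → ℚ) × ℚ, ∀ x, ev j (φ x) = aff p x := fun j =>
    RatAff.sum _ fun i => (hφ i).const_mul (j i)
  choose g hg using key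
  obtain ⟨N, hN, hm⟩ := exists_common_den (hJ.image fun j => (g j).2)
  have hN' : (0 : ℝ) < N := by exact_mod_cast hN
  refine ⟨(fun j => (N : ℚ) • (g j).1) '' J, hJ.image _, fun x y hxy hx =>
    h _ _ (fun j hj c => ?_) hx⟩
  obtain ⟨m, hm⟩ := hm _ (Set.mem_image_of_mem _ hj)
  have hmR : (N : ℝ) * ((g j).2 : ℝ) = m := by exact_mod_cast hm
  have e : ∀ z, (N : ℝ) * (ev j (φ z) + c) =
      ev ((N : ℚ) • (g j).1) z + ((m + N * c : ℤ) : ℝ) := by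
    intro z
    rw [hg, aff, ev_smul_left]
    push_cast
    rw [← hmR]; ring
  rw [← sign_mul_pos hN', ← sign_mul_pos hN' (s := ev j (φ y) + c), e, e]
  exact hxy _ (Set.mem_image_of_mem _ hj) _

lemma LsInv.pos {f : (ι → ℝ) → ℝ} (hf : RatAff f) : LsInv {x | 0 < f x} := by
  have : LsInv {x : Unit → ℝ | 0 < x ()} := by
    refine ⟨{fun _ => 1}, Set.finite_singleton _, fun x y hxy hx => ?_⟩
    have := hxy _ rfl 0
    simp only [Set.mem_ofPred_eq, ← sign_eq_one_iff] at hx ⊢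
    simpa [ev, hx, eq_comm] using this
  exact this.preimage (φ := fun x _ => f x) fun _ => hf

lemma LsInv.lt {f g : (ι → ℝ) → ℝ} (hf : RatAff f) (hg : RatAff g) : LsInv {x | f x < g x} := by
  simpa only [sub_pos] using LsInv.pos (hg.sub hf)

lemma LsInv.eq {f g : (ι → ℝ) → ℝ} (hf : RatAff f) (hg : RatAff g) : LsInv {x | f x = g x} := by
  have := (LsInv.lt hf hg).compl.inter (LsInv.lt hg hf).compl
  convert this using 1
  ext x
  simp only [Set.mem_inter_iff, Set.mem_compl_iff, Set.mem_ofPred_eq, not_lt]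
  exact ⟨fun h => ⟨h.ge, h.le⟩, fun h => le_antisymm h.2 h.1⟩

lemma LsInv.int {f : (ι → ℝ) → ℝ} (hf : RatAff f) : LsInv {x | ∃ k : ℤ, f x = k} := by
  have : LsInv {x : Unit → ℝ | ∃ k : ℤ, x () = k} := by
    refine ⟨{fun _ => 1}, Set.finite_singleton _, fun x y hxy => ?_⟩
    rintro ⟨k, hk⟩
    have := hxy _ rfl (-k)
    simp only [ev, Finset.univ_unique, Finset.sum_singleton, Rat.cast_one, one_mul] at this
    refine ⟨k, ?_⟩
    have hk' : x default = k := hk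
    rw [hk', Int.cast_neg, add_neg_cancel, sign_zero] at this
    have h2 := sign_eq_zero_iff.1 this.symm
    have h3 : y () + -(k : ℝ) = 0 := h2
    linarith
  exact this.preimage (φ := fun x _ => f x) fun _ => hf

/-- Elimination of one real quantifier. The fibre over `x` only meets the hyperplanes next to the
chosen value, so one back-and-forth step for a finite family of forms suffices. -/
lemma LsInv.ex {P : (ι → ℝ) → ℝ → Prop}
    (h : LsInv {z : Option ι → ℝ | P (fun i => z (some i)) (z none)}) :
    LsInv {x | ∃ t, P x t} := by
  obtain ⟨J, hJ, h⟩ := h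
  let tl : (Option ι → ℚ) → ι → ℚ := fun j i => j (some i)
  -- Dividing by the coefficient of `t` makes the constants of the eliminated forms rational;
  -- multiplying by a common denominator `N` makes them integers again.
  obtain ⟨N, hN, hm⟩ := exists_common_den (hJ.image fun j => (j none)⁻¹)
  have hN' : (0 : ℝ) < N := by exact_mod_cast hN
  refine ⟨tl '' J ∪ Set.image2
      (fun j k => (N * (j none)⁻¹ : ℚ) • tl j - (N * (k none)⁻¹ : ℚ) • tl k) J J,
    (hJ.image _).union (hJ.image2 _ hJ), fun x x' hx => ?_⟩
  rintro ⟨t, ht⟩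
  let z : Option ι → ℝ := fun o => o.elim t x
  -- The signs of `ev j z + c` for all integers `c` are determined by those at the two constants
  -- next to `- ev j z`.
  let A : Set ((Option ι → ℚ) × ℚ) := (fun j => (j, ((-⌊ev j z⌋ : ℤ) : ℚ))) '' J ∪
    (fun j => (j, ((-⌊ev j z⌋ - 1 : ℤ) : ℚ))) '' J
  have hAJ : ∀ p ∈ A, p.1 ∈ J ∧ ∃ c : ℤ, p.2 = c := by
    rintro p (⟨j, hj, rfl⟩ | ⟨j, hj, rfl⟩)
    exacts [⟨hj, _, rfl⟩, ⟨hj, _, rfl⟩]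
  have h0 : ∀ p ∈ A, p.1 none = 0 → sign (aff (tailForm p) x) = sign (aff (tailForm p) x') := by
    intro p hp _
    obtain ⟨hj, c, hc⟩ := hAJ p hp
    have := hx _ (Or.inl (Set.mem_image_of_mem tl hj)) c
    simpa [aff, tailForm, hc] using this
  have h1 : ∀ p ∈ A, ∀ q ∈ A, p.1 none ≠ 0 → q.1 none ≠ 0 →
      sign (aff (elimForm p q) x) = sign (aff (elimForm p q) x') := by
    intro p hp q hq hp0 hq0
    obtain ⟨hj, c, hc⟩ := hAJ p hp
    obtain ⟨hk, d, hd⟩ := hAJ q hq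
    obtain ⟨m, hm1⟩ := hm _ (Set.mem_image_of_mem _ hj)
    obtain ⟨n, hm2⟩ := hm _ (Set.mem_image_of_mem _ hk)
    have e : ∀ y : ι → ℝ, (N : ℝ) * aff (elimForm p q) y =
        ev ((N * (p.1 none)⁻¹ : ℚ) • tl p.1 - (N * (q.1 none)⁻¹ : ℚ) • tl q.1) y +
          ((m * c - n * d : ℤ) : ℝ) := by
      intro y
      have r1 : (N : ℝ) * ((p.1 none)⁻¹ : ℚ) = m := by exact_mod_cast hm1
      have r2 : (N : ℝ) * ((q.1 none)⁻¹ : ℚ) = n := by exact_mod_cast hm2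
      rw [elimForm, aff_sub_smul, ev_sub_left, ev_smul_left, ev_smul_left, aff, aff]
      simp only [tailForm, hc, hd, tl]
      push_cast at r1 r2 ⊢
      rw [← r1, ← r2]; ring
    rw [← sign_mul_pos hN', ← sign_mul_pos hN' (s := aff (elimForm p q) x'), e, e]
    exact hx _ (Or.inr (Set.mem_image2_of_mem hj hk)) _
  obtain ⟨t', ht'⟩ := extend ((hJ.image _).union (hJ.image _)) x x' t h0 h1
  refine ⟨t', h z (fun o => o.elim t' x') (fun j hj c => sign_add_int ?_ ?_ c) ht⟩
  · simpa [aff] using ht' _ (Or.inl (Set.mem_image_of_mem _ hj))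
  · simpa [aff] using ht' _ (Or.inr (Set.mem_image_of_mem _ hj))

lemma LsInv.all {P : (ι → ℝ) → ℝ → Prop}
    (h : LsInv {z : Option ι → ℝ | P (fun i => z (some i)) (z none)}) :
    LsInv {x | ∀ t, P x t} := by
  have := (LsInv.ex (P := fun x t => ¬ P x t) h.compl).compl
  convert this using 1
  ext x
  simp

end Ls

/-! ### From formulas to cells -/

section Formulas

open FirstOrder.Language

/-- A class of sets closed under Boolean operations, real quantifiers and change of variables, and
containing the atomic relations, contains every definable set. -/
lemma formula_inv (L : Language) [L.Structure ℝ]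
    (I : ∀ (ι : Type) [Fintype ι], Set (ι → ℝ) → Prop)
    (hfalse : ∀ (ι : Type) [Fintype ι], I ι {_x | False})
    (heq : ∀ (ι : Type) [Fintype ι] (f g : (ι → ℝ) → ℝ), RatAff f → RatAff g →
      I ι {x | f x = g x})
    (himp : ∀ (ι : Type) [Fintype ι] (P Q : (ι → ℝ) → Prop), I ι {x | P x} → I ι {x | Q x} →
      I ι {x | P x → Q x})
    (hall : ∀ (ι : Type) [Fintype ι] (P : (ι → ℝ) → ℝ → Prop),
      I (Option ι) {z | P (fun i => z (some i)) (z none)} → I ι {x | ∀ t, P x t})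
    (hpre : ∀ (ι κ : Type) [Fintype ι] [Fintype κ] (X : Set (ι → ℝ)) (φ : (κ → ℝ) → ι → ℝ),
      I ι X → (∀ i, RatAff fun x => φ x i) → I κ {x | φ x ∈ X})
    (hterm : ∀ (ι : Type) [Fintype ι] (t : L.Term ι), RatAff fun x => t.realize x)
    (hrel : ∀ (ι : Type) [Fintype ι] (n : ℕ) (R : L.Relations n) (f : Fin n → (ι → ℝ) → ℝ),
      (∀ i, RatAff (f i)) → I ι {x | Structure.RelMap R fun i => f i x})
    {α : Type} [Fintype α] (φ : L.Formula α) : I α {x | φ.Realize x} := by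
  have key : ∀ {n : ℕ} (φ : L.BoundedFormula α n),
      I (α ⊕ Fin n) {z | φ.Realize (fun a => z (.inl a)) (fun k => z (.inr k))} := by
    intro n φ
    have hz : ∀ {n : ℕ} (z : α ⊕ Fin n → ℝ),
        Sum.elim (fun a => z (.inl a)) (fun k => z (.inr k)) = z := by
      intro n z; ext (a | k) <;> rfl
    induction φ with
    | falsum => exact hfalse _
    | equal t₁ t₂ =>
      simp only [BoundedFormula.Realize, hz]
      exact heq _ _ _ (hterm _ t₁) (hterm _ t₂)
    | rel R ts =>
      simp only [BoundedFormula.Realize, hz]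
      exact hrel _ _ R (fun i x => (ts i).realize x) fun i => hterm _ _
    | imp φ₁ φ₂ ih₁ ih₂ =>
      simp only [BoundedFormula.realize_imp]
      exact himp _ _ _ ih₁ ih₂
    | @all n φ ih =>
      simp only [BoundedFormula.realize_all]
      refine hall _ (fun (z : α ⊕ Fin n → ℝ) t => φ.Realize (fun a => z (Sum.inl a))
        (Fin.snoc (α := fun _ => ℝ) (fun k => z (Sum.inr k)) t)) ?_
      have := hpre _ (Option (α ⊕ Fin n)) _
        (fun z => Sum.elim (fun a => z (some (.inl a)))
          (Fin.snoc (α := fun _ => ℝ) (fun k => z (some (.inr k))) (z none))) ih ?_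
      · exact this
      · rintro (a | k)
        · exact RatAff.coord _
        · refine Fin.lastCases ?_ (fun k => ?_) k
          · simp only [Sum.elim_inr, Fin.snoc_last]
            exact RatAff.coord _
          · simp only [Sum.elim_inr, Fin.snoc_castSucc]
            exact RatAff.coord _
  have := hpre _ α _ (fun x => Sum.elim x (fun k : Fin 0 => k.elim0)) (key φ) ?_
  · convert this using 1
    ext x
    simp only [Set.mem_ofPred_eq, Formula.Realize]
    exact iff_of_eq (congrArg _ (Subsingleton.elim _ _))
  · rintro (a | k)
    · exact RatAff.coord _
    · exact k.elim0

lemma ratAff_term_ss {ι : Type} [Fintype ι] (t : SsLang.Term ι) :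
    RatAff fun x : ι → ℝ => t.realize x := by
  induction t with
  | var i => exact RatAff.coord i
  | @func l f ts ih =>
    match l, f with
    | 0, _ => exact RatAff.one
    | 1, f => exact f.elim
    | 2, _ => exact (ih 0).add (ih 1)
    | _ + 3, f => exact f.elim

lemma ratAff_term_ls {ι : Type} [Fintype ι] (t : LsLang.Term ι) :
    RatAff fun x : ι → ℝ => t.realize x := by
  induction t with
  | var i => exact RatAff.coord i
  | @func l f ts ih =>
    match l, f with
    | 0, f => exact f.elim
    | 1, f => exact f.elim
    | 2, _ => exact (ih 0).add (ih 1)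
    | _ + 3, f => exact f.elim

lemma SsInv.of_definable {n : ℕ} {X : Set (Fin n → ℝ)} (h : SsDefinable X) : SsInv X := by
  obtain ⟨φ, rfl⟩ := Set.empty_definable_iff.1 h
  refine formula_inv SsLang (fun ι _ X => SsInv X) (fun _ _ => SsInv.const False)
    (fun _ _ _ _ => SsInv.eq) (fun _ _ _ _ => SsInv.imp) (fun _ _ _ => SsInv.all)
    (fun _ _ _ _ _ _ h hφ => SsInv.preimage h hφ) (fun _ _ => ratAff_term_ss) ?_ φ
  intro ι _ n R f hf
  match n, R with
  | 0, R => exact R.elim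
  | 1, R => exact R.elim
  | 2, _ => exact SsInv.lt (hf 0) (hf 1)
  | _ + 3, R => exact R.elim

lemma LsInv.of_definable {n : ℕ} {X : Set (Fin n → ℝ)} (h : LsDefinable X) : LsInv X := by
  obtain ⟨φ, rfl⟩ := Set.empty_definable_iff.1 h
  refine formula_inv LsLang (fun ι _ X => LsInv X) (fun _ _ => LsInv.false)
    (fun _ _ _ _ => LsInv.eq) (fun _ _ _ _ => LsInv.imp) (fun _ _ _ => LsInv.all)
    (fun _ _ _ _ _ _ h hφ => LsInv.preimage h hφ) (fun _ _ => ratAff_term_ls) ?_ φ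
  intro ι _ n R f hf
  match n, R with
  | 0, R => exact R.elim
  | 1, _ => exact LsInv.int (hf 0)
  | 2, _ => exact LsInv.lt (hf 0) (hf 1)
  | _ + 3, R => exact R.elim

/-- For natural coefficients the form is a term; the summand `1` makes up for the missing
constant `0`. -/
lemma exists_term {n : ℕ} (a : Fin n → ℕ) (c : ℕ) :
    ∃ t : SsLang.Term (Fin n), ∀ x : Fin n → ℝ, t.realize x = ∑ i, (a i : ℝ) * x i + c + 1 := by
  let G : ((Fin n → ℝ) → ℝ) → Prop := fun f =>
    ∃ t : SsLang.Term (Fin n), ∀ x : Fin n → ℝ, t.realize x = f x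
  have hadd : ∀ f g, G f → G g → G fun x => f x + g x := by
    rintro f g ⟨s, hs⟩ ⟨t, ht⟩
    refine ⟨Term.func (l := 2) (L := SsLang) () ![s, t], fun x => ?_⟩
    change s.realize x + t.realize x = f x + g x
    rw [hs, ht]
  have hone : G fun _ => 1 := ⟨Term.func (l := 0) (L := SsLang) () ![], fun _ => rfl⟩
  have hmul : ∀ f g (m : ℕ), G f → G g → G fun x => m * f x + g x := by
    intro f g m hf hg
    induction m with
    | zero => simpa using hg
    | succ m ih =>
      have := hadd _ _ hf ih
      refine cast (congrArg G (funext fun x => ?_)) this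
      push_cast; ring
  have hc : G fun _ => (c : ℝ) + 1 := by
    simpa using hmul _ _ c hone hone
  have hsum : ∀ s : Finset (Fin n), G fun x => ∑ i ∈ s, (a i : ℝ) * x i + (c + 1) := by
    intro s
    induction s using Finset.induction_on with
    | empty => simpa using hc
    | insert i s hi ih =>
      simp only [Finset.sum_insert hi, add_assoc]
      exact hmul (fun x => x i) _ (a i) ⟨Term.var i, fun _ => rfl⟩ ih
  simpa only [add_assoc] using hsum Finset.univ

lemma definable_neg {n : ℕ} (p : (Fin n → ℚ) × ℚ) :
    SsDefinable {x : Fin n → ℝ | aff p x < 0} := by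
  obtain ⟨N, hN, hm⟩ := exists_common_den ((Set.finite_range p.1).union (Set.finite_singleton p.2))
  have hN' : (0 : ℝ) < N := by exact_mod_cast hN
  choose! m hm using hm
  obtain ⟨s, hs⟩ := exists_term (fun i => (m (p.1 i)).toNat) (m p.2).toNat
  obtain ⟨t, ht⟩ := exists_term (fun i => (-m (p.1 i)).toNat) (-m p.2).toNat
  let R : SsLang.Relations 2 := ()
  refine Set.empty_definable_iff.2 ⟨R.formula₂ s t, ?_⟩
  ext x
  have e : (N : ℝ) * aff p x = s.realize x - t.realize x := by
    have hR : ∀ r, r ∈ Set.range p.1 ∪ {p.2} →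
        (N : ℝ) * r = (m r).toNat - (-m r).toNat := by
      intro r hr
      have h1 : (N : ℝ) * r = m r := by exact_mod_cast hm r hr
      have h2 : ((m r).toNat : ℤ) - ((-m r).toNat : ℤ) = m r := Int.toNat_sub_toNat_neg _
      rw [h1]
      exact_mod_cast h2.symm
    rw [hs, ht, aff, ev, mul_add, Finset.mul_sum, hR p.2 (Or.inr rfl)]
    have : ∀ i, (N : ℝ) * ((p.1 i : ℝ) * x i) =
        ((m (p.1 i)).toNat : ℝ) * x i - ((-m (p.1 i)).toNat : ℝ) * x i := by
      intro i
      rw [← mul_assoc, hR _ (Or.inl ⟨i, rfl⟩)]; ring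
    simp only [this, Finset.sum_sub_distrib]
    ring
  have e2 : aff p x < 0 ↔ s.realize x < t.realize x := by
    rw [← sub_neg (a := s.realize x), ← e]
    exact ⟨fun h => mul_neg_of_pos_of_neg hN' h, fun h => (pos_iff_neg_of_mul_neg h).1 hN'⟩
  exact e2.trans (Formula.realize_rel₂ (R := R) (t₁ := s) (t₂ := t) (v := x)).symm

lemma definable_sign {n : ℕ} (p : (Fin n → ℚ) × ℚ) (σ : SignType) :
    SsDefinable {x : Fin n → ℝ | sign (aff p x) = σ} := by
  have hpos : SsDefinable {x : Fin n → ℝ | 0 < aff p x} := by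
    have hset : {x : Fin n → ℝ | 0 < aff p x} = {x | aff ((0 : ℚ) • p - (1 : ℚ) • p) x < 0} := by
      ext x
      simp only [Set.mem_ofPred_eq, aff_sub_smul]
      simp
    rw [hset]
    exact definable_neg _
  cases σ with
  | neg => simpa only [neg_eq_neg_one, sign_eq_neg_one_iff] using definable_neg p
  | pos => simpa only [pos_eq_one, sign_eq_one_iff] using hpos
  | zero =>
    have hset : {x : Fin n → ℝ | sign (aff p x) = zero} =
        ({x | aff p x < 0} ∪ {x | 0 < aff p x})ᶜ := by
      ext x
      simp only [zero_eq_zero, sign_eq_zero_iff, Set.mem_ofPred_eq, Set.mem_compl_iff,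
        Set.mem_union, ← ne_iff_lt_or_gt, ne_eq, not_not]
    rw [hset]
    exact (Set.Definable.union (definable_neg p) hpos).compl

lemma definable_union_inter {L : Language} [L.Structure ℝ] {α τ υ : Type} {X : τ → υ → Set (α → ℝ)}
    (h : ∀ σ p, (∅ : Set ℝ).Definable L (X σ p)) (T : Finset τ) (U : Finset υ) :
    (∅ : Set ℝ).Definable L (⋃ σ ∈ T, ⋂ p ∈ U, X σ p) :=
  Set.definable_biUnion_finset (fun σ => Set.definable_biInter_finset (h σ) U) T

lemma SsInv.definable {n : ℕ} {X : Set (Fin n → ℝ)} (h : SsInv X) : SsDefinable X := by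
  obtain ⟨A, hA, h⟩ := h
  have := hA.to_subtype
  obtain ⟨U, hU⟩ : ∃ U : Finset A, ∀ p, p ∈ U :=
    ⟨Set.finite_univ.toFinset, by simp⟩
  obtain ⟨T, hT⟩ : ∃ T : Finset (A → SignType), ∀ σ, σ ∈ T ↔
      ∃ x ∈ X, ∀ p : A, sign (aff p.1 x) = σ p :=
    ⟨(Set.toFinite {σ : A → SignType | ∃ x ∈ X, ∀ p : A, sign (aff p.1 x) = σ p}).toFinset,
      fun σ => by rw [Set.Finite.mem_toFinset, Set.mem_ofPred_eq]⟩
  have hX : X = ⋃ σ ∈ T, ⋂ p ∈ U, {x | sign (aff p.1 x) = σ p} := by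
    ext y
    simp only [Set.mem_iUnion, Set.mem_iInter, hT, hU, Set.mem_ofPred_eq, exists_prop,
      forall_true_left]
    constructor
    · intro hy
      exact ⟨fun p => sign (aff p.1 y), ⟨y, hy, fun _ => rfl⟩, fun _ => rfl⟩
    · rintro ⟨σ, ⟨x, hx, hxσ⟩, hyσ⟩
      exact h x y (fun p hp => (hxσ ⟨p, hp⟩).trans (hyσ ⟨p, hp⟩).symm) hx
  rw [hX]
  have h0 : ∀ (σ : A → SignType) (p : A),
      (∅ : Set ℝ).Definable SsLang {x : Fin n → ℝ | sign (aff p.1 x) = σ p} := by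
    intro σ p
    have := definable_sign p.1 (σ p)
    unfold SsDefinable at this
    exact this
  have := definable_union_inter h0 T U
  unfold SsDefinable
  exact this

end Formulas

/-! ### Germs and their stabilisers -/

section Germs

variable {ι : Type} [Fintype ι]

/-- The germ of `X` at `x`, encoded as a cone: the directions `w` such that `x + ε • w ∈ X` for all
small `ε > 0`. -/
def germ (X : Set (ι → ℝ)) (x : ι → ℝ) : Set (ι → ℝ) := {w | ∀ᶠ ε : ℝ in 𝓝[>] 0, x + ε • w ∈ X}

lemma mem_germ {X : Set (ι → ℝ)} {x w : ι → ℝ} :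
    w ∈ germ X x ↔ ∀ᶠ ε : ℝ in 𝓝[>] 0, x + ε • w ∈ X := Iff.rfl

/-- `E` is a union of cells of the central arrangement of the hyperplanes `ev j w = 0`, `j ∈ J`. -/
def JSign (J : Set (ι → ℚ)) (E : Set (ι → ℝ)) : Prop :=
  ∀ w w' : ι → ℝ, (∀ j ∈ J, sign (ev j w) = sign (ev j w')) → w ∈ E → w' ∈ E

/-- The vectors along whose direction `E` is invariant under translation. -/
def stab (E : Set (ι → ℝ)) : Submodule ℝ (ι → ℝ) where
  carrier := {v | ∀ w ∈ E, ∀ α : ℝ, w + α • v ∈ E}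
  add_mem' := by
    intro a b ha hb w hw α
    rw [smul_add, ← add_assoc]
    exact hb _ (ha w hw α) α
  zero_mem' := by
    intro w hw α
    simpa using hw
  smul_mem' := by
    intro c v hv w hw α
    rw [smul_smul]
    exact hv w hw _

lemma mem_stab {E : Set (ι → ℝ)} {v : ι → ℝ} :
    v ∈ stab E ↔ ∀ w ∈ E, ∀ α : ℝ, w + α • v ∈ E := Iff.rfl

lemma stab_iff {E : Set (ι → ℝ)} {v : ι → ℝ} (hv : v ∈ stab E) (w : ι → ℝ) (α : ℝ) :
    w + α • v ∈ E ↔ w ∈ E := by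
  refine ⟨fun h => ?_, fun h => hv w h α⟩
  have := hv _ h (-α)
  rwa [neg_smul, add_neg_cancel_right] at this

lemma JSign.cellInv {J : Set (ι → ℚ)} {E : Set (ι → ℝ)} (h : JSign J E) : CellInv J E :=
  fun x y hxy => h x y fun j hj => by simpa using hxy j hj 0

lemma JSign.ssInv {J : Set (ι → ℚ)} (hJ : J.Finite) {E : Set (ι → ℝ)} (h : JSign J E) :
    SsInv E := by
  refine ⟨(fun j => (j, 0)) '' J, hJ.image _, fun x y hxy => h x y fun j hj => ?_⟩
  simpa [aff] using hxy _ (Set.mem_image_of_mem _ hj)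

lemma JSign.smul_mem {J : Set (ι → ℚ)} {E : Set (ι → ℝ)} (h : JSign J E) {t : ℝ} (ht : 0 < t)
    {w : ι → ℝ} (hw : w ∈ E) : t • w ∈ E :=
  h w _ (fun j _ => by rw [ev_smul, sign_mul_pos ht]) hw

lemma JSign.smul_mem_iff {J : Set (ι → ℚ)} {E : Set (ι → ℝ)} (h : JSign J E) {t : ℝ} (ht : 0 < t)
    {w : ι → ℝ} : t • w ∈ E ↔ w ∈ E := by
  refine ⟨fun hw => ?_, h.smul_mem ht⟩
  have := h.smul_mem (inv_pos.2 ht) hw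
  rwa [smul_smul, inv_mul_cancel₀ ht.ne', one_smul] at this

lemma finite_jSign {J : Set (ι → ℚ)} (hJ : J.Finite) : {E : Set (ι → ℝ) | JSign J E}.Finite := by
  have := hJ.to_subtype
  let F : Set (ι → ℝ) → Set (J → SignType) := fun E => (fun w j => sign (ev j.1 w)) '' E
  refine Set.Finite.of_injOn (f := F) (t := Set.univ) (fun _ _ => Set.mem_univ _) ?_ Set.finite_univ
  have key : ∀ E E' : Set (ι → ℝ), JSign J E' → F E = F E' → E ⊆ E' := by
    intro E E' h' hF w hw
    have : (fun j : J => sign (ev j.1 w)) ∈ F E' := hF ▸ Set.mem_image_of_mem _ hw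
    obtain ⟨w', hw', e⟩ := this
    exact h' w' w (fun j hj => congrFun e ⟨j, hj⟩) hw'
  intro E hE E' hE' hF
  exact (key E E' hE' hF).antisymm (key E' E hE hF.symm)

/-- Near a real number `a`, the position with respect to all integers is constant unless `a` is an
integer, in which case only the sign of the displacement matters. -/
lemma local_sign (a : ℝ) : ∃ δ > (0 : ℝ), ∀ s s' : ℝ, |s| < δ → |s'| < δ →
    ((∃ c : ℤ, a = c) → sign s = sign s') → ∀ c : ℤ, sign (a + s + c) = sign (a + s' + c) := by
  by_cases ha : ∃ c : ℤ, a = c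
  · refine ⟨1, one_pos, fun s s' hs hs' h c => ?_⟩
    replace h := h ha
    obtain ⟨d, rfl⟩ := ha
    rw [abs_lt] at hs hs'
    have e : ∀ s : ℝ, (d : ℝ) + s + c = ((d + c : ℤ) : ℝ) + s := fun s => by push_cast; ring
    rw [e, e]
    rcases lt_trichotomy (d + c) 0 with h0 | h0 | h0
    · have : ((d + c : ℤ) : ℝ) ≤ -1 := by exact_mod_cast (show d + c ≤ -1 by omega)
      rw [sign_neg (by linarith), sign_neg (by linarith)]
    · simpa [h0] using h
    · have : (1 : ℝ) ≤ ((d + c : ℤ) : ℝ) := by exact_mod_cast h0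
      rw [sign_pos (by linarith), sign_pos (by linarith)]
  · have h1 : (⌊a⌋ : ℝ) < a := (Int.floor_le a).lt_of_ne fun h => ha ⟨_, h.symm⟩
    have h2 := Int.lt_floor_add_one a
    refine ⟨min (a - ⌊a⌋) (⌊a⌋ + 1 - a), lt_min (by linarith) (by linarith),
      fun s s' hs hs' _ c => ?_⟩
    rw [lt_min_iff, abs_lt, abs_lt] at hs hs'
    rcases le_or_gt (-c) ⌊a⌋ with h3 | h3
    · have h4 : (-c : ℝ) ≤ ⌊a⌋ := by exact_mod_cast h3
      rw [sign_pos (by linarith), sign_pos (by linarith)]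
    · have h4 : (⌊a⌋ : ℝ) + 1 ≤ -c := by exact_mod_cast h3
      rw [sign_neg (by linarith), sign_neg (by linarith)]

lemma abs_ev_le (j : ι → ℚ) (w : ι → ℝ) : |ev j w| ≤ (∑ i, |(j i : ℝ)|) * ‖w‖ := by
  rw [ev, Finset.sum_mul]
  refine (Finset.abs_sum_le_sum_abs _ _).trans (Finset.sum_le_sum fun i _ => ?_)
  rw [abs_mul]
  exact mul_le_mul_of_nonneg_left (norm_le_pi_norm w i) (abs_nonneg _)

section

variable {J : Set (ι → ℚ)} {X : Set (ι → ℝ)}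

/-- Near `x`, the set `X` only depends on the signs of those forms which are integral at `x`. -/
lemma CellInv.local_inv (hJ : J.Finite) (h : CellInv J X) (x : ι → ℝ) :
    ∃ r > (0 : ℝ), ∀ w w' : ι → ℝ, ‖w‖ < r → ‖w'‖ < r →
      (∀ j ∈ J, (∃ c : ℤ, ev j x = c) → sign (ev j w) = sign (ev j w')) →
      x + w ∈ X → x + w' ∈ X := by
  choose δ hδ hs using fun j : ι → ℚ => local_sign (ev j x)
  have h1 : ∀ᶠ r : ℝ in 𝓝[>] 0, ∀ j ∈ J, ∀ w : ι → ℝ, ‖w‖ < r → |ev j w| < δ j := by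
    rw [Filter.eventually_all_finite hJ]
    intro j _
    have hC : 0 ≤ ∑ i, |(j i : ℝ)| := Finset.sum_nonneg fun _ _ => abs_nonneg _
    have hpos : 0 < δ j / ((∑ i, |(j i : ℝ)|) + 1) := div_pos (hδ j) (by linarith)
    filter_upwards [Ioo_mem_nhdsGT hpos] with r hr w hw
    have h2 := (lt_div_iff₀ (by linarith)).1 (hw.trans hr.2)
    have h3 := abs_ev_le j w
    nlinarith [norm_nonneg w]
  obtain ⟨r, hr, hr0⟩ := (h1.and self_mem_nhdsWithin).exists
  refine ⟨r, hr0, fun w w' hw hw' hww => h _ _ fun j hj c => ?_⟩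
  rw [ev_add, ev_add]
  exact hs j _ _ (hr j hj w hw) (hr j hj w' hw') (hww j hj) c

lemma eventually_norm_smul_lt (w : ι → ℝ) {r : ℝ} (hr : 0 < r) :
    ∀ᶠ ε : ℝ in 𝓝[>] 0, ‖ε • w‖ < r := by
  have : Tendsto (fun ε : ℝ => ‖ε • w‖) (𝓝[>] 0) (𝓝 0) := by
    have h : Continuous fun ε : ℝ => ‖ε • w‖ := by fun_prop
    simpa using (h.tendsto 0).mono_left nhdsWithin_le_nhds
  exact this.eventually_lt_const hr

lemma germ_sign (hJ : J.Finite) (h : CellInv J X) (x : ι → ℝ) (w w' : ι → ℝ)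
    (hs : ∀ j ∈ J, (∃ c : ℤ, ev j x = c) → sign (ev j w) = sign (ev j w')) (hw : w ∈ germ X x) :
    w' ∈ germ X x := by
  obtain ⟨r, hr, hr'⟩ := h.local_inv hJ x
  filter_upwards [hw, eventually_norm_smul_lt w hr, eventually_norm_smul_lt w' hr,
    self_mem_nhdsWithin] with ε h1 h2 h3 (h4 : 0 < ε)
  refine hr' _ _ h2 h3 (fun j hj hc => ?_) h1
  rw [ev_smul, ev_smul, sign_mul_pos h4, sign_mul_pos h4, hs j hj hc]

lemma germ_jSign (hJ : J.Finite) (h : CellInv J X) (x : ι → ℝ) : JSign J (germ X x) :=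
  fun w w' hs => germ_sign hJ h x w w' fun j hj _ => hs j hj

lemma germ_spec (hJ : J.Finite) (h : CellInv J X) (x : ι → ℝ) :
    ∃ r > (0 : ℝ), ∀ w : ι → ℝ, ‖w‖ < r → (x + w ∈ X ↔ w ∈ germ X x) := by
  obtain ⟨r, hr, hr'⟩ := h.local_inv hJ x
  refine ⟨r, hr, fun w hw => ⟨fun hx => ?_, fun hx => ?_⟩⟩
  · filter_upwards [eventually_norm_smul_lt w hr, self_mem_nhdsWithin] with ε h2 (h4 : 0 < ε)
    exact hr' _ _ hw h2 (fun j _ _ => by rw [ev_smul, sign_mul_pos h4]) hx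
  · obtain ⟨ε, ⟨h1, h2⟩, h4⟩ := (((mem_germ.1 hx).and (eventually_norm_smul_lt w hr)).and
      self_mem_nhdsWithin).exists
    exact hr' _ _ h2 hw (fun j _ _ => by rw [ev_smul, sign_mul_pos h4]) h1

/-- The germs of `X` near `x` are the germs of the cone `germ X x` near `0`. -/
lemma germ_germ (hJ : J.Finite) (h : CellInv J X) (x : ι → ℝ) :
    ∃ r > (0 : ℝ), ∀ w : ι → ℝ, ‖w‖ < r → germ X (x + w) = germ (germ X x) w := by
  obtain ⟨r, hr, hr'⟩ := germ_spec hJ h x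
  refine ⟨r, hr, fun w hw => ?_⟩
  ext u
  rw [mem_germ, mem_germ]
  refine eventually_congr ?_
  filter_upwards [eventually_norm_smul_lt u (sub_pos.2 hw)] with ε hε
  rw [add_assoc, hr' _ (by linarith [norm_add_le w (ε • u)])]

lemma mem_iff_zero_mem_germ (x : ι → ℝ) : x ∈ X ↔ (0 : ι → ℝ) ∈ germ X x := by
  simp [germ]

/-- A direction annihilated by all forms integral at `x` stabilises the germ at `x`. -/
lemma mem_stab_germ (hJ : J.Finite) (h : CellInv J X) (x v : ι → ℝ)
    (hv : ∀ j ∈ J, (∃ c : ℤ, ev j x = c) → ev j v = 0) : v ∈ stab (germ X x) := by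
  intro w hw α
  refine germ_sign hJ h x w _ (fun j hj hc => ?_) hw
  rw [ev_add, ev_smul, hv j hj hc, mul_zero, add_zero]

lemma isSingular_of_stab (x : ι → ℝ) (hx : stab (germ X x) = ⊥) : IsSingular X x := by
  rintro v ⟨r, hr, hr'⟩
  suffices v ∈ stab (germ X x) by simpa [hx] using this
  intro w hw α
  filter_upwards [hw, eventually_norm_smul_lt w hr, eventually_norm_smul_lt (w + α • v) hr]
    with ε h1 h2 h3
  refine hr' _ (by simpa using h3) ⟨x + ε • w, ⟨h1, by simpa using h2⟩, ε * α, ?_⟩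
  rw [smul_add, smul_smul, add_assoc]

end

lemma stab_le_stab_germ (E : Set (ι → ℝ)) (w : ι → ℝ) : stab E ≤ stab (germ E w) := by
  intro v hv u hu α
  rw [mem_germ] at hu ⊢
  filter_upwards [hu] with ε hε
  rw [smul_add, smul_smul, ← add_assoc]
  exact hv _ hε _

lemma germ_of_mem_stab {J : Set (ι → ℚ)} {E : Set (ι → ℝ)} (hE : JSign J E) {v : ι → ℝ}
    (hv : v ∈ stab E) : germ E v = E := by
  ext w
  have h : (∀ᶠ ε : ℝ in 𝓝[>] 0, v + ε • w ∈ E) ↔ ∀ᶠ ε : ℝ in 𝓝[>] (0 : ℝ), w ∈ E := by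
    refine eventually_congr ?_
    filter_upwards [self_mem_nhdsWithin] with ε (hε : 0 < ε)
    rw [← hE.smul_mem_iff hε (w := w), add_comm, ← stab_iff hv (ε • w) 1, one_smul]
  exact h.trans Filter.eventually_const

/-- For a cone, invariance under the translation by `v` alone already gives invariance under all its
multiples. -/
lemma JSign.mem_stab_iff {J : Set (ι → ℚ)} {E : Set (ι → ℝ)} (hE : JSign J E) {v : ι → ℝ} :
    v ∈ stab E ↔ ∀ w, w ∈ E ↔ w + v ∈ E := by
  refine ⟨fun hv w => ?_, fun h w hw α => ?_⟩
  · rw [← stab_iff hv w 1, one_smul]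
  · rcases lt_trichotomy α 0 with hα | rfl | hα
    · have h1 := (hE.smul_mem_iff (inv_pos.2 (neg_pos.2 hα))).2 hw
      have h2 := (h ((-α)⁻¹ • w - v)).2 (by simpa using h1)
      have h3 := hE.smul_mem (neg_pos.2 hα) h2
      rw [smul_sub, smul_smul, mul_inv_cancel₀ (neg_pos.2 hα).ne', one_smul, neg_smul,
        sub_neg_eq_add] at h3
      exact h3
    · simpa using hw
    · have h1 := (hE.smul_mem_iff (inv_pos.2 hα)).2 hw
      have h3 := hE.smul_mem hα ((h _).1 h1)
      rw [smul_add, smul_smul, mul_inv_cancel₀ hα.ne', one_smul] at h3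
      exact h3

/-- The vector with rational coordinates `q`, seen in real space. -/
def rv (q : ι → ℚ) : ι → ℝ := fun i => (q i : ℝ)

/-- The stabiliser of a cone cut out by rational forms is a rational subspace; one nonzero rational
vector is all that is needed. -/
lemma JSign.exists_rat_stab {J : Set (ι → ℚ)} (hJ : J.Finite) {E : Set (ι → ℝ)} (hE : JSign J E)
    (h : stab E ≠ ⊥) : ∃ q : ι → ℚ, rv q ∈ stab E ∧ ∃ i, (rv q) i ≠ 0 := by
  have h1 : SsInv {v : ι → ℝ | (∀ w, w ∈ E ↔ w + v ∈ E) ∧ ¬ ∀ i ∈ Set.univ, v i = 0} := by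
    refine SsInv.and ?_ (SsInv.all_finite Set.finite_univ fun i _ =>
      SsInv.eq (RatAff.coord i) RatAff.zero).not
    refine SsInv.allv (κ := ι) (P := fun v w => w ∈ E ↔ w + v ∈ E) (SsInv.iff ?_ ?_)
    · exact (hE.ssInv hJ).preimage fun i => RatAff.coord _
    · exact (hE.ssInv hJ).preimage fun i => (RatAff.coord _).add (RatAff.coord _)
  obtain ⟨v, hv, hv0⟩ := (stab E).ne_bot_iff.1 h
  obtain ⟨q, hq, hq0⟩ := h1.exists_rat ⟨v, hE.mem_stab_iff.1 hv, fun h0 => hv0 (funext fun i =>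
    h0 i trivial)⟩
  refine ⟨q, hE.mem_stab_iff.2 hq, ?_⟩
  by_contra! h0
  exact hq0 fun i _ => h0 i

/-- The rank of a germ: the dimension of its stabiliser. -/
noncomputable def rk (E : Set (ι → ℝ)) : ℕ := Module.finrank ℝ (stab E)

/-- Moving from `x` along a direction stabilising the germ `E` of `X` at `x`, the germ is constantly
`E` until, if ever, a point whose germ has smaller rank is reached. -/
lemma exit_point {J : Set (ι → ℚ)} {X : Set (ι → ℝ)} (hJ : J.Finite) (h : CellInv J X)
    {E : Set (ι → ℝ)} {x v : ι → ℝ} (hx : germ X x = E) (hv : v ∈ stab E) {t : ℝ} (ht : 0 < t)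
    (hxt : germ X (x + t • v) ≠ E) :
    ∃ τ : ℝ, 0 < τ ∧ τ ≤ t ∧ rk (germ X (x + τ • v)) < rk E ∧
      (∀ᶠ ε : ℝ in 𝓝[>] 0, germ (germ X (x + τ • v)) (-(ε • v)) = E) ∧
      ∀ s, 0 ≤ s → s < τ → germ X (x + s • v) = E := by
  have hE : JSign J E := hx ▸ germ_jSign hJ h x
  -- `τ` is the infimum of the times at which the germ is not `E`. It is attained: were the germ `E`
  -- at time `τ`, it would remain `E` for a short while, as `v` stabilises `E`.
  let S : Set ℝ := {s | 0 ≤ s ∧ germ X (x + s • v) ≠ E}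
  have hSne : S.Nonempty := ⟨t, ht.le, hxt⟩
  have hSb : BddBelow S := ⟨0, fun s hs => hs.1⟩
  obtain ⟨τ, hτ⟩ : ∃ τ, τ = sInf S := ⟨_, rfl⟩
  have hτ0 : 0 ≤ τ := hτ ▸ le_csInf hSne fun s hs => hs.1
  have hτt : τ ≤ t := hτ ▸ csInf_le hSb ⟨ht.le, hxt⟩
  have hbefore : ∀ s, 0 ≤ s → s < τ → germ X (x + s • v) = E := by
    intro s hs hsτ
    by_contra hne
    exact (hτ ▸ csInf_le hSb ⟨hs, hne⟩ : τ ≤ s).not_gt hsτ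
  obtain ⟨r, hr, hloc⟩ := germ_germ hJ h (x + τ • v)
  have hτE : germ X (x + τ • v) ≠ E := by
    intro heq
    rw [heq] at hloc
    have h1 : ∀ᶠ ε : ℝ in 𝓝[>] 0, ‖ε • v‖ < r := eventually_norm_smul_lt v hr
    obtain ⟨δ, hδ, hδr⟩ : ∃ δ > (0 : ℝ), ∀ s, 0 ≤ s → s < δ → ‖s • v‖ < r := by
      obtain ⟨δ, h2, hδ⟩ := (h1.and self_mem_nhdsWithin).exists
      refine ⟨δ, hδ, fun s hs hsδ => lt_of_le_of_lt ?_ h2⟩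
      rw [norm_smul, norm_smul]
      refine mul_le_mul_of_nonneg_right ?_ (norm_nonneg _)
      rw [Real.norm_of_nonneg hs, Real.norm_of_nonneg (le_of_lt hδ)]
      exact hsδ.le
    obtain ⟨s, hs, hsδ⟩ := exists_lt_of_csInf_lt hSne (hτ ▸ lt_add_of_pos_right τ hδ)
    have hτs : τ ≤ s := hτ ▸ csInf_le hSb hs
    refine hs.2 ?_
    have := hloc _ (hδr (s - τ) (by linarith) (by linarith))
    rw [add_assoc, ← add_smul, add_sub_cancel] at this
    rw [this, germ_of_mem_stab hE ((stab E).smul_mem _ hv)]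
  have hτpos : 0 < τ := by
    refine hτ0.lt_of_ne fun h0 => hτE ?_
    rw [← h0, zero_smul, add_zero, hx]
  have hback : ∀ᶠ ε : ℝ in 𝓝[>] 0, germ (germ X (x + τ • v)) (-(ε • v)) = E := by
    filter_upwards [eventually_norm_smul_lt v hr, Ioo_mem_nhdsGT hτpos] with ε h1 h2
    rw [← hloc _ (by rwa [norm_neg]), add_assoc, ← sub_eq_add_neg, ← sub_smul]
    exact hbefore _ (by linarith [h2.2]) (by linarith [h2.1])
  refine ⟨τ, hτpos, hτt, ?_, hback, hbefore⟩
  obtain ⟨ε, hε⟩ := hback.exists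
  -- `E` is a germ of the germ at `τ`, so its stabiliser is at least as large. Equal stabilisers would
  -- both contain `v`, and then the germ at `τ` would be `E`.
  have hle : stab (germ X (x + τ • v)) ≤ stab E := hε ▸ stab_le_stab_germ _ _
  refine (Submodule.finrank_mono hle).lt_of_ne fun heq => hτE ?_
  have h1 := Submodule.eq_of_le_of_finrank_eq hle heq
  have hv' : -(ε • v) ∈ stab (germ X (x + τ • v)) :=
    h1 ▸ (stab E).neg_mem ((stab E).smul_mem _ hv)
  rwa [germ_of_mem_stab (germ_jSign hJ h _) hv'] at hε

end Germs

/-! ### Germ classes are semilinear when the proper sections are -/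

section Step

variable {ι : Type} [Fintype ι] {J : Set (ι → ℚ)} {X : Set (ι → ℝ)}

lemma SsInv.line {Y : Set (ι → ℝ)} (h : SsInv Y) (q : ι → ℚ) :
    SsInv {z : Option ι → ℝ | (fun i => z (some i)) + z none • rv q ∈ Y} :=
  h.preimage fun i => (RatAff.coord (some i)).add ((RatAff.coord none).mul_const (q i))

lemma SsInv.singleton_of_stab (hJ : J.Finite) (h : CellInv J X) {z : ι → ℝ}
    (hz : stab (germ X z) = ⊥) : SsInv {z} := by
  refine ⟨(fun j => (j, ((-⌊ev j z⌋ : ℤ) : ℚ))) '' J, hJ.image _, ?_⟩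
  rintro x y hxy rfl
  suffices y - x ∈ stab (germ X x) by
    rw [hz, Submodule.mem_bot, sub_eq_zero] at this
    exact this
  refine mem_stab_germ hJ h x _ fun j hj hc => ?_
  obtain ⟨c, hc⟩ := hc
  have h1 := hxy _ (Set.mem_image_of_mem _ hj)
  simp only [aff, hc, Int.floor_intCast, Int.cast_neg, Rat.cast_neg, Rat.cast_intCast,
    add_neg_cancel, sign_zero] at h1
  have h2 := sign_eq_zero_iff.1 h1.symm
  rw [ev_sub, hc]
  linarith

/-- The points of rank less than `k` at which the germ of `X` satisfies `Q`. -/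
def lowRank (X : Set (ι → ℝ)) (k : ℕ) (Q : Set (ι → ℝ) → Prop) : Set (ι → ℝ) :=
  {x | rk (germ X x) < k ∧ Q (germ X x)}

lemma ssInv_lowRank (hJ : J.Finite) (h : CellInv J X) {k : ℕ}
    (ih : ∀ E, JSign J E → rk E < k → SsInv {x | germ X x = E}) (Q : Set (ι → ℝ) → Prop) :
    SsInv (lowRank X k Q) := by
  have := SsInv.biUnion (s := {E | JSign J E ∧ rk E < k ∧ Q E})
    (X := fun E => {x | germ X x = E}) ((finite_jSign hJ).subset fun E hE => hE.1)
    fun E hE => ih E hE.1 hE.2.1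
  convert this using 1
  ext x
  simp only [lowRank, Set.mem_ofPred_eq, Set.mem_iUnion, exists_prop]
  exact ⟨fun hx => ⟨_, ⟨germ_jSign hJ h x, hx⟩, rfl⟩, fun ⟨E, hE, hx⟩ => hx ▸ hE.2⟩

/-- Going from `x` in direction `v`, the first point of rank less than `k` is reached after a positive
time, and there the germ seen backwards is `E`. -/
def Reach (X : Set (ι → ℝ)) (k : ℕ) (E : Set (ι → ℝ)) (v x : ι → ℝ) : Prop :=
  ∃ t : ℝ, 0 < t ∧ x + t • v ∈ lowRank X k (fun E' => ∀ᶠ ε : ℝ in 𝓝[>] 0, germ E' (-(ε • v)) = E) ∧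
    ∀ s : ℝ, 0 < s → s < t → x + s • v ∉ lowRank X k fun _ => True

lemma ssInv_reach (hJ : J.Finite) (h : CellInv J X) {k : ℕ}
    (ih : ∀ E, JSign J E → rk E < k → SsInv {x | germ X x = E}) (E : Set (ι → ℝ)) (q : ι → ℚ) :
    SsInv {x | Reach X k E (rv q) x} := by
  refine SsInv.ex (P := fun x t => 0 < t ∧ x + t • rv q ∈ lowRank X k _ ∧
    ∀ s : ℝ, 0 < s → s < t → x + s • rv q ∉ lowRank X k fun _ => True) ?_
  refine (SsInv.pos (RatAff.coord _)).and (((ssInv_lowRank hJ h ih _).line q).and ?_)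
  refine SsInv.all (P := fun (z : Option ι → ℝ) (s : ℝ) => 0 < s → s < z none →
    (fun i => z (some i)) + s • rv q ∉ lowRank X k fun _ => True) ?_
  refine (SsInv.pos (RatAff.coord _)).imp ((SsInv.lt (RatAff.coord _) (RatAff.coord _)).imp ?_)
  refine SsInv.not ((ssInv_lowRank hJ h ih _).preimage
    (φ := fun (z : Option (Option ι) → ℝ) => (fun i => z (some (some i))) + z none • rv q) fun i => ?_)
  exact (RatAff.coord (some (some i))).add ((RatAff.coord none).mul_const (q i))

/-- Inside the hyperplane `y i = a`, the set `X` looks like the cone `E` near `y`. -/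
def SliceGerm (X E : Set (ι → ℝ)) (i : ι) (a : ℝ) (y : ι → ℝ) : Prop :=
  y i = a ∧ ∃ r : ℝ, 0 < r ∧ ∀ w : ι → ℝ, (∀ k ∈ Set.univ, -r < w k ∧ w k < r) → w i = 0 →
    ((y + w ∈ X ∧ (y + w) i = a) ↔ w ∈ E)

lemma ssInv_sliceGerm (hJ : J.Finite) {E : Set (ι → ℝ)} (hE : JSign J E) {i : ι} {a : ℚ}
    (hX : SsInv {x | x ∈ X ∧ x i = a}) : SsInv {y | SliceGerm X E i a y} := by
  refine (SsInv.eq (RatAff.coord i) (RatAff.const a)).and ?_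
  refine SsInv.ex (P := fun (y : ι → ℝ) (r : ℝ) => 0 < r ∧ ∀ w : ι → ℝ,
    (∀ k ∈ Set.univ, -r < w k ∧ w k < r) → w i = 0 →
    ((y + w ∈ X ∧ (y + w) i = a) ↔ w ∈ E)) ?_
  refine (SsInv.pos (RatAff.coord _)).and ?_
  refine SsInv.allv (κ := ι) (P := fun (z : Option ι → ℝ) (w : ι → ℝ) =>
    (∀ k ∈ Set.univ, -(z none) < w k ∧ w k < z none) → w i = 0 →
    (((fun i => z (some i)) + w ∈ X ∧ ((fun i => z (some i)) + w) i = a) ↔ w ∈ E)) ?_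
  refine SsInv.imp (SsInv.all_finite Set.finite_univ fun k _ => ?_) (SsInv.imp
    (SsInv.eq (RatAff.coord _) RatAff.zero) (SsInv.iff ?_ ?_))
  · exact (SsInv.lt (RatAff.coord _).neg (RatAff.coord _)).and
      (SsInv.lt (RatAff.coord _) (RatAff.coord _))
  · exact hX.preimage (φ := fun (z : Option ι ⊕ ι → ℝ) =>
      (fun i => z (.inl (some i))) + fun i => z (.inr i))
      fun k => (RatAff.coord _).add (RatAff.coord _)
  · exact (hE.ssInv hJ).preimage fun k => RatAff.coord _

lemma abs_lt_of_norm {w : ι → ℝ} {r : ℝ} (hr : 0 < r) :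
    (∀ k ∈ Set.univ, -r < w k ∧ w k < r) ↔ ‖w‖ < r := by
  rw [pi_norm_lt_iff hr]
  simp [abs_lt]

lemma sliceGerm_of_germ (hJ : J.Finite) (h : CellInv J X) {E : Set (ι → ℝ)} {i : ι} {a : ℝ}
    {y : ι → ℝ} (hy : germ X y = E) (hi : y i = a) : SliceGerm X E i a y := by
  obtain ⟨r, hr, hr'⟩ := germ_spec hJ h y
  refine ⟨hi, r, hr, fun w hw hwi => ?_⟩
  rw [← hy, ← hr' w ((abs_lt_of_norm hr).1 hw)]
  simp [hwi, hi]

/-- If both the germ at `y` and `E` are invariant along a direction transverse to the hyperplane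
`y i = a`, the slice of the germ by that hyperplane determines it. -/
lemma germ_of_sliceGerm {E : Set (ι → ℝ)} (hE : JSign J E) {i : ι}
    {a : ℝ} {y v : ι → ℝ} (hy : SliceGerm X E i a y) (hvE : v ∈ stab E)
    (hv : v ∈ stab (germ X y)) (hvi : v i ≠ 0) : germ X y = E := by
  obtain ⟨hya, r, hr, hr'⟩ := hy
  ext w
  rw [← stab_iff hv w (-(w i / v i)), ← stab_iff hvE w (-(w i / v i))]
  set w' := w + (-(w i / v i)) • v with hw'
  have hi : w' i = 0 := by
    simp only [hw', Pi.add_apply, Pi.smul_apply, smul_eq_mul]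
    field_simp
    ring
  have h1 : (∀ᶠ ε : ℝ in 𝓝[>] 0, y + ε • w' ∈ X) ↔ ∀ᶠ ε : ℝ in 𝓝[>] (0 : ℝ), w' ∈ E := by
    refine eventually_congr ?_
    filter_upwards [self_mem_nhdsWithin, eventually_norm_smul_lt w' hr] with ε (hε : 0 < ε) hεr
    rw [← hE.smul_mem_iff hε (w := w'), ← hr' (ε • w') ((abs_lt_of_norm hr).2 hεr) (by simp [hi])]
    simp [hi, hya]
  exact h1.trans Filter.eventually_const

lemma germ_of_reach (hJ : J.Finite) (h : CellInv J X) {E : Set (ι → ℝ)} {k : ℕ} (hk : rk E = k)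
    {u x : ι → ℝ} (hu : u ∈ stab E) (hx : x ∉ lowRank X k fun _ => True) (hr : Reach X k E u x) :
    germ X x = E := by
  obtain ⟨t, ht, ⟨_, hback⟩, hs⟩ := hr
  obtain ⟨r, hr, hloc⟩ := germ_germ hJ h (x + t • u)
  obtain ⟨ε, ⟨hε1, hε2⟩, hε3⟩ := ((hback.and (eventually_norm_smul_lt u hr)).and
    (Ioo_mem_nhdsGT ht)).exists
  have hz : germ X (x + (t - ε) • u) = E := by
    rw [sub_smul, sub_eq_add_neg, ← add_assoc, hloc _ (by rwa [norm_neg]), hε1]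
  by_contra hne
  have e : ∀ s : ℝ, x + (t - ε) • u + s • (-u) = x + (t - ε - s) • u := by
    intro s
    rw [smul_neg, sub_smul (t - ε) s]
    abel
  obtain ⟨τ, h1, h2, h3, -⟩ := exit_point hJ h hz ((stab E).neg_mem hu) (sub_pos.2 hε3.2)
    (by rwa [e, sub_self, zero_smul, add_zero])
  rw [e, hk] at h3
  rcases h2.eq_or_lt with h2 | h2
  · rw [h2, sub_self, zero_smul, add_zero] at h3
    exact hx ⟨h3, trivial⟩
  · exact hs _ (sub_pos.2 h2) (by linarith [hε3.1]) ⟨h3, trivial⟩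

/-- On a line avoiding points of small rank, and directed by `v ∈ stab E`, the germ is `E` everywhere
as soon as it is `E` somewhere. -/
lemma germ_line (hJ : J.Finite) (h : CellInv J X) {E : Set (ι → ℝ)} {k : ℕ} (hk : rk E = k)
    {v x : ι → ℝ} (hv : v ∈ stab E) (hx : germ X x = E)
    (hZ : ∀ t : ℝ, x + t • v ∉ lowRank X k fun _ => True) (t : ℝ) : germ X (x + t • v) = E := by
  by_contra hne
  rcases lt_trichotomy t 0 with ht | rfl | ht
  · obtain ⟨τ, -, -, h3, -⟩ := exit_point hJ h hx ((stab E).neg_mem hv) (neg_pos.2 ht)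
      (by rwa [neg_smul_neg])
    rw [smul_neg, ← neg_smul, hk] at h3
    exact hZ _ ⟨h3, trivial⟩
  · rw [zero_smul, add_zero] at hne
    exact hne hx
  · obtain ⟨τ, -, -, h3, -⟩ := exit_point hJ h hx hv ht hne
    rw [hk] at h3
    exact hZ _ ⟨h3, trivial⟩

lemma reach_of_germ (hJ : J.Finite) (h : CellInv J X) {E : Set (ι → ℝ)} {k : ℕ} (hk : rk E = k)
    {v x : ι → ℝ} (hv : v ∈ stab E) (hx : germ X x = E) {t : ℝ} (ht : 0 < t)
    (hZ : x + t • v ∈ lowRank X k fun _ => True) : Reach X k E v x := by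
  obtain ⟨τ, h1, -, h3, h4, h5⟩ := exit_point hJ h hx hv ht fun heq => by
    have := hZ.1
    rw [heq, hk] at this
    exact this.false
  refine ⟨τ, h1, ⟨hk ▸ h3, h4⟩, fun s hs hsτ hmem => ?_⟩
  have := hmem.1
  rw [h5 s hs.le hsτ, hk] at this
  exact this.false

/-- Along a line with direction `v`, among enough equally and closely spaced parameters there is one at
which no form of `J` which varies along the line is integral: a form integral at two of them would
take two distinct integral values at distance less than `1`. -/
lemma exists_good_level (hJ : J.Finite) (x v : ι → ℝ) {i : ι} (hvi : v i ≠ 0) {P : ℕ} (hP : 0 < P)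
    (hPJ : ∀ j ∈ J, (J.ncard : ℝ) * |ev j v| < P * |v i|) (t : ℕ → ℝ)
    (ht : ∀ l, x i + t l * v i = (l : ℝ) / P) :
    ∃ l ∈ Finset.range (J.ncard + 1), ∀ j ∈ J, (∃ c : ℤ, ev j (x + t l • v) = c) → ev j v = 0 := by
  have hP' : (0 : ℝ) < P := by exact_mod_cast hP
  by_contra! hbad
  choose! f hf using hbad
  obtain ⟨l, hl, l', hl', hne, heq⟩ := Finset.exists_ne_map_eq_of_card_lt_of_maps_to
    (s := Finset.range (J.ncard + 1)) (t := hJ.toFinset) (f := f)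
    (by rw [← Set.ncard_eq_toFinset_card J hJ, Finset.card_range]; exact Nat.lt_succ_self _)
    (fun l hl => by simpa using (hf l hl).1)
  obtain ⟨hj, ⟨c, hc⟩, h0⟩ := hf l hl
  obtain ⟨-, ⟨c', hc'⟩, -⟩ := hf l' hl'
  rw [← heq] at hc'
  -- By pigeonhole two levels `l` and `l'` share the form `f l`, with integral values `c` and `c'`
  -- there; the choice of `P` gives `|c - c'| < 1`, while `ev (f l) v ≠ 0` gives `c ≠ c'`.
  have hd : (((c - c' : ℤ) : ℝ)) = (t l - t l') * ev (f l) v := by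
    rw [Int.cast_sub, ← hc, ← hc', ev_add, ev_add, ev_smul, ev_smul]
    ring
  have ht' : (P : ℝ) * (t l - t l') * v i = (l : ℝ) - l' := by
    have h1 := ht l
    have h2 := ht l'
    rw [eq_div_iff hP'.ne'] at h1 h2
    linear_combination h1 - h2
  have hkey : (P : ℝ) * v i * ((c - c' : ℤ) : ℝ) = ((l : ℝ) - l') * ev (f l) v := by
    rw [hd, ← ht']; ring
  have hll : ((l : ℝ) - l') ≠ 0 := sub_ne_zero.2 (by exact_mod_cast hne)
  have hc0 : c - c' ≠ 0 := by
    intro h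
    rw [h, Int.cast_zero, mul_zero] at hkey
    exact mul_ne_zero hll h0 hkey.symm
  have h1 : (1 : ℝ) ≤ |((c - c' : ℤ) : ℝ)| := by
    rw [← Int.cast_abs]
    exact_mod_cast Int.one_le_abs hc0
  have h2 : |(l : ℝ) - l'| ≤ J.ncard := by
    have a1 : (l : ℝ) ≤ J.ncard := by exact_mod_cast Nat.lt_succ_iff.1 (Finset.mem_range.1 hl)
    have a2 : (l' : ℝ) ≤ J.ncard := by exact_mod_cast Nat.lt_succ_iff.1 (Finset.mem_range.1 hl')
    rw [abs_le]
    constructor <;> linarith [Nat.cast_nonneg (α := ℝ) l, Nat.cast_nonneg (α := ℝ) l']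
  have h3 := congrArg abs hkey
  rw [abs_mul, abs_mul, abs_mul, abs_of_pos hP'] at h3
  have h4 := hPJ _ hj
  have h5 := mul_le_mul_of_nonneg_right h2 (abs_nonneg (ev (f l) v))
  have h6 : 0 < (P : ℝ) * |v i| := mul_pos hP' (abs_pos.2 hvi)
  nlinarith

/-- Each germ class is semilinear, by induction on the rank. In rank `0` the class is a finite set of
singular points. In positive rank, let `v` be a rational vector stabilising the germ; follow the line
through `x` with direction `v`. Either it reaches a point of smaller rank, and the class of `x` is
read off there, or the germ is constant along the line and it is read off in suitable rational
sections. -/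
lemma ssInv_germ_class (hJ : J.Finite) (h : CellInv J X) (hsing : {x | IsSingular X x}.Finite)
    (hsec : ∀ (i : ι) (a : ℚ), SsInv {x | x ∈ X ∧ x i = a}) (k : ℕ) :
    ∀ E, JSign J E → rk E = k → SsInv {x | germ X x = E} := by
  induction k using Nat.strong_induction_on with
  | _ k IH =>
  intro E hE hk
  have ih : ∀ E, JSign J E → rk E < k → SsInv {x | germ X x = E} := fun E hE hlt =>
    IH _ hlt E hE rfl
  by_cases hbot : stab E = ⊥
  · have hfin : {x | germ X x = E}.Finite := hsing.subset fun x hx =>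
      isSingular_of_stab x (by rw [hx, hbot])
    rw [← Set.biUnion_of_singleton {x | germ X x = E}]
    exact SsInv.biUnion hfin fun x hx => SsInv.singleton_of_stab hJ h (by rw [hx, hbot])
  obtain ⟨q, hq, i, hi⟩ := hE.exists_rat_stab hJ hbot
  have hqn : rv (-q) = -rv q := by
    ext l
    simp [rv]
  obtain ⟨P, hPJ, hP⟩ : ∃ P : ℕ, (∀ j ∈ J, (J.ncard : ℝ) * |ev j (rv q)| < P * |rv q i|) ∧
      0 < P := by
    have h1 : ∀ᶠ P : ℕ in atTop, ∀ j ∈ J, (J.ncard : ℝ) * |ev j (rv q)| < P * |rv q i| := by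
      rw [Filter.eventually_all_finite hJ]
      intro j _
      filter_upwards [tendsto_natCast_atTop_atTop.eventually_gt_atTop
        ((J.ncard : ℝ) * |ev j (rv q)| / |rv q i|)] with P hP
      exact (div_lt_iff₀ (abs_pos.2 hi)).1 hP
    exact (h1.and (eventually_gt_atTop 0)).exists
  -- The last disjunct asks for agreement at every sampled level, since the good level depends on `x`;
  -- this makes the description first-order with finitely many clauses.
  have hset : {x | germ X x = E} = {x | (¬ x ∈ lowRank X k fun _ => True) ∧
      (Reach X k E (rv q) x ∨ Reach X k E (rv (-q)) x ∨
        ((∀ t : ℝ, ¬ x + t • rv q ∈ lowRank X k fun _ => True) ∧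
          ∀ l ∈ (Finset.range (J.ncard + 1) : Set ℕ), ∃ t : ℝ,
            SliceGerm X E i ((l / P : ℚ) : ℝ) (x + t • rv q)))} := by
    ext x
    constructor
    · intro hx
      have hx : germ X x = E := hx
      refine ⟨fun hmem => ?_, ?_⟩
      · have := hmem.1
        rw [hx, hk] at this
        exact this.false
      by_cases hZ : ∃ t : ℝ, x + t • rv q ∈ lowRank X k fun _ => True
      · obtain ⟨t, ht⟩ := hZ
        rcases lt_trichotomy t 0 with h0 | rfl | h0
        · refine Or.inr (Or.inl ?_)
          rw [hqn]
          exact reach_of_germ hJ h hk ((stab E).neg_mem hq) hx (neg_pos.2 h0) (by rwa [neg_smul_neg])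
        · have := ht.1
          rw [zero_smul, add_zero, hx, hk] at this
          exact absurd this (lt_irrefl _)
        · exact Or.inl (reach_of_germ hJ h hk hq hx h0 ht)
      · push Not at hZ
        refine Or.inr (Or.inr ⟨hZ, fun l _ => ⟨(((l / P : ℚ) : ℝ) - x i) / rv q i, ?_⟩⟩)
        refine sliceGerm_of_germ hJ h (germ_line hJ h hk hq hx hZ _) ?_
        simp only [Pi.add_apply, Pi.smul_apply, smul_eq_mul]
        rw [div_mul_cancel₀ _ hi]
        ring
    · rintro ⟨hx, hr | hr | ⟨hZ, hW⟩⟩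
      · exact germ_of_reach hJ h hk hq hx hr
      · exact germ_of_reach hJ h hk (hqn ▸ (stab E).neg_mem hq) hx hr
      · obtain ⟨l, hl, hgood⟩ := exists_good_level hJ x (rv q) hi hP hPJ
          (fun l => ((l : ℝ) / P - x i) / rv q i) fun l => by
            rw [div_mul_cancel₀ _ hi]; ring
        obtain ⟨t, ht⟩ := hW l hl
        have htl : t = ((l : ℝ) / P - x i) / rv q i := by
          have := ht.1
          simp only [Pi.add_apply, Pi.smul_apply, smul_eq_mul] at this
          push_cast at this
          rw [eq_div_iff hi, ← this]; ring
        rw [← htl] at hgood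
        have hy := germ_of_sliceGerm hE ht hq (mem_stab_germ hJ h _ _ hgood) hi
        have := germ_line hJ h hk hq hy (fun s => by
          rw [add_assoc, ← add_smul]; exact hZ _) (-t)
        rwa [add_assoc, ← add_smul, add_neg_cancel, zero_smul, add_zero] at this
  rw [hset]
  have hZ := ssInv_lowRank hJ h ih fun _ => True
  refine hZ.not.and ((ssInv_reach hJ h ih E q).or ((ssInv_reach hJ h ih E (-q)).or
    (SsInv.and ?_ (SsInv.all_finite (Finset.finite_toSet _) fun l _ => ?_))))
  · exact SsInv.all (P := fun x t => ¬ x + t • rv q ∈ lowRank X k fun _ => True) (hZ.line q).not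
  · exact SsInv.ex (P := fun x t => SliceGerm X E i ((l / P : ℚ) : ℝ) (x + t • rv q))
      ((ssInv_sliceGerm hJ hE (hsec i _)).line q)

/-- A union of cells of a periodic arrangement with finitely many singular points, all of whose proper
rational sections are semilinear, is semilinear. -/
lemma LsInv.ssInv (hX : LsInv X) (hsing : {x | IsSingular X x}.Finite)
    (hsec : ∀ (i : ι) (a : ℚ), SsInv {x | x ∈ X ∧ x i = a}) : SsInv X := by
  obtain ⟨J, hJ, h⟩ := hX
  have := SsInv.biUnion (s := {E | JSign J E ∧ (0 : ι → ℝ) ∈ E})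
    (X := fun E => {x | germ X x = E}) ((finite_jSign hJ).subset fun E hE => hE.1)
    fun E hE => ssInv_germ_class hJ h hsing hsec _ E hE.1 rfl
  convert this using 1
  ext x
  simp only [Set.mem_ofPred_eq, Set.mem_iUnion, exists_prop]
  rw [mem_iff_zero_mem_germ x]
  exact ⟨fun hx => ⟨_, ⟨germ_jSign hJ h x, hx⟩, rfl⟩, fun ⟨E, hE, hx⟩ => hx ▸ hE.2⟩

end Step

/-! ### Sections, and the two implications -/

section Sections

/-- The singular points of a semilinear set `X` are finite in number: a singular point is determined by
the finite set of forms vanishing at it, since any vector annihilated by these is a stratum. -/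
lemma SsInv.finite_singular {ι : Type} [Fintype ι] {X : Set (ι → ℝ)} (h : SsInv X) :
    {z | IsSingular X z}.Finite := by
  obtain ⟨A, hA, h⟩ := h
  have key : ∀ z v : ι → ℝ, (∀ p ∈ A, aff p z = 0 → ev p.1 v = 0) → IsStratum X z v := by
    intro z v hv
    have h1 : ∀ᶠ r : ℝ in 𝓝[>] 0, ∀ p ∈ A, ∀ w : ι → ℝ, ‖w‖ < r → aff p z ≠ 0 →
        |ev p.1 w| < |aff p z| := by
      rw [Filter.eventually_all_finite hA]
      intro p _
      by_cases hp : aff p z = 0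
      · exact Filter.Eventually.of_forall fun r w _ h => absurd hp h
      have hC : 0 ≤ ∑ i, |(p.1 i : ℝ)| := Finset.sum_nonneg fun _ _ => abs_nonneg _
      have hpos : 0 < |aff p z| / ((∑ i, |(p.1 i : ℝ)|) + 1) :=
        div_pos (abs_pos.2 hp) (by linarith)
      filter_upwards [Ioo_mem_nhdsGT hpos] with r hr w hw _
      have h2 := (lt_div_iff₀ (by linarith)).1 (hw.trans hr.2)
      have h3 := abs_ev_le p.1 w
      nlinarith [norm_nonneg w]
    obtain ⟨r, hr, hr0⟩ := (h1.and self_mem_nhdsWithin).exists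
    refine ⟨r, hr0, ?_⟩
    rintro y hy ⟨x, ⟨hxX, hx⟩, α, hyx⟩
    refine h x y (fun p hp => ?_) hxX
    have e : ∀ u, aff p u = aff p z + ev p.1 (u - z) := by
      intro u
      rw [aff, aff, ev_sub]
      ring
    by_cases hp0 : aff p z = 0
    · rw [hyx, aff, aff, ev_add, ev_smul, hv p hp hp0, mul_zero, add_zero]
    · rw [Metric.mem_ball, dist_eq_norm] at hx hy
      have hx' := abs_lt.1 (hr p hp _ hx hp0)
      have hy' := abs_lt.1 (hr p hp _ hy hp0)
      rw [e x, e y]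
      rcases lt_or_gt_of_ne hp0 with h0 | h0
      · rw [abs_of_neg h0] at hx' hy'
        rw [sign_neg (by linarith), sign_neg (by linarith)]
      · rw [abs_of_pos h0] at hx' hy'
        rw [sign_pos (by linarith), sign_pos (by linarith)]
  refine Set.Finite.of_injOn (f := fun z => {p | p ∈ A ∧ aff p z = 0}) (t := 𝒫 A)
    (fun z _ p hp => hp.1) ?_ hA.finite_subsets
  intro z hz z' _ heq
  replace heq : {p | p ∈ A ∧ aff p z = 0} = {p | p ∈ A ∧ aff p z' = 0} := heq
  have h1 := hz (z' - z) (key z _ fun p hp hp0 => by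
    have : p ∈ {p | p ∈ A ∧ aff p z' = 0} := by
      have h2 : p ∈ {p | p ∈ A ∧ aff p z = 0} := ⟨hp, hp0⟩
      exact heq ▸ h2
    have h3 := this.2
    rw [aff] at hp0 h3
    rw [ev_sub]
    linarith)
  exact (sub_eq_zero.1 h1).symm

variable {n : ℕ}

/-- The point with coordinates `a` in `S` and `y` outside. -/
noncomputable def glue (S : Finset (Fin n)) (a : Fin n → ℚ) (y : {i : Fin n // i ∉ S} → ℝ) :
    Fin n → ℝ :=
  fun i : Fin n => if h : i ∈ S then (a i : ℝ) else y ⟨i, h⟩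

lemma ratAff_glue (S : Finset (Fin n)) (a : Fin n → ℚ) (i : Fin n) :
    RatAff fun y => glue S a y i := by
  by_cases h : i ∈ S
  · simpa [glue, h] using RatAff.const (a i)
  · simpa [glue, h] using RatAff.coord (⟨i, h⟩ : {i : Fin n // i ∉ S})

/-- All rational sections are semilinear, by induction on the number of free coordinates. -/
lemma ssInv_section {X : Set (Fin n → ℝ)} (hX : LsInv X)
    (hsing : ∀ (S : Finset (Fin n)) (a : Fin n → ℚ),
      {z | IsSingular {y | glue S a y ∈ X} z}.Finite) (m : ℕ) :
    ∀ (S : Finset (Fin n)) (a : Fin n → ℚ), Sᶜ.card = m → SsInv {y | glue S a y ∈ X} := by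
  induction m with
  | zero =>
    intro S a hS
    refine LsInv.ssInv (hX.preimage (ratAff_glue S a)) (hsing S a) fun i => ?_
    exact absurd (Finset.mem_compl.2 i.2) (by rw [Finset.card_eq_zero.1 hS]; simp)
  | succ m ih =>
    intro S a hS
    refine LsInv.ssInv (hX.preimage (ratAff_glue S a)) (hsing S a) fun i b => ?_
    have hcard : (insert i.1 S)ᶜ.card = m := by
      rw [Finset.compl_insert, Finset.card_erase_of_mem (Finset.mem_compl.2 i.2), hS]
      rfl
    have h1 := ih (insert i.1 S) (Function.update a i.1 b) hcard
    let φ : ({j : Fin n // j ∉ S} → ℝ) → {j : Fin n // j ∉ insert i.1 S} → ℝ :=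
      fun y j => y ⟨j.1, fun hj => j.2 (Finset.mem_insert_of_mem hj)⟩
    have h2 := (SsInv.eq (RatAff.coord i) (RatAff.const b)).inter
      (h1.preimage (φ := φ) fun j => RatAff.coord _)
    convert h2 using 1
    ext y
    simp only [Set.mem_ofPred_eq, Set.mem_inter_iff]
    rw [and_comm]
    refine and_congr_right fun hy => ?_
    suffices glue S a y = glue (insert i.1 S) (Function.update a i.1 b) (φ y) by rw [this]
    ext j
    by_cases hji : j = i.1
    · subst hji
      simp [glue, i.2, hy]
    · by_cases hjS : j ∈ S <;> simp [glue, hji, hjS, φ]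

lemma ssInv_of_sections {X : Set (Fin n → ℝ)} (hX : LsInv X)
    (hsing : ∀ (S : Finset (Fin n)) (a : Fin n → ℚ),
      {z | IsSingular {y | glue S a y ∈ X} z}.Finite) : SsInv X := by
  have h1 := ssInv_section hX hsing _ ∅ 0 rfl
  have h2 := h1.preimage (φ := fun (x : Fin n → ℝ) (j : {j : Fin n // j ∉ (∅ : Finset (Fin n))}) =>
    x j.1) fun j => RatAff.coord _
  convert h2 using 1
  ext x
  have h3 : (glue ∅ 0 fun j => x j.1) = x := by
    ext i
    simp [glue]
  simp [h3]

end Sections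

end RealAdd

/-- A `⟨ℝ,+,<,ℤ⟩`-definable set is `⟨ℝ,+,<,1⟩`-definable iff every rational generalized
section, viewed (by deleting the frozen coordinates) as a subset of `ℝ^{n-r}`, has finitely
many singular points. -/
theorem stmt16 (n : ℕ) (hn : 1 ≤ n) (X : Set (Fin n → ℝ)) (hX : LsDefinable X) :
    SsDefinable X ↔
      ∀ (S : Finset (Fin n)) (a : Fin n → ℚ),
        {z : {i : Fin n // i ∉ S} → ℝ |
          IsSingular
            {y : {i : Fin n // i ∉ S} → ℝ |
              (fun i : Fin n => if h : i ∈ S then (a i : ℝ) else y ⟨i, h⟩) ∈ X} z}.Finite := by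
  constructor
  · intro h S a
    exact ((RealAdd.SsInv.of_definable h).preimage (RealAdd.ratAff_glue S a)).finite_singular
  · intro h
    exact (RealAdd.ssInv_of_sections (RealAdd.LsInv.of_definable hX) h).definable
end

section
/- Let n ≥ 1 and let X ⊆ ℝ^n be ⟨ℝ,+,<,ℤ⟩-definable but not ⟨ℝ,+,<,1⟩-definable. Then the set ℤ of integers is definable without parameters by a first-order formula in the structure ⟨ℝ,+,<,1,X⟩, i.e., in the first-order structure with domain ℝ whose signature consists of the binary function +, the binary relation <, the constant 1, and an n-ary relation symbol interpreted as X. -/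
/-!
Let `X ⊆ ℝ^n` be definable in `⟨ℝ,+,<,ℤ⟩`. Splitting points into integer and fractional parts,
membership in `X` depends on a semilinear colouring of the integer parts and on the signs of
finitely many rational affine forms at the fractional parts (`NoIntermediate.FV`). The sets of this
kind are closed under the first-order operations (`fv_defClass`): real quantifiers split into an
integer quantifier, under which semilinear sets are stable, and a quantifier over `[0,1)`, which
Fourier–Motzkin elimination removes.

Consequently `X` is locally conic: there is a finite set `G` of rational linear functionals whose
signs at `y - x` decide whether `y ∈ X`, for `y` near `x` (`fv_locConic`). Let `lp X x` be the space
of directions along which `X` is translation invariant near `x`. It is a common kernel of elements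
of `G` (`exists_inv`), and for `ℓ ∈ G` the set `crit X G ℓ` of critical values, that is of the values
`ℓ x` at points where `ℓ` vanishes on `lp X x`, is first-order definable from `X` (`crit_def`). It is
countable, because `y - x` belongs to `lp X y` for `y` near `x` (`LocConic.sub_mem_lp`).

A countable set of reals definable in `⟨ℝ,+,<,ℤ⟩` consists of rationals with bounded denominator and
is ultimately periodic in both directions (`exists_den`, `exists_period`). Hence there are two cases.

* All sets of critical values are finite. Then they consist of finitely many rationals, and `X` is a
  union of cells of the forms `ℓ - c` with `c` a critical value of `ℓ` (`mem_of_same`): inside such a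
  cell one can move along a segment without leaving `X`. So `X` is definable in `⟨ℝ,+,<,1⟩`.
* Some set `H` of critical values is infinite. Being of bounded denominator it is unbounded; replacing
  it by `-H` if necessary, it is unbounded above. Its group of eventual periods is definable from `X`
  and equals `qℤ` for some rational `q ≠ 0`, so `ℤ` is definable from `X` (`int_of_infinite`).
-/

open FirstOrder

/-- A purely relational language with a single `n`-ary relation symbol. -/
def RelLang (n : ℕ) : Language where
  Functions := fun _ => Empty
  Relations := fun m => PLift (m = n)

/-- Interpretation of the `n`-ary relation symbol as the set `X ⊆ ℝ^n`. -/
def xStructure (n : ℕ) (X : Set (Fin n → ℝ)) : (RelLang n).Structure ℝ where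
  funMap := fun f _ => f.elim
  RelMap := fun {m} r x => (fun i : Fin n => x (Fin.cast r.down.symm i)) ∈ X

namespace NoIntermediate

/-- A rational affine form on `ℝ^ι`: its vector of linear coefficients and its constant term. -/
abbrev Form (ι : Type) := (ι → ℚ) × ℚ

/-! ### Rational affine forms and their cells -/

section Forms

variable {ι κ : Type} [Fintype ι] [Fintype κ]

/-- The real linear functional with rational coefficients `g`. -/
def lin (g : ι → ℚ) (w : ι → ℝ) : ℝ := ∑ i, (g i : ℝ) * w i

/-- The value of a rational affine form at a point. -/
def ev (f : Form ι) (x : ι → ℝ) : ℝ := lin f.1 x + (f.2 : ℝ)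

lemma lin_add (g : ι → ℚ) (v w : ι → ℝ) : lin g (v + w) = lin g v + lin g w := by
  simp [lin, mul_add, Finset.sum_add_distrib]

lemma lin_smul (g : ι → ℚ) (s : ℝ) (w : ι → ℝ) : lin g (s • w) = s * lin g w := by
  simp only [lin, Finset.mul_sum, Pi.smul_apply, smul_eq_mul]
  exact Finset.sum_congr rfl fun i _ => by ring

lemma lin_zero (g : ι → ℚ) : lin g (0 : ι → ℝ) = 0 := by simp [lin]

lemma lin_neg (g : ι → ℚ) (w : ι → ℝ) : lin g (-w) = -lin g w := by
  simp [lin]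

lemma lin_sub (g : ι → ℚ) (v w : ι → ℝ) : lin g (v - w) = lin g v - lin g w := by
  rw [sub_eq_add_neg, lin_add, lin_neg, sub_eq_add_neg]

lemma ev_add (f : Form ι) (x w : ι → ℝ) : ev f (x + w) = ev f x + lin f.1 w := by
  simp only [ev, lin_add]; ring

lemma continuous_lin (g : ι → ℚ) : Continuous (lin g) := by
  unfold lin; fun_prop

lemma lin_single [DecidableEq ι] (i : ι) (w : ι → ℝ) : lin (Pi.single i 1) w = w i := by
  rw [lin, Finset.sum_eq_single i] <;> simp +contextual

/-- A function on `ℝ^ι` given by a rational affine form. -/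
def IsAff (e : (ι → ℝ) → ℝ) : Prop := ∃ f : Form ι, ∀ x, e x = ev f x

lemma IsAff.coord (i : ι) : IsAff fun x : ι → ℝ => x i := by
  classical
  exact ⟨(Pi.single i 1, 0), fun x => by simp [ev, lin_single]⟩

lemma IsAff.const (q : ℚ) : IsAff fun _ : ι → ℝ => (q : ℝ) :=
  ⟨(0, q), fun x => by simp [ev, lin]⟩

lemma IsAff.zero : IsAff fun _ : ι → ℝ => 0 := by
  simpa using IsAff.const (ι := ι) 0

lemma IsAff.add {e e' : (ι → ℝ) → ℝ} (h : IsAff e) (h' : IsAff e') :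
    IsAff fun x => e x + e' x := by
  obtain ⟨f, hf⟩ := h
  obtain ⟨f', hf'⟩ := h'
  refine ⟨f + f', fun x => ?_⟩
  simp only [hf, hf', ev, lin, Prod.fst_add, Prod.snd_add, Pi.add_apply, Rat.cast_add, add_mul,
    Finset.sum_add_distrib]
  ring

lemma IsAff.smul {e : (ι → ℝ) → ℝ} (q : ℚ) (h : IsAff e) : IsAff fun x => (q : ℝ) * e x := by
  obtain ⟨f, hf⟩ := h
  refine ⟨q • f, fun x => ?_⟩
  simp only [hf, ev, lin, Prod.smul_fst, Prod.smul_snd, Pi.smul_apply, smul_eq_mul, Rat.cast_mul,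
    mul_add, Finset.mul_sum, mul_assoc]

lemma IsAff.neg {e : (ι → ℝ) → ℝ} (h : IsAff e) : IsAff fun x => -e x := by
  simpa using h.smul (-1)

lemma IsAff.sub {e e' : (ι → ℝ) → ℝ} (h : IsAff e) (h' : IsAff e') :
    IsAff fun x => e x - e' x := by
  simpa [sub_eq_add_neg] using h.add h'.neg

lemma IsAff.sum {α : Type*} (s : Finset α) {e : α → (ι → ℝ) → ℝ} (h : ∀ a, IsAff (e a)) :
    IsAff fun x => ∑ a ∈ s, e a x := by
  classical
  induction s using Finset.induction_on with
  | empty => simpa using IsAff.zero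
  | insert a s ha ih => simpa [Finset.sum_insert ha] using (h a).add ih

lemma IsAff.lin (g : κ → ℚ) {e : κ → (ι → ℝ) → ℝ} (h : ∀ a, IsAff (e a)) :
    IsAff fun x => lin g fun a => e a x :=
  IsAff.sum _ fun a => (h a).smul (g a)

lemma IsAff.ev (f : Form κ) {e : κ → (ι → ℝ) → ℝ} (h : ∀ a, IsAff (e a)) :
    IsAff fun x => ev f fun a => e a x :=
  (IsAff.lin f.1 h).add (.const f.2)

/-- `x` and `y` lie in the same cell of `F`: every form of `F` has the same sign at both. -/
def Same (F : Finset (Form ι)) (x y : ι → ℝ) : Prop :=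
  ∀ f ∈ F, SignType.sign (ev f x) = SignType.sign (ev f y)

lemma Same.symm {F : Finset (Form ι)} {x y : ι → ℝ} (h : Same F x y) : Same F y x :=
  fun f hf => (h f hf).symm

lemma Same.mono {F F' : Finset (Form ι)} {x y : ι → ℝ} (h : Same F x y) (hF : F' ⊆ F) :
    Same F' x y :=
  fun f hf => h f (hF hf)

end Forms

/-! ### Classes of definable sets -/

lemma mem_cong {α : Type*} {X : Set α} {a b : α} (h : a ∈ X) (e : a = b) : b ∈ X := e ▸ h

/-- A family of subsets of the spaces `ℝ^ι` (`ι` finite) that contains all open half-spaces cut out by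
rational affine forms and is closed under the first-order operations. The definable sets of any
expansion of `⟨ℝ,+,<,1⟩` form such a class, and so do the sets in `FV`. In `ex` the index `none`
stands for the quantified variable. -/
structure DefClass (D : ∀ (ι : Type) [Fintype ι], Set (ι → ℝ) → Prop) : Prop where
  compl : ∀ {ι : Type} [Fintype ι] {X : Set (ι → ℝ)}, D ι X → D ι Xᶜ
  inter : ∀ {ι : Type} [Fintype ι] {X Y : Set (ι → ℝ)}, D ι X → D ι Y → D ι (X ∩ Y)
  reindex : ∀ {ι κ : Type} [Fintype ι] [Fintype κ] (σ : κ → ι) {X : Set (κ → ℝ)},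
    D κ X → D ι {x | x ∘ σ ∈ X}
  ex : ∀ {ι : Type} [Fintype ι] {X : Set (Option ι → ℝ)},
    D (Option ι) X → D ι {x | ∃ t : ℝ, (fun o => o.elim t x) ∈ X}
  pos : ∀ {ι : Type} [Fintype ι] (f : Form ι), D ι {x | 0 < ev f x}

namespace DefClass

variable {D : ∀ (ι : Type) [Fintype ι], Set (ι → ℝ) → Prop} (hD : DefClass D)
variable {ι κ : Type} [Fintype ι] [Fintype κ]

include hD

lemma lt {e e' : (ι → ℝ) → ℝ} (h : IsAff e) (h' : IsAff e') : D ι {x | e x < e' x} := by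
  obtain ⟨f, hf⟩ := h'.sub h
  convert hD.pos f using 3 with x
  rw [← hf, sub_pos]

lemma not {p : (ι → ℝ) → Prop} (h : D ι {x | p x}) : D ι {x | ¬ p x} := hD.compl h

lemma and {p q : (ι → ℝ) → Prop} (h : D ι {x | p x}) (h' : D ι {x | q x}) :
    D ι {x | p x ∧ q x} := hD.inter h h'

lemma imp {p q : (ι → ℝ) → Prop} (h : D ι {x | p x}) (h' : D ι {x | q x}) :
    D ι {x | p x → q x} := by
  convert hD.not (hD.and h (hD.not h')) using 3 with x
  tauto

lemma iff {p q : (ι → ℝ) → Prop} (h : D ι {x | p x}) (h' : D ι {x | q x}) :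
    D ι {x | p x ↔ q x} := by
  convert hD.and (hD.imp h h') (hD.imp h' h) using 3 with x
  tauto

lemma eq {e e' : (ι → ℝ) → ℝ} (h : IsAff e) (h' : IsAff e') : D ι {x | e x = e' x} := by
  convert hD.and (hD.not (hD.lt h h')) (hD.not (hD.lt h' h)) using 3 with x
  rw [not_lt, not_lt, le_antisymm_iff, and_comm]

lemma true : D ι {_x | True} := by
  convert hD.eq (IsAff.zero (ι := ι)) IsAff.zero using 3 with x
  simp

lemma prop (p : Prop) : D ι {_x | p} := by
  by_cases h : p
  · simpa [h] using hD.true (ι := ι)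
  · simpa [h] using hD.not (hD.true (ι := ι))

lemma forall_mem {α : Type*} (s : Finset α) {p : α → (ι → ℝ) → Prop}
    (h : ∀ a, D ι {x | p a x}) : D ι {x | ∀ a ∈ s, p a x} := by
  classical
  induction s using Finset.induction_on with
  | empty => simpa using hD.true (ι := ι)
  | insert a s ha ih =>
    convert hD.and (h a) ih using 3 with x
    simp

lemma forall_fin {α : Type*} [Finite α] {p : α → (ι → ℝ) → Prop}
    (h : ∀ a, D ι {x | p a x}) : D ι {x | ∀ a, p a x} := by
  have := Fintype.ofFinite α
  simpa using hD.forall_mem Finset.univ h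

lemma exists_fin {α : Type*} [Finite α] {p : α → (ι → ℝ) → Prop}
    (h : ∀ a, D ι {x | p a x}) : D ι {x | ∃ a, p a x} := by
  convert hD.not (hD.forall_fin fun a => hD.not (h a)) using 3 with x
  simp

lemma exs {X : Set (ι ⊕ κ → ℝ)} (hX : D (ι ⊕ κ) X) :
    D ι {x | ∃ y : κ → ℝ, Sum.elim x y ∈ X} := by
  have key : ∀ (κ : Type) [Finite κ], ∀ [Fintype κ] (X : Set (ι ⊕ κ → ℝ)), D (ι ⊕ κ) X →
      D ι {x | ∃ y : κ → ℝ, Sum.elim x y ∈ X} := by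
    intro κ _
    induction κ using Finite.induction_empty_option with
    | @of_equiv α β e ih =>
      intro _ X hX
      have := Fintype.ofEquiv β e.symm
      have h := ih _ (hD.reindex (Sum.map id e.symm : ι ⊕ β → ι ⊕ α) hX)
      convert h using 3 with x
      constructor
      · rintro ⟨y, hy⟩
        refine ⟨y ∘ e, mem_cong (X := X) hy ?_⟩
        ext i; cases i <;> simp
      · rintro ⟨y, hy⟩
        refine ⟨y ∘ e.symm, mem_cong (X := X) hy ?_⟩
        ext i; cases i <;> simp
    | h_empty =>
      intro _ X hX
      have h := hD.reindex (Sum.elim id PEmpty.elim : ι ⊕ PEmpty → ι) hX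
      convert h using 3 with x
      constructor
      · rintro ⟨y, hy⟩
        convert hy using 1
        ext i; cases i with
        | inl i => simp
        | inr i => exact i.elim
      · intro hy
        refine ⟨PEmpty.elim, ?_⟩
        convert hy using 1
        ext i; cases i with
        | inl i => simp
        | inr i => exact i.elim
    | @h_option α _ ih =>
      intro _ X hX
      have h := ih _ (hD.ex (hD.reindex
        (Sum.elim (fun i => some (Sum.inl i))
          (fun o => o.elim none fun a => some (Sum.inr a)) :
            ι ⊕ Option α → Option (ι ⊕ α)) hX))
      convert h using 3 with x
      constructor
      · rintro ⟨y, hy⟩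
        refine ⟨fun a => y (some a), y none, mem_cong (X := X) hy ?_⟩
        ext i
        rcases i with i | _ | i <;> simp
      · rintro ⟨y, t, hy⟩
        refine ⟨fun o => o.elim t y, mem_cong (X := X) hy ?_⟩
        ext i
        rcases i with i | _ | i <;> simp
  exact key κ X hX

lemma exists' {p : (ι → ℝ) → (κ → ℝ) → Prop}
    (h : D (ι ⊕ κ) {z | p (z ∘ Sum.inl) (z ∘ Sum.inr)}) : D ι {x | ∃ y, p x y} :=
  hD.exs h

lemma forall' {p : (ι → ℝ) → (κ → ℝ) → Prop}
    (h : D (ι ⊕ κ) {z | p (z ∘ Sum.inl) (z ∘ Sum.inr)}) : D ι {x | ∀ y, p x y} := by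
  convert hD.not (hD.exists' (p := fun x y => ¬ p x y) (hD.not h)) using 3 with x
  simp

lemma exists_real {p : (ι → ℝ) → ℝ → Prop}
    (h : D (ι ⊕ Unit) {z | p (z ∘ Sum.inl) (z (Sum.inr ()))}) : D ι {x | ∃ t, p x t} := by
  convert hD.exists' (p := fun x (y : Unit → ℝ) => p x (y ())) h using 3 with x
  exact ⟨fun ⟨t, ht⟩ => ⟨fun _ => t, ht⟩, fun ⟨y, hy⟩ => ⟨_, hy⟩⟩

lemma forall_real {p : (ι → ℝ) → ℝ → Prop}
    (h : D (ι ⊕ Unit) {z | p (z ∘ Sum.inl) (z (Sum.inr ()))}) : D ι {x | ∀ t, p x t} := by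
  convert hD.not (hD.exists_real (p := fun x y => ¬ p x y) (hD.not h)) using 3 with x
  simp

lemma preimage {X : Set (κ → ℝ)} (hX : D κ X) {e : κ → (ι → ℝ) → ℝ} (he : ∀ a, IsAff (e a)) :
    D ι {x | (fun a => e a x) ∈ X} := by
  convert hD.exists' (ι := ι) (κ := κ) (p := fun x y => y ∈ X ∧ ∀ a, y a = e a x) ?_ using 3 with x
  · constructor
    · intro h
      exact ⟨_, h, fun a => rfl⟩
    · rintro ⟨y, hy, h⟩
      rwa [show (fun a => e a x) = y from funext fun a => (h a).symm]
  · refine hD.and (hD.reindex Sum.inr hX) (hD.forall_fin fun a => hD.eq (.coord _) ?_)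
    obtain ⟨f, hf⟩ := he a
    simp only [hf]
    exact IsAff.ev f fun i => .coord _

end DefClass

/-! ### Sets described by integer parts and fractional parts -/

section FloorFract

variable {ι κ : Type} [Fintype ι] [Fintype κ]

/-- Coordinatewise integer part. -/
noncomputable def ifl (x : ι → ℝ) : ι → ℤ := fun i => ⌊x i⌋

/-- Coordinatewise fractional part. -/
noncomputable def ifr (x : ι → ℝ) : ι → ℝ := fun i => Int.fract (x i)

/-- Membership in `X` depends only on a colour of the integer part, taken from a finite palette with
semilinear colour classes in `ℤ^ι`, and on the signs of finitely many rational affine forms at the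
fractional part. This is a semantic form of quantifier elimination for `⟨ℝ,+,<,ℤ⟩`. -/
def FV (ι : Type) [Fintype ι] (X : Set (ι → ℝ)) : Prop :=
  ∃ (C : Type) (_ : Finite C) (c : (ι → ℤ) → C) (F : Finset (Form ι)),
    (∀ j, IsSemilinearSet (c ⁻¹' {j})) ∧
    ∀ x y, c (ifl x) = c (ifl y) → Same F (ifr x) (ifr y) → x ∈ X → y ∈ X

lemma semilinear_univ : IsSemilinearSet (Set.univ : Set (ι → ℤ)) := by
  rw [← Set.compl_empty]
  exact IsSemilinearSet.empty.compl

/-- The vector of truth values of finitely many semilinear predicates is itself a colouring with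
semilinear classes. -/
lemma semilinear_fiber {α : Type*} [Finite α] (P : α → (ι → ℤ) → Prop)
    (h : ∀ a, IsSemilinearSet {k | P a k}) (T : α → Prop) :
    IsSemilinearSet ((fun k a => P a k) ⁻¹' {T}) := by
  have : ((fun k a => P a k) ⁻¹' {T} : Set (ι → ℤ)) = ⋂ a, {k | P a k ↔ T a} := by
    ext k
    simp [funext_iff]
  rw [this]
  refine IsSemilinearSet.iInter fun a => ?_
  by_cases hT : T a
  · simpa [hT] using h a
  · simp only [hT, iff_false]
    exact (h a).compl

/-- Fourier–Motzkin elimination in terms of cells: if `x` and `y` agree on the pairwise differences of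
the thresholds for `t`, any `t` over `x` can be matched by some `t'` over `y`. -/
lemma fourier_motzkin (F : Finset (Form (Option ι))) :
    ∃ F' : Finset (Form ι), ∀ x y : ι → ℝ, Same F' x y → ∀ t : ℝ, ∃ t' : ℝ,
      Same F (fun o => o.elim t x) (fun o => o.elim t' y) := by
  classical
  let p : Form (Option ι) → Form ι :=
    fun f => (fun i => -(f.1 (some i)) / f.1 none, -f.2 / f.1 none)
  let r : Form (Option ι) → Form ι := fun f => (fun i => f.1 (some i), f.2)
  have hr : ∀ f x t, ev f (fun o : Option ι => o.elim t x) = (f.1 none : ℝ) * t + ev (r f) x := by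
    intro f x t
    simp only [ev, lin, Fintype.sum_option, r, Option.elim]
    ring
  have hp : ∀ f x t, f.1 none ≠ 0 →
      ev f (fun o : Option ι => o.elim t x) = (f.1 none : ℝ) * (t - ev (p f) x) := by
    intro f x t h0
    have h0' : (f.1 none : ℝ) ≠ 0 := by exact_mod_cast h0
    rw [hr]
    have : ev (r f) x = (f.1 none : ℝ) * (- ev (p f) x) := by
      simp only [ev, lin, p, r]
      push_cast
      rw [mul_neg, mul_add, Finset.mul_sum, neg_add, ← Finset.sum_neg_distrib]
      congr 1
      · refine Finset.sum_congr rfl fun i _ => ?_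
        field_simp
      · field_simp
    rw [this]; ring
  refine ⟨F.image r ∪ (F ×ˢ F).image (fun q => p q.1 - p q.2), fun x y hxy t => ?_⟩
  have hsub : ∀ f g : Form ι, ∀ x : ι → ℝ, ev (f - g) x = ev f x - ev g x := by
    intro f g x
    simp only [ev, lin, Prod.fst_sub, Prod.snd_sub, Pi.sub_apply, Rat.cast_sub, sub_mul,
      Finset.sum_sub_distrib]
    ring
  have hd : ∀ f ∈ F, ∀ g ∈ F, SignType.sign (ev (p f) x - ev (p g) x) =
      SignType.sign (ev (p f) y - ev (p g) y) := by
    intro f hf g hg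
    rw [← hsub, ← hsub]
    exact hxy _ (Finset.mem_union_right _ (Finset.mem_image.2 ⟨(f, g), by simp [hf, hg], rfl⟩))
  -- it suffices to place `t'` relative to the thresholds at `y` as `t` is placed at `x`
  suffices h : ∃ t', ∀ g ∈ F, SignType.sign (t - ev (p g) x) = SignType.sign (t' - ev (p g) y) by
    obtain ⟨t', ht'⟩ := h
    refine ⟨t', fun g hg => ?_⟩
    by_cases h0 : g.1 none = 0
    · rw [hr, hr, h0]
      simpa using hxy (r g) (Finset.mem_union_left _ (Finset.mem_image_of_mem _ hg))
    · rw [hp _ _ _ h0, hp _ _ _ h0, sign_mul, sign_mul, ht' g hg]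
  by_cases hex : ∃ f ∈ F, ev (p f) x = t
  · obtain ⟨f, hf, rfl⟩ := hex
    exact ⟨ev (p f) y, fun g hg => hd f hf g hg⟩
  · push Not at hex
    obtain ⟨t', h1, h2⟩ := Order.exists_between_finsets
      (lo := (F.filter fun g => ev (p g) x < t).image fun g => ev (p g) y)
      (hi := (F.filter fun g => t < ev (p g) x).image fun g => ev (p g) y) (by
        simp only [Finset.mem_image, Finset.mem_filter]
        rintro _ ⟨f, ⟨hf, hf'⟩, rfl⟩ _ ⟨g, ⟨hg, hg'⟩, rfl⟩
        have := hd g hg f hf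
        rw [sign_pos (by linarith), eq_comm, sign_eq_one_iff] at this
        linarith)
    refine ⟨t', fun g hg => ?_⟩
    rcases lt_or_gt_of_ne (hex g hg) with h | h
    · rw [sign_pos (by linarith), sign_pos]
      have := h1 (ev (p g) y) (Finset.mem_image.2 ⟨g, by simp [hg, h], rfl⟩)
      linarith
    · rw [sign_neg (by linarith), sign_neg]
      have := h2 (ev (p g) y) (Finset.mem_image.2 ⟨g, by simp [hg, h], rfl⟩)
      linarith

lemma exists_int_mul (q : ℚ) {N : ℕ} (h : q.den ∣ N) : ∃ z : ℤ, (N : ℚ) * q = z := by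
  obtain ⟨m, rfl⟩ := h
  refine ⟨m * q.num, ?_⟩
  push_cast
  rw [mul_comm (q.den : ℚ), mul_assoc, Rat.den_mul_eq_num]

lemma clear_denoms (f : Form ι) : ∃ (N : ℕ) (a : ι → ℤ) (b : ℤ), 0 < N ∧
    (∀ i, (N : ℚ) * f.1 i = a i) ∧ (N : ℚ) * f.2 = b := by
  have h1 : ∀ i, ∃ z : ℤ, (((∏ i, (f.1 i).den) * f.2.den : ℕ) : ℚ) * f.1 i = z := fun i =>
    exists_int_mul _ (Dvd.dvd.mul_right (Finset.dvd_prod_of_mem (fun i => (f.1 i).den) (Finset.mem_univ i)) _)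
  choose a ha using h1
  obtain ⟨b, hb⟩ := exists_int_mul f.2 (N := (∏ i, (f.1 i).den) * f.2.den) (Dvd.intro_left _ rfl)
  exact ⟨_, a, b, Nat.mul_pos (Finset.prod_pos fun i _ => (f.1 i).den_pos) f.2.den_pos, ha, hb⟩

/-- After clearing denominators, `g x = φ ⌊x⌋ + g (fract x)` with `φ` integral and the second summand
bounded by `B`. So the sign of `g x` is determined by `φ ⌊x⌋` truncated to `[-(B+1), B+1]` and, for
each value in that range, by the sign of a shifted form at the fractional part. -/
lemma fv_pos (f : Form ι) : FV ι {x | 0 < ev f x} := by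
  classical
  obtain ⟨N, a, b, hN, ha, hb⟩ := clear_denoms f
  let φ : (ι → ℤ) →+ ℤ :=
    { toFun := fun k => ∑ i, a i * k i
      map_zero' := by simp
      map_add' := fun k l => by simp [mul_add, Finset.sum_add_distrib] }
  let g : Form ι := (fun i => (a i : ℚ), (b : ℚ))
  have hfg : ∀ x, 0 < ev f x ↔ 0 < ev g x := by
    intro x
    have : ev g x = N * ev f x := by
      simp only [ev, lin, g, ← ha, ← hb]
      push_cast
      simp only [mul_add, Finset.mul_sum, mul_assoc]
    rw [this]
    have hN' : (0 : ℝ) < N := by exact_mod_cast hN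
    exact (mul_pos_iff_of_pos_left hN').symm
  have hsplit : ∀ x, ev g x = (φ (ifl x) : ℝ) + ev g (ifr x) := by
    intro x
    have : ∀ i, x i = (⌊x i⌋ : ℝ) + Int.fract (x i) := fun i => (Int.floor_add_fract _).symm
    simp only [ev, lin, g, φ, ifl, ifr, AddMonoidHom.coe_mk, ZeroHom.coe_mk]
    push_cast
    rw [← add_assoc, ← Finset.sum_add_distrib]
    congr 1
    refine Finset.sum_congr rfl fun i _ => ?_
    rw [← mul_add, ← this]
  let B : ℤ := ∑ i, |a i| + |b|
  have hB : ∀ x, |ev g (ifr x)| ≤ B := by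
    intro x
    simp only [ev, lin, g, B, ifr]
    push_cast
    refine (abs_add_le _ _).trans (add_le_add ((Finset.abs_sum_le_sum_abs _ _).trans ?_) le_rfl)
    refine Finset.sum_le_sum fun i _ => ?_
    rw [abs_mul]
    refine mul_le_of_le_one_right (abs_nonneg _) ?_
    rw [abs_of_nonneg (Int.fract_nonneg _)]
    exact (Int.fract_lt_one _).le
  refine ⟨Set.Icc (-(B + 1)) (B + 1) → Prop, inferInstance, fun k j => (j : ℤ) ≤ φ k,
    (Finset.Icc (-(B + 1)) (B + 1)).image
      fun j : ℤ => ((g.1, g.2 + (j : ℚ)) : Form ι), ?_, ?_⟩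
  · refine semilinear_fiber _ fun j => ?_
    have h : IsSemilinearSet {m : ℤ | (j : ℤ) ≤ m} := by
      convert ((IsLinearSet.closure_finset ({1} : Finset ℤ)).vadd (j : ℤ)).isSemilinearSet using 1
      ext m
      simp only [Set.mem_vadd_set, Finset.coe_singleton, SetLike.mem_coe,
        AddSubmonoid.mem_closure_singleton, vadd_eq_add, exists_exists_eq_and, nsmul_eq_mul, mul_one]
      constructor
      · intro (h : (j : ℤ) ≤ m)
        exact ⟨(m - j).toNat, by omega⟩
      · rintro ⟨n, rfl⟩
        exact le_add_of_nonneg_right (Int.natCast_nonneg n)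
    exact h.preimage φ
  · intro x y hc hs hx
    have hx : 0 < ev f x := hx
    change 0 < ev f y
    rw [hfg, hsplit] at hx ⊢
    have hx' := abs_le.1 (hB x)
    have hy' := abs_le.1 (hB y)
    have hlow : -B ≤ φ (ifl x) := by
      have : (-B : ℝ) < (φ (ifl x) : ℝ) + 0 := by linarith
      have h2 : ((-B : ℤ) : ℝ) ≤ (φ (ifl x) : ℝ) := by push_cast; linarith
      exact_mod_cast h2
    have hB0 : 0 ≤ B := by
      have : (0 : ℝ) ≤ B := (abs_nonneg _).trans (hB x)
      exact_mod_cast this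
    have hj : min (φ (ifl x)) (B + 1) ∈ Set.Icc (-(B + 1)) (B + 1) := by
      constructor
      · exact le_min (by omega) (by omega)
      · exact min_le_right _ _
    have h1 : min (φ (ifl x)) (B + 1) ≤ φ (ifl y) :=
      (congrFun hc ⟨_, hj⟩).mp (min_le_left _ _)
    rcases le_total (φ (ifl x)) (B + 1) with h | h
    · rw [min_eq_left h] at h1 hj
      have h3 := hs (g.1, g.2 + (φ (ifl x) : ℤ)) (Finset.mem_image.2 ⟨_, by simpa using hj, rfl⟩)
      have h4 : ∀ u : ι → ℝ, ev ((g.1, g.2 + (φ (ifl x) : ℤ)) : Form ι) u =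
          (φ (ifl x) : ℝ) + ev g u := by
        intro u; simp only [ev]; push_cast; ring
      rw [h4, h4, sign_pos hx, eq_comm, sign_eq_one_iff] at h3
      have : (φ (ifl x) : ℝ) ≤ φ (ifl y) := by exact_mod_cast h1
      linarith
    · rw [min_eq_right h] at h1
      have : ((B + 1 : ℤ) : ℝ) ≤ φ (ifl y) := by exact_mod_cast h1
      push_cast at this
      linarith

lemma fv_defClass : DefClass FV where
  compl := by
    rintro ι _ X ⟨C, hC, c, F, hc, h⟩
    exact ⟨C, hC, c, F, hc, fun x y h1 h2 hx hy => hx (h y x h1.symm h2.symm hy)⟩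
  inter := by
    classical
    rintro ι _ X Y ⟨C, hC, c, F, hc, h⟩ ⟨C', hC', c', F', hc', h'⟩
    refine ⟨C × C', inferInstance, fun k => (c k, c' k), F ∪ F', ?_, ?_⟩
    · rintro ⟨j, j'⟩
      convert (hc j).inter (hc' j') using 1
      ext k
      simp
    · rintro x y h1 h2 ⟨hx, hx'⟩
      rw [Prod.mk.injEq] at h1
      exact ⟨h x y h1.1 (h2.mono Finset.subset_union_left) hx,
        h' x y h1.2 (h2.mono Finset.subset_union_right) hx'⟩
  reindex := by
    classical
    rintro ι κ _ _ σ X ⟨C, hC, c, F, hc, h⟩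
    choose p hp using fun f : Form κ => IsAff.ev f fun a => IsAff.coord (σ a)
    refine ⟨C, hC, fun k => c (k ∘ σ), F.image p, fun j => ?_, fun x y h1 h2 hx => ?_⟩
    · exact (hc j).preimage (LinearMap.funLeft ℤ ℤ σ)
    · refine h _ _ h1 (fun f hf => ?_) hx
      have := h2 (p f) (Finset.mem_image_of_mem _ hf)
      rwa [← hp, ← hp] at this
  ex := by
    classical
    rintro ι _ X ⟨C, hC, c, F, hc, h⟩
    -- the two extra forms `t` and `t - 1` keep the new fractional part in `[0, 1)`
    let f0 : Form (Option ι) := (fun o => o.elim 1 0, 0)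
    let f1 : Form (Option ι) := (fun o => o.elim 1 0, -1)
    have hf0 : ∀ t (x : ι → ℝ), ev f0 (fun o => o.elim t x) = t := by
      intro t x; simp [ev, lin, f0, Fintype.sum_option]
    have hf1 : ∀ t (x : ι → ℝ), ev f1 (fun o => o.elim t x) = t - 1 := by
      intro t x; simp [ev, lin, f1, Fintype.sum_option, sub_eq_add_neg]
    obtain ⟨F', hF'⟩ := fourier_motzkin (insert f0 (insert f1 F))
    refine ⟨C → Prop, inferInstance, fun k j => ∃ m : ℤ, c (fun o => o.elim m k) = j, F', ?_, ?_⟩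
    · refine semilinear_fiber _ fun j => ?_
      convert (hc j).image (LinearMap.funLeft ℤ ℤ (some : ι → Option ι)) using 1
      ext k
      constructor
      · rintro ⟨m, hm⟩
        exact ⟨_, hm, rfl⟩
      · rintro ⟨l, hl, rfl⟩
        refine ⟨l none, ?_⟩
        refine Eq.trans (congrArg c ?_) hl
        ext o; cases o <;> rfl
    · rintro x y h1 h2 ⟨t, ht⟩
      obtain ⟨m, hm⟩ := (congrFun h1 (c (fun o => o.elim ⌊t⌋ (ifl x)))).mp ⟨_, rfl⟩
      obtain ⟨u, hu⟩ := hF' _ _ h2 (Int.fract t)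
      have hu0 := hu f0 (by simp)
      have hu1 := hu f1 (by simp)
      rw [hf0, hf0] at hu0
      rw [hf1, hf1, sign_neg (by linarith [Int.fract_lt_one t]), eq_comm, sign_eq_neg_one_iff] at hu1
      have hu0' : 0 ≤ u := by
        rw [← sign_nonneg_iff, ← hu0, sign_nonneg_iff]
        exact Int.fract_nonneg t
      have hfl : ⌊(m : ℝ) + u⌋ = m := by
        rw [Int.floor_eq_iff]; constructor <;> linarith
      have hfr : Int.fract ((m : ℝ) + u) = u := by
        rw [Int.fract, hfl]; ring
      refine ⟨m + u, h _ _ ?_ ?_ ht⟩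
      · refine Eq.trans (congrArg c ?_) (hm.symm.trans (congrArg c ?_))
        · ext o; cases o <;> rfl
        · ext o; cases o
          · exact hfl.symm
          · rfl
      · intro f hf
        have := hu f (by simp [hf])
        have e1 : ifr (fun o : Option ι => o.elim t x) =
            fun o => o.elim (Int.fract t) (ifr x) := by
          ext o; cases o <;> rfl
        have e2 : ifr (fun o : Option ι => o.elim ((m : ℝ) + u) y) =
            fun o => o.elim u (ifr y) := by
          ext o; cases o
          · exact hfr
          · rfl
        rw [e1, e2]
        exact this
  pos := fun f => fv_pos f

lemma fv_int : FV Unit {x | ∃ k : ℤ, x () = k} := by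
  refine ⟨Unit, inferInstance, fun _ => (), {(1, 0)}, fun j => ?_, ?_⟩
  · simp
  · rintro x y - h ⟨k, hk⟩
    have h := h (1, 0) (by simp)
    simp only [ev, lin, ifr, Finset.univ_unique, Pi.one_apply, Rat.cast_one, one_mul,
      Finset.sum_singleton, Rat.cast_zero, add_zero, PUnit.default_eq_unit, hk,
      Int.fract_intCast, sign_zero] at h
    rw [eq_comm, sign_eq_zero_iff] at h
    exact ⟨⌊y ()⌋, by rw [← Int.floor_add_fract (y ()), h]; simp⟩

end FloorFract

/-! ### Definability in `⟨ℝ,+,<,ℤ⟩` -/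

section Formulas

open FirstOrder Language

lemma isAff_realize {α : Type} [Fintype α] {n : ℕ} (t : LsLang.Term (α ⊕ Fin n)) :
    IsAff fun z : α ⊕ Fin n → ℝ => t.realize z := by
  induction t with
  | var a => exact IsAff.coord a
  | @func l f ts ih =>
    match l, f with
    | 0, f => exact f.elim
    | 1, f => exact f.elim
    | 2, f => exact (ih 0).add (ih 1)
    | _ + 3, f => exact f.elim

/-- Every formula of `⟨ℝ,+,<,ℤ⟩` defines a set in `FV`, by induction on the formula. -/
lemma fv_boundedFormula {α : Type} [Fintype α] {n : ℕ} (φ : LsLang.BoundedFormula α n) :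
    FV (α ⊕ Fin n) {z | φ.Realize (z ∘ Sum.inl) (z ∘ Sum.inr)} := by
  have hz : ∀ {n : ℕ} (z : α ⊕ Fin n → ℝ), Sum.elim (z ∘ Sum.inl) (z ∘ Sum.inr) = z :=
    fun z => Sum.elim_comp_inl_inr z
  induction φ with
  | falsum => exact fv_defClass.prop False
  | equal t₁ t₂ =>
    simp only [BoundedFormula.Realize, hz]
    exact fv_defClass.eq (isAff_realize t₁) (isAff_realize t₂)
  | @rel n l R ts =>
    simp only [BoundedFormula.Realize, hz]
    match l, R with
    | 0, R => exact R.elim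
    | 1, R => exact fv_defClass.preimage fv_int fun _ => isAff_realize (ts 0)
    | 2, R => exact fv_defClass.lt (isAff_realize (ts 0)) (isAff_realize (ts 1))
    | _ + 3, R => exact R.elim
  | imp φ ψ ih₁ ih₂ =>
    simp only [BoundedFormula.realize_imp]
    exact fv_defClass.imp ih₁ ih₂
  | @all n φ ih =>
    simp only [BoundedFormula.realize_all]
    refine fv_defClass.forall_real
      (p := fun z t => φ.Realize (z ∘ Sum.inl) (Fin.snoc (z ∘ Sum.inr) t)) ?_
    convert fv_defClass.reindex (Sum.elim (fun a => Sum.inl (Sum.inl a))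
      (Fin.snoc (α := fun _ => (α ⊕ Fin n) ⊕ Unit) (fun i => Sum.inl (Sum.inr i)) (Sum.inr ())))
      ih using 3 with z
    simp only [Set.mem_ofPred_eq]
    congr! 1
    ext i
    refine Fin.lastCases ?_ (fun i => ?_) i <;> simp

lemma fv_of_lsDefinable {n : ℕ} {X : Set (Fin n → ℝ)} (h : LsDefinable X) : FV (Fin n) X := by
  obtain ⟨φ, rfl⟩ := Set.empty_definable_iff.1 h
  convert fv_defClass.reindex (Sum.elim id Fin.elim0 : Fin n ⊕ Fin 0 → Fin n)
    (fv_boundedFormula φ) using 3 with x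
  simp only [Set.mem_ofPred_eq, Formula.Realize]
  congr! 1

end Formulas

/-! ### Definability in `⟨ℝ,+,<,1⟩` and its expansions -/

section Structures

open FirstOrder Language

lemma definable_defClass (L : FirstOrder.Language.{0, 0}) [L.Structure ℝ]
    (hpos : ∀ (ι : Type) [Fintype ι] (f : Form ι), Set.Definable ∅ L {x : ι → ℝ | 0 < ev f x}) :
    DefClass fun ι _ X => Set.Definable (∅ : Set ℝ) L (X : Set (ι → ℝ)) where
  compl := fun h => h.compl
  inter := fun h h' => h.inter h'
  reindex := fun σ _ h => h.preimage_comp σ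
  ex := by
    intro ι _ X h
    convert h.image_comp (some : ι → Option ι) using 1
    ext x
    constructor
    · rintro ⟨t, ht⟩
      exact ⟨_, ht, rfl⟩
    · rintro ⟨y, hy, rfl⟩
      refine ⟨y none, mem_cong hy ?_⟩
      ext o; cases o <;> rfl
  pos := fun f => hpos _ f

/-- The constant `1` as a term. -/
def ssOne {α : Type} : SsLang.Term α := Term.func (show SsLang.Functions 0 from ()) Fin.elim0

/-- The sum of two terms. -/
def ssAdd {α : Type} (s t : SsLang.Term α) : SsLang.Term α := Term.func (show SsLang.Functions 2 from ()) ![s, t]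

lemma realize_ssOne {α : Type} (x : α → ℝ) : (ssOne : SsLang.Term α).realize x = 1 := rfl

lemma realize_ssAdd {α : Type} (s t : SsLang.Term α) (x : α → ℝ) :
    (ssAdd s t).realize x = s.realize x + t.realize x := rfl

lemma exists_add_nsmul {α : Type} (s t : SsLang.Term α) (m : ℕ) :
    ∃ u : SsLang.Term α, ∀ x : α → ℝ, u.realize x = s.realize x + m * t.realize x := by
  induction m with
  | zero => exact ⟨s, fun x => by simp⟩
  | succ m ih =>
    obtain ⟨u, hu⟩ := ih
    exact ⟨ssAdd u t, fun x => by rw [realize_ssAdd, hu]; push_cast; ring⟩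

/-- The language has no symbol for `0`, so terms are built upwards from the constant `1`; the summand `1`
cancels when two such terms are compared. -/
lemma exists_term {ι : Type} [Fintype ι] (a : ι → ℕ) (b : ℕ) :
    ∃ u : SsLang.Term ι, ∀ x : ι → ℝ, u.realize x = 1 + ∑ i, (a i : ℝ) * x i + b := by
  classical
  have key : ∀ s : Finset ι, ∃ u : SsLang.Term ι, ∀ x : ι → ℝ,
      u.realize x = 1 + ∑ i ∈ s, (a i : ℝ) * x i := by
    intro s
    induction s using Finset.induction_on with
    | empty => exact ⟨ssOne, fun x => by simp [realize_ssOne]⟩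
    | insert i s hi ih =>
      obtain ⟨u, hu⟩ := ih
      obtain ⟨v, hv⟩ := exists_add_nsmul u (Term.var i) (a i)
      refine ⟨v, fun x => ?_⟩
      rw [hv, hu, Finset.sum_insert hi, Term.realize_var]
      ring
  obtain ⟨u, hu⟩ := key Finset.univ
  obtain ⟨v, hv⟩ := exists_add_nsmul u ssOne b
  exact ⟨v, fun x => by rw [hv, hu, realize_ssOne, mul_one]⟩

lemma ss_pos (ι : Type) [Fintype ι] (f : Form ι) :
    Set.Definable ∅ SsLang {x : ι → ℝ | 0 < ev f x} := by
  obtain ⟨N, a, b, hN, ha, hb⟩ := clear_denoms f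
  obtain ⟨s, hs⟩ := exists_term (fun i => (-a i).toNat) (-b).toNat
  obtain ⟨t, ht⟩ := exists_term (fun i => (a i).toNat) b.toNat
  refine Set.empty_definable_iff.2 ⟨Relations.formula (show SsLang.Relations 2 from ()) ![s, t], ?_⟩
  ext x
  have hN' : (0 : ℝ) < N := by exact_mod_cast hN
  have h1 : (N : ℝ) * ev f x = t.realize x - s.realize x := by
    have key : ∀ z : ℤ, ((z.toNat : ℕ) : ℝ) - ((-z).toNat : ℕ) = z := fun z => by
      exact_mod_cast Int.toNat_sub_toNat_neg z
    have ha' : ∀ i, (N : ℝ) * f.1 i = a i := fun i => by exact_mod_cast congrArg (Rat.cast (K := ℝ)) (ha i)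
    have hb' : (N : ℝ) * f.2 = b := by exact_mod_cast congrArg (Rat.cast (K := ℝ)) hb
    simp only [hs, ht, ev, lin, mul_add, Finset.mul_sum, ← mul_assoc, ha', hb', ← key, sub_mul,
      Finset.sum_sub_distrib]
    ring
  rw [Set.mem_ofPred_eq, ← mul_pos_iff_of_pos_left hN', h1, sub_pos, Set.mem_ofPred_eq, Formula.realize_rel]
  rfl

lemma ss_defClass : DefClass fun ι _ X => Set.Definable (∅ : Set ℝ) SsLang (X : Set (ι → ℝ)) :=
  definable_defClass _ ss_pos

lemma expansion_defClass (n : ℕ) (X : Set (Fin n → ℝ)) :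
    letI : (RelLang n).Structure ℝ := xStructure n X
    DefClass fun ι _ X => Set.Definable (∅ : Set ℝ) (SsLang.sum (RelLang n)) (X : Set (ι → ℝ)) := by
  let _ : (RelLang n).Structure ℝ := xStructure n X
  exact definable_defClass _ fun ι _ f =>
    (ss_pos ι f).map_expansion (LHom.sumInl : SsLang →ᴸ SsLang.sum (RelLang n))

lemma expansion_definable (n : ℕ) (X : Set (Fin n → ℝ)) :
    letI : (RelLang n).Structure ℝ := xStructure n X
    Set.Definable (∅ : Set ℝ) (SsLang.sum (RelLang n)) X := by
  let _ : (RelLang n).Structure ℝ := xStructure n X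
  have h : Set.Definable (∅ : Set ℝ) (RelLang n) X :=
    Set.empty_definable_iff.2
      ⟨Relations.formula (L := RelLang n) (n := n) ⟨rfl⟩ fun i => Term.var i, by
        ext x; exact Iff.rfl⟩
  exact h.map_expansion (LHom.sumInr : RelLang n →ᴸ SsLang.sum (RelLang n))

end Structures

/-! ### Local conicity and critical values -/

section Conic

open Topology Filter

variable {ι : Type} [Fintype ι]

lemma sign_add_of_abs_lt {A s : ℝ} (h : |s| < |A|) : SignType.sign (A + s) = SignType.sign A := by
  have hs := abs_lt.1 h
  rcases lt_trichotomy A 0 with hA | rfl | hA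
  · rw [abs_of_neg hA] at hs
    rw [sign_neg hA, sign_neg (by linarith)]
  · simp only [abs_zero] at h
    exact absurd h (abs_nonneg s).not_gt
  · rw [abs_of_pos hA] at hs
    rw [sign_pos hA, sign_pos (by linarith)]

lemma exists_radius {p : (ι → ℝ) → Prop} (h : ∀ᶠ w in 𝓝 0, p w) :
    ∃ r > 0, ∀ w, ‖w‖ < r → p w := by
  obtain ⟨r, hr, h⟩ := Metric.eventually_nhds_iff.1 h
  exact ⟨r, hr, fun w hw => h (by simpa using hw)⟩

lemma eventually_abs_lin_lt (g : ι → ℚ) {A : ℝ} (hA : A ≠ 0) :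
    ∀ᶠ w : ι → ℝ in 𝓝 0, |lin g w| < |A| := by
  have h : Tendsto (fun w => |lin g w|) (𝓝 0) (𝓝 |lin g 0|) :=
    ((continuous_lin g).abs).tendsto 0
  rw [lin_zero, abs_zero] at h
  exact h.eventually (gt_mem_nhds (abs_pos.2 hA))

/-- Near every point `x`, membership in `X` depends only on the signs at `w = y - x` of the linear
functionals in `G`. -/
def LocConic (G : Finset (ι → ℚ)) (X : Set (ι → ℝ)) : Prop :=
  ∀ x, ∃ r > 0, ∀ w w' : ι → ℝ, ‖w‖ < r → ‖w'‖ < r →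
    (∀ g ∈ G, SignType.sign (lin g w) = SignType.sign (lin g w')) → x + w ∈ X → x + w' ∈ X

lemma floor_add_small {a s : ℝ} (h1 : |s| < 1 - Int.fract a) (h2 : Int.fract a ≠ 0 → |s| < Int.fract a)
    (h3 : |s| < 1) : ⌊a + s⌋ = if 0 ≤ s ∨ Int.fract a ≠ 0 then ⌊a⌋ else ⌊a⌋ - 1 := by
  have ha := Int.floor_add_fract a
  have h1 := abs_lt.1 h1
  have h3 := abs_lt.1 h3
  have h0 := Int.fract_nonneg a
  split_ifs with h
  · rw [Int.floor_eq_iff]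
    by_cases hf : Int.fract a = 0
    · have := h.resolve_right (not_not.2 hf)
      constructor <;> linarith
    · have := abs_lt.1 (h2 hf)
      constructor <;> linarith
  · push Not at h
    rw [Int.floor_eq_iff]
    push_cast
    constructor <;> linarith

/-- Near `x` the integer part of `x + w` is determined by the signs of the coordinates of `w`, and takes
finitely many values `k`. For each of these, the sign of a form `f` at `x - k + w` equals its sign at
`x - k` or, if that is zero, the sign of its linear part at `w`. -/
lemma fv_locConic {X : Set (ι → ℝ)} (hX : FV ι X) : ∃ G, LocConic G X := by
  classical
  obtain ⟨C, _, c, F, -, h⟩ := hX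
  refine ⟨F.image Prod.fst ∪ Finset.univ.image fun i => Pi.single i 1, fun x => ?_⟩
  let K : Finset (ι → ℤ) := Fintype.piFinset fun i => {⌊x i⌋ - 1, ⌊x i⌋}
  have e1 : ∀ᶠ w : ι → ℝ in 𝓝 0, ∀ f ∈ F, ∀ k ∈ K, ev f (fun i => x i - k i) ≠ 0 →
      |lin f.1 w| < |ev f (fun i => x i - k i)| := by
    refine (eventually_all_finset F).2 fun f _ => (eventually_all_finset K).2 fun k _ => ?_
    by_cases h0 : ev f (fun i => x i - k i) = 0
    · simp [h0]
    · exact (eventually_abs_lin_lt f.1 h0).mono fun w hw _ => hw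
  have e2 : ∀ᶠ w : ι → ℝ in 𝓝 0, ∀ i, |w i| < 1 - Int.fract (x i) ∧
      (Int.fract (x i) ≠ 0 → |w i| < Int.fract (x i)) ∧ |w i| < 1 := by
    refine eventually_all.2 fun i => ?_
    have hw : ∀ A : ℝ, 0 < A → ∀ᶠ w : ι → ℝ in 𝓝 0, |w i| < A := fun A hA => by
      simpa [lin_single, abs_of_pos hA] using
        eventually_abs_lin_lt (ι := ι) (Pi.single i 1) hA.ne'
    refine (hw _ (sub_pos.2 (Int.fract_lt_one _))).and (Eventually.and ?_ (hw 1 one_pos))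
    by_cases h0 : Int.fract (x i) = 0
    · simp [h0]
    · exact (hw _ (lt_of_le_of_ne (Int.fract_nonneg _) (Ne.symm h0))).mono fun w hw _ => hw
  obtain ⟨r, hr, hr'⟩ := exists_radius (e1.and e2)
  refine ⟨r, hr, fun w w' hw hw' hs => ?_⟩
  obtain ⟨hw1, hw2⟩ := hr' w hw
  obtain ⟨hw1', hw2'⟩ := hr' w' hw'
  have hfl : ifl (x + w) = ifl (x + w') := by
    ext i
    have hsi := hs (Pi.single i 1)
      (Finset.mem_union_right _ (Finset.mem_image_of_mem _ (Finset.mem_univ i)))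
    rw [lin_single, lin_single] at hsi
    have : 0 ≤ w i ↔ 0 ≤ w' i := by rw [← sign_nonneg_iff, hsi, sign_nonneg_iff]
    simp only [ifl, Pi.add_apply]
    rw [floor_add_small (hw2 i).1 (hw2 i).2.1 (hw2 i).2.2,
      floor_add_small (hw2' i).1 (hw2' i).2.1 (hw2' i).2.2]
    simp only [this]
  have hK : ifl (x + w) ∈ K := by
    refine Fintype.mem_piFinset.2 fun i => ?_
    simp only [ifl, Pi.add_apply]
    rw [floor_add_small (hw2 i).1 (hw2 i).2.1 (hw2 i).2.2]
    split_ifs <;> simp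
  have hfr : ∀ u : ι → ℝ, ∀ f : Form ι, ev f (ifr (x + u)) =
      ev f (fun i => x i - ifl (x + u) i) + lin f.1 u := by
    intro u f
    rw [← ev_add]
    congr 1
    ext i
    simp only [ifr, ifl, Int.fract, Pi.add_apply]
    ring
  refine h _ _ (congrArg c hfl) fun f hf => ?_
  rw [hfr, hfr, ← hfl]
  by_cases h0 : ev f (fun i => x i - ifl (x + w) i) = 0
  · rw [h0, zero_add, zero_add]
    exact hs _ (Finset.mem_union_left _ (Finset.mem_image_of_mem _ hf))
  · rw [sign_add_of_abs_lt (hw1 f hf _ hK h0), sign_add_of_abs_lt (hw1' f hf _ hK h0)]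

/-- Near `x`, the set `X` is invariant under translation along the common kernel of `G`. The radius is
expressed coordinatewise, so that the condition is visibly first-order over `⟨ℝ,+,<,X⟩`. -/
def Inv (X : Set (ι → ℝ)) (G : Finset (ι → ℚ)) (x : ι → ℝ) : Prop :=
  ∃ r : ℝ, 0 < r ∧ ∀ w w' : ι → ℝ, (∀ i, -r < w i ∧ w i < r) → (∀ i, -r < w' i ∧ w' i < r) →
    (∀ g ∈ G, lin g w = lin g w') → (fun i => x i + w i) ∈ X → (fun i => x i + w' i) ∈ X

lemma inv_iff {X : Set (ι → ℝ)} {G : Finset (ι → ℚ)} {x : ι → ℝ} : Inv X G x ↔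
    ∃ r > 0, ∀ w w' : ι → ℝ, ‖w‖ < r → ‖w'‖ < r → (∀ g ∈ G, lin g w = lin g w') →
      x + w ∈ X → x + w' ∈ X := by
  refine exists_congr fun r => and_congr_right fun hr => ?_
  have h : ∀ w : ι → ℝ, ‖w‖ < r ↔ ∀ i, -r < w i ∧ w i < r := fun w => by
    simp [pi_norm_lt_iff hr, abs_lt]
  simp only [h]
  rfl

/-- The subspace of directions `v` such that, near `x`, the set `X` is invariant under translation along `v`. -/
def lp (X : Set (ι → ℝ)) (x : ι → ℝ) : Submodule ℝ (ι → ℝ) where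
  carrier := {v | ∃ r > 0, ∀ w : ι → ℝ, ∀ s : ℝ, ‖w‖ < r → |s| < r →
    (x + w ∈ X ↔ x + (w + s • v) ∈ X)}
  zero_mem' := ⟨1, one_pos, by simp⟩
  add_mem' := by
    rintro u v ⟨r, hr, hu⟩ ⟨r', hr', hv⟩
    have hpos : 0 < 2 * (‖u‖ + 1) := by positivity
    refine ⟨min (min r r') (min (r' / 2) (r' / (2 * (‖u‖ + 1)))), by positivity, ?_⟩
    intro w s hw hs
    simp only [lt_min_iff] at hw hs
    rw [hu w s hw.1.1 hs.1.1, hv (w + s • u) s ?_ hs.1.2, smul_add, add_assoc w]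
    have h1 : ‖s • u‖ ≤ r' / 2 := by
      rw [norm_smul, Real.norm_eq_abs]
      have := (lt_div_iff₀ hpos).1 hs.2.2
      nlinarith [abs_nonneg s, norm_nonneg u]
    calc ‖w + s • u‖ ≤ ‖w‖ + ‖s • u‖ := norm_add_le _ _
      _ < r' := by linarith [hw.2.1]
  smul_mem' := by
    rintro a v ⟨r, hr, hv⟩
    refine ⟨min r (r / (|a| + 1)), by positivity, fun w s hw hs => ?_⟩
    simp only [lt_min_iff] at hw hs
    rw [hv w (s * a) hw.1 ?_, mul_smul]
    rw [abs_mul]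
    have := (lt_div_iff₀ (by positivity)).1 hs.2
    nlinarith [abs_nonneg s, abs_nonneg a]

lemma mem_lp {X : Set (ι → ℝ)} {x v : ι → ℝ} : v ∈ lp X x ↔
    ∃ r > 0, ∀ w : ι → ℝ, ∀ s : ℝ, ‖w‖ < r → |s| < r →
      (x + w ∈ X ↔ x + (w + s • v) ∈ X) := Iff.rfl

lemma Inv.mem_lp {X : Set (ι → ℝ)} {G : Finset (ι → ℚ)} {x : ι → ℝ} (h : Inv X G x)
    {v : ι → ℝ} (hv : ∀ g ∈ G, lin g v = 0) : v ∈ lp X x := by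
  obtain ⟨r, hr, h⟩ := inv_iff.1 h
  refine ⟨min (r / 2) (r / (2 * (‖v‖ + 1))), by positivity, fun w s hw hs => ?_⟩
  simp only [lt_min_iff] at hw hs
  have h1 : ‖s • v‖ ≤ r / 2 := by
    rw [norm_smul, Real.norm_eq_abs]
    have := (lt_div_iff₀ (by positivity)).1 hs.2
    nlinarith [abs_nonneg s, norm_nonneg v]
  have h2 : ‖w + s • v‖ < r := (norm_add_le _ _).trans_lt (by linarith [hw.1])
  have h3 : ∀ g ∈ G, lin g w = lin g (w + s • v) := fun g hg => by
    rw [lin_add, lin_smul, hv g hg, mul_zero, add_zero]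
  exact ⟨h _ _ (by linarith [hw.1]) h2 h3, h _ _ h2 (by linarith [hw.1]) fun g hg => (h3 g hg).symm⟩

/-- The functionals in `G` vanishing on `lp X x` already determine `X` near `x` up to translation. Choose
`v ∈ lp X x` avoiding the kernels of all other functionals: translating small vectors `w` by `v`
does not change membership, while it makes the signs of all the other functionals constant. With
`Inv.mem_lp` it follows that `lp X x` is the common kernel of these functionals. -/
lemma exists_inv {G : Finset (ι → ℚ)} {X : Set (ι → ℝ)} (hX : LocConic G X) (x : ι → ℝ) :
    ∃ G' ⊆ G, Inv X G' x ∧ ∀ g ∈ G', ∀ v ∈ lp X x, lin g v = 0 := by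
  classical
  let G' := G.filter fun g => ∀ v ∈ lp X x, lin g v = 0
  have hG' : ∀ g ∈ G', ∀ v ∈ lp X x, lin g v = 0 := fun g hg => (Finset.mem_filter.1 hg).2
  refine ⟨G', Finset.filter_subset _ _, ?_, hG'⟩
  let L : (ι → ℚ) → Module.Dual ℝ (ι → ℝ) := fun g =>
    { toFun := lin g
      map_add' := lin_add g
      map_smul' := lin_smul g }
  obtain ⟨v₀, hv₀, hne⟩ := Module.Dual.exists_forall_mem_ne_zero_of_forall_exists (lp X x)
    (fun g : {g // g ∈ G \ G'} => L g) (by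
      rintro ⟨g, hg⟩
      have := (Finset.mem_sdiff.1 hg).2
      by_contra! hcon
      exact this (Finset.mem_filter.2 ⟨(Finset.mem_sdiff.1 hg).1, hcon⟩))
  obtain ⟨ρ, hρ, hρ'⟩ := mem_lp.1 hv₀
  obtain ⟨r, hr, hr'⟩ := hX x
  -- a small positive multiple `v` of `v₀`, which still avoids the kernels of `G \ G'`
  obtain ⟨s, hs, hsρ, hsr⟩ : ∃ s : ℝ, 0 < s ∧ |s| < ρ ∧ ‖s • v₀‖ ≤ r / 2 := by
    have hpos : 0 < 2 * (‖v₀‖ + 1) := by positivity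
    have h0 : 0 < min (ρ / 2) (r / (2 * (‖v₀‖ + 1))) := by positivity
    refine ⟨_, h0, ?_, ?_⟩
    · rw [abs_of_pos h0]
      exact (min_le_left _ _).trans_lt (by linarith)
    · rw [norm_smul, Real.norm_eq_abs, abs_of_pos h0]
      have := (le_div_iff₀ hpos).1 (min_le_right (ρ / 2) (r / (2 * (‖v₀‖ + 1))))
      nlinarith [norm_nonneg v₀]
  have hlin : ∀ g ∈ G, g ∉ G' → lin g (s • v₀) ≠ 0 := fun g hg hg' => by
    rw [lin_smul]
    exact mul_ne_zero hs.ne' (hne ⟨g, Finset.mem_sdiff.2 ⟨hg, hg'⟩⟩)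
  obtain ⟨δ, hδ, hδ'⟩ := exists_radius (ι := ι)
    (p := fun w => ∀ g ∈ G, g ∉ G' → |lin g w| < |lin g (s • v₀)|) (by
      refine (eventually_all_finset G).2 fun g hg => ?_
      by_cases hg' : g ∈ G'
      · simp [hg']
      · exact (eventually_abs_lin_lt g (hlin g hg hg')).mono fun w hw _ => hw)
  refine inv_iff.2 ⟨min (min δ ρ) (r / 2), by positivity, fun w w' hw hw' hww => ?_⟩
  simp only [lt_min_iff] at hw hw'
  rw [hρ' w s hw.1.2 hsρ, hρ' w' s hw'.1.2 hsρ]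
  refine hr' _ _ ((norm_add_le _ _).trans_lt (by linarith [hw.2]))
    ((norm_add_le _ _).trans_lt (by linarith [hw'.2])) fun g hg => ?_
  by_cases hg' : g ∈ G'
  · rw [lin_add, lin_add, hww g hg']
  · rw [add_comm w, add_comm w', lin_add, lin_add, sign_add_of_abs_lt (hδ' w hw.1.1 g hg hg'),
      sign_add_of_abs_lt (hδ' w' hw'.1.1 g hg hg')]

lemma LocConic.radial {G : Finset (ι → ℚ)} {X : Set (ι → ℝ)} (hX : LocConic G X) (x : ι → ℝ) :
    ∃ r > 0, ∀ (w : ι → ℝ) (a : ℝ), 0 < a → ‖w‖ < r → ‖a • w‖ < r →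
      (x + w ∈ X ↔ x + a • w ∈ X) := by
  obtain ⟨r, hr, h⟩ := hX x
  refine ⟨r, hr, fun w a ha hw haw => ?_⟩
  have hs : ∀ g ∈ G, SignType.sign (lin g w) = SignType.sign (lin g (a • w)) := fun g _ => by
    rw [lin_smul, sign_mul, sign_pos ha, one_mul]
  exact ⟨h _ _ hw haw hs, h _ _ haw hw fun g hg => (hs g hg).symm⟩

/-- A locally conic set is invariant under small homotheties about `x`, and under small homotheties about
`x + v`; the composition of the two, with inverse ratios, is a translation along `v`. -/
lemma LocConic.sub_mem_lp {G : Finset (ι → ℚ)} {X : Set (ι → ℝ)} (hX : LocConic G X)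
    (x : ι → ℝ) : ∃ r > 0, ∀ v : ι → ℝ, ‖v‖ < r → v ∈ lp X (x + v) := by
  obtain ⟨r, hr, h⟩ := hX.radial x
  refine ⟨r / 2, by positivity, fun v hv => ?_⟩
  obtain ⟨r', hr', h'⟩ := hX.radial (x + v)
  refine ⟨min (1 / 2) (min (r' / 2) (r / 8)), by positivity, fun w s hw hs => ?_⟩
  simp only [lt_min_iff] at hw hs
  obtain ⟨hs1, hs2⟩ := abs_lt.1 hs.1
  have ha : 0 < 1 + s := by linarith
  have hinv : (1 + s)⁻¹ < 2 := by
    rw [inv_lt_comm₀ ha two_pos]; linarith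
  have hinv0 : 0 < (1 + s)⁻¹ := by positivity
  have hn : ‖(1 + s)⁻¹ • w‖ ≤ 2 * ‖w‖ := by
    rw [norm_smul, Real.norm_eq_abs, abs_of_pos hinv0]
    exact mul_le_mul_of_nonneg_right hinv.le (norm_nonneg w)
  have hid : (1 + s) • (v + (1 + s)⁻¹ • w) = v + (w + s • v) := by
    rw [smul_add, smul_smul, mul_inv_cancel₀ ha.ne', one_smul, add_smul, one_smul]
    abel
  -- contract by `(1 + s)⁻¹` about `x + v`, then expand by `1 + s` about `x`
  rw [h' w _ hinv0 (by linarith [norm_nonneg w, hw.2.1]) (by linarith [hw.2.1]), add_assoc x,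
    h _ (1 + s) ha, hid, add_assoc]
  · exact (norm_add_le _ _).trans_lt (by linarith [hw.2.2])
  · rw [hid]
    have h1 : ‖s • v‖ ≤ 1 / 2 * ‖v‖ := by
      rw [norm_smul, Real.norm_eq_abs]
      exact mul_le_mul_of_nonneg_right hs.1.le (norm_nonneg v)
    calc ‖v + (w + s • v)‖ ≤ ‖v‖ + (‖w‖ + ‖s • v‖) :=
          (norm_add_le _ _).trans (add_le_add le_rfl (norm_add_le _ _))
      _ < r := by linarith [hw.2.2]

/-- The critical values of `ℓ`: the values `ℓ x` at the points `x` such that `ℓ` vanishes on `lp X x`. The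
condition is phrased through `Inv` for the subsets of `G`, which makes it first-order over
`⟨ℝ,+,<,1,X⟩`; `crit_eq` is the description in terms of `lp`. Subsets of the line are encoded as
subsets of `Unit → ℝ`. -/
def crit (X : Set (ι → ℝ)) (G : Finset (ι → ℚ)) (ℓ : ι → ℚ) : Set (Unit → ℝ) :=
  {t | ∃ x : ι → ℝ, lin ℓ x = t () ∧ ∀ G' : {G' // G' ∈ G.powerset}, Inv X G'.1 x →
    ∀ v : ι → ℝ, (∀ g ∈ G'.1, lin g v = 0) → lin ℓ v = 0}

lemma crit_def {D : ∀ (ι : Type) [Fintype ι], Set (ι → ℝ) → Prop} (hD : DefClass D)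
    {X : Set (ι → ℝ)} (hX : D ι X) (G : Finset (ι → ℚ)) (ℓ : ι → ℚ) : D Unit (crit X G ℓ) := by
  have hInv : ∀ G', D ι {x | Inv X G' x} := by
    intro G'
    refine hD.exists_real (hD.and (hD.lt .zero (.coord _)) ?_)
    refine hD.forall' (hD.forall' ?_)
    refine hD.imp (hD.forall_fin fun i => hD.and (hD.lt (.neg (.coord _)) (.coord _))
      (hD.lt (.coord _) (.coord _))) ?_
    refine hD.imp (hD.forall_fin fun i => hD.and (hD.lt (.neg (.coord _)) (.coord _))
      (hD.lt (.coord _) (.coord _))) ?_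
    refine hD.imp (hD.forall_mem _ fun g => hD.eq (.lin _ fun i => .coord _)
      (.lin _ fun i => .coord _)) ?_
    exact hD.imp (hD.preimage hX fun i => .add (.coord _) (.coord _))
      (hD.preimage hX fun i => .add (.coord _) (.coord _))
  refine hD.exists' (hD.and (hD.eq (.lin _ fun i => .coord _) (.coord _)) ?_)
  exact hD.forall_fin fun G' => hD.imp (hD.reindex Sum.inr (hInv _)) (hD.prop _)

lemma crit_eq {G : Finset (ι → ℚ)} {X : Set (ι → ℝ)} (hX : LocConic G X) (ℓ : ι → ℚ)
    {t : Unit → ℝ} : t ∈ crit X G ℓ ↔ ∃ x, lin ℓ x = t () ∧ ∀ v ∈ lp X x, lin ℓ v = 0 := by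
  refine exists_congr fun x => and_congr_right fun _ => ?_
  constructor
  · intro h v hv
    obtain ⟨G', hG', hI, hz⟩ := exists_inv hX x
    exact h ⟨G', Finset.mem_powerset.2 hG'⟩ hI v fun g hg => hz g hg v hv
  · intro h G' hI v hv
    exact h v (hI.mem_lp hv)

/-- By `LocConic.sub_mem_lp`, near each `x` the only possible critical value of `ℓ` is `ℓ x`; countably
many such neighbourhoods cover the space. -/
lemma crit_countable {G : Finset (ι → ℚ)} {X : Set (ι → ℝ)} (hX : LocConic G X) (ℓ : ι → ℚ) :
    (crit X G ℓ).Countable := by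
  choose r hr h using hX.sub_mem_lp
  obtain ⟨S, hS, hcov⟩ := TopologicalSpace.countable_cover_nhds
    fun x : ι → ℝ => Metric.ball_mem_nhds x (hr x)
  refine (hS.image fun x (_ : Unit) => lin ℓ x).mono fun t ht => ?_
  obtain ⟨y, hy, hv⟩ := (crit_eq hX ℓ).1 ht
  have : y ∈ ⋃ x ∈ S, Metric.ball x (r x) := hcov ▸ Set.mem_univ y
  simp only [Set.mem_iUnion] at this
  obtain ⟨x, hx, hyx⟩ := this
  refine ⟨x, hx, ?_⟩
  ext
  have h1 := h x (y - x) (by simpa [dist_eq_norm] using hyx)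
  rw [add_sub_cancel] at h1
  have h2 := hv _ h1
  rw [lin_sub, sub_eq_zero] at h2
  rw [← hy, h2]

/-- If every critical value `q` of every `g ∈ G` is the zero of a form `g - q` in `F`, then `X` is a union of
cells of `F`. Along a segment inside a cell, membership in `X` is locally constant: at a point of
the segment, the forms of `F` belonging to the functionals that matter vanish, hence vanish on the
whole segment, so the segment is parallel to a direction of local invariance of `X`. -/
lemma mem_of_same {G : Finset (ι → ℚ)} {X : Set (ι → ℝ)} (hX : LocConic G X)
    (F : Finset (Form ι))
    (hF : ∀ g ∈ G, ∀ t ∈ crit X G g, ∃ q : ℚ, t () = q ∧ (g, -q) ∈ F)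
    {a b : ι → ℝ} (hab : Same F a b) (ha : a ∈ X) : b ∈ X := by
  let γ : unitInterval → ι → ℝ := fun t => a + (t : ℝ) • (b - a)
  have hγ : Continuous γ := by fun_prop
  have hconst : IsLocallyConstant fun t => γ t ∈ X := by
    rw [IsLocallyConstant.iff_eventually_eq]
    intro t
    obtain ⟨G', hG', hI, hz⟩ := exists_inv hX (γ t)
    have hpar : ∀ g ∈ G', lin g (b - a) = 0 := by
      intro g hg
      obtain ⟨q, hq, hqF⟩ := hF g (hG' hg) (fun _ => lin g (γ t))
        ((crit_eq hX g).2 ⟨γ t, rfl, hz g hg⟩)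
      have hs := hab _ hqF
      have h0 : lin g a + t * (lin g b - lin g a) = q := by
        rw [← lin_sub, ← lin_smul, ← lin_add]; exact hq
      simp only [ev, Rat.cast_neg] at hs
      rw [lin_sub, sub_eq_zero]
      have ht0 := t.2.1
      have ht1 := t.2.2
      rcases lt_trichotomy (lin g a + -(q : ℝ)) 0 with h | h | h
      · rw [sign_neg h, eq_comm, sign_eq_neg_one_iff] at hs
        nlinarith
      · rw [h, sign_zero, eq_comm, sign_eq_zero_iff] at hs
        linarith
      · rw [sign_pos h, eq_comm, sign_eq_one_iff] at hs
        nlinarith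
    obtain ⟨r, hr, h⟩ := inv_iff.1 hI
    have hnear : ∀ᶠ s in 𝓝 t, ‖γ s - γ t‖ < r := by
      have h1 : Tendsto (fun s => ‖γ s - γ t‖) (𝓝 t) (𝓝 ‖γ t - γ t‖) :=
        ((hγ.sub continuous_const).norm).tendsto t
      rw [sub_self, norm_zero] at h1
      exact h1.eventually (gt_mem_nhds hr)
    refine hnear.mono fun s hs => propext ?_
    have hlin : ∀ g ∈ G', lin g (γ s - γ t) = lin g (0 : ι → ℝ) := fun g hg => by
      simp only [γ, add_sub_add_left_eq_sub, ← sub_smul, lin_smul, hpar g hg, mul_zero, lin_zero]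
    have h0 : ‖(0 : ι → ℝ)‖ < r := by simpa using hr
    have h1 := h _ _ hs h0 hlin
    have h2 := h _ _ h0 hs fun g hg => (hlin g hg).symm
    rw [add_sub_cancel, add_zero] at h1 h2
    exact ⟨h1, h2⟩
  have := hconst.apply_eq_of_preconnectedSpace 0 1
  simp only [γ, Set.Icc.coe_zero, Set.Icc.coe_one, zero_smul, one_smul, add_zero,
    add_sub_cancel, eq_iff_iff] at this
  exact this.1 ha

lemma definable_of_same {D : ∀ (ι : Type) [Fintype ι], Set (ι → ℝ) → Prop} (hD : DefClass D)
    (F : Finset (Form ι)) {X : Set (ι → ℝ)} (h : ∀ a b, Same F a b → a ∈ X → b ∈ X) :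
    D ι X := by
  have haff : ∀ f : Form ι, IsAff (ev f) := fun f => ⟨f, fun _ => rfl⟩
  have hsign : ∀ (f : Form ι) (σ : SignType), D ι {x | SignType.sign (ev f x) = σ} := by
    intro f σ
    cases σ
    · convert hD.eq (haff f) .zero using 3 with x
      exact sign_eq_zero_iff
    · convert hD.lt (haff f) .zero using 3 with x
      exact sign_eq_neg_one_iff
    · convert hD.lt .zero (haff f) using 3 with x
      exact sign_eq_one_iff
  convert hD.exists_fin (α := F → SignType) fun σ => hD.and
    (hD.prop (∃ y ∈ X, ∀ f : F, SignType.sign (ev f.1 y) = σ f))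
    (hD.forall_fin fun f : F => hsign f.1 (σ f)) using 1
  ext x
  constructor
  · intro hx
    exact ⟨fun f => SignType.sign (ev f.1 x), ⟨x, hx, fun _ => rfl⟩, fun _ => rfl⟩
  · rintro ⟨σ, ⟨y, hy, hyσ⟩, hxσ⟩
    exact h y x (fun f hf => (hyσ ⟨f, hf⟩).trans (hxσ ⟨f, hf⟩).symm) hy

end Conic

/-! ### Countable subsets of the line -/

section Line

open Topology Filter

/-- Around a point whose fractional part is not a zero of one of the nonconstant forms describing `H`, the
set `H` would contain a ball. Hence the points of a countable `H` are rational with bounded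
denominator. -/
lemma exists_den {H : Set (Unit → ℝ)} (hH : FV Unit H) (hc : H.Countable) :
    ∃ N : ℕ, 0 < N ∧ ∀ t ∈ H, ∃ m : ℤ, (N : ℝ) * t () = m := by
  classical
  obtain ⟨C, _, c, F, -, h⟩ := hH
  let F' : Finset (Form Unit) := insert (1, 0) F
  let q : Form Unit → ℚ := fun f => -f.2 / f.1 ()
  refine ⟨∏ f ∈ F', (q f).den, Finset.prod_pos fun f _ => (q f).den_pos, fun t ht => ?_⟩
  have hev : ∀ (f : Form Unit) (x : Unit → ℝ), ev f x = f.1 () * x () + f.2 := fun f x => by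
    simp [ev, lin]
  by_cases hex : ∃ f ∈ F', f.1 () ≠ 0 ∧ ev f (ifr t) = 0
  · obtain ⟨f, hf, h0, hz⟩ := hex
    obtain ⟨z, hz'⟩ := exists_int_mul (q f) (Finset.dvd_prod_of_mem (fun f => (q f).den) hf)
    have hq : Int.fract (t ()) = q f := by
      have h0' : (f.1 () : ℝ) ≠ 0 := by exact_mod_cast h0
      rw [hev] at hz
      simp only [q]
      push_cast
      rw [eq_div_iff h0']
      change (f.1 () : ℝ) * Int.fract (t ()) + f.2 = 0 at hz
      linarith
    refine ⟨(∏ f ∈ F', (q f).den : ℕ) * ⌊t ()⌋ + z, ?_⟩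
    have hz'' := congrArg (Rat.cast (K := ℝ)) hz'
    push_cast at hz'' ⊢
    rw [← hz'', ← hq, ← mul_add, Int.floor_add_fract]
  · push Not at hex
    -- no nonconstant form vanishes at `t`, so `H` is a neighbourhood of `t`
    have hfr0 : Int.fract (t ()) ≠ 0 := by
      have h1 := hex (1, 0) (Finset.mem_insert_self _ _) (by simp)
      rw [hev] at h1
      simpa [ifr] using h1
    have e1 : ∀ᶠ w : Unit → ℝ in 𝓝 0, ∀ f ∈ F, ev f (ifr t) ≠ 0 →
        |lin f.1 w| < |ev f (ifr t)| := by
      refine (eventually_all_finset F).2 fun f _ => ?_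
      by_cases h0 : ev f (ifr t) = 0
      · simp [h0]
      · exact (eventually_abs_lin_lt f.1 h0).mono fun w hw _ => hw
    have hw : ∀ A : ℝ, 0 < A → ∀ᶠ w : Unit → ℝ in 𝓝 0, |w ()| < A := fun A hA => by
      simpa [lin_single, abs_of_pos hA] using
        eventually_abs_lin_lt (ι := Unit) (Pi.single () 1) hA.ne'
    obtain ⟨r, hr, hr'⟩ := exists_radius (e1.and (((hw _ (sub_pos.2 (Int.fract_lt_one (t ())))).and
      (hw _ (lt_of_le_of_ne (Int.fract_nonneg _) (Ne.symm hfr0)))).and (hw 1 one_pos)))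
    have hsub : Metric.ball t r ⊆ H := by
      intro s hs
      obtain ⟨h1, ⟨h2, h3⟩, h4⟩ := hr' (s - t) (by simpa [dist_eq_norm] using hs)
      have hfl : ⌊s ()⌋ = ⌊t ()⌋ := by
        have := floor_add_small h2 (fun _ => h3) h4
        rwa [if_pos (Or.inr hfr0), Pi.sub_apply, add_sub_cancel] at this
      have hs' : ∀ f : Form Unit, ev f (ifr s) = ev f (ifr t) + lin f.1 (s - t) := fun f => by
        rw [← ev_add]
        congr 1
        ext
        simp only [ifr, Int.fract, hfl, Pi.add_apply, Pi.sub_apply]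
        ring
      refine h t s (congrArg c (funext fun _ => hfl.symm)) (fun f hf => ?_) ht
      rw [hs']
      by_cases h0 : ev f (ifr t) = 0
      · have : f.1 () = 0 := by
          by_contra h5
          exact hex f (Finset.mem_insert_of_mem hf) h5 h0
        simp [lin, this]
      · rw [sign_add_of_abs_lt (h1 f hf h0)]
    obtain ⟨s, hs, hs'⟩ := (hc.dense_compl ℝ).exists_dist_lt t hr
    exact absurd (hsub (by rwa [Metric.mem_ball, dist_comm])) hs

/-- The colouring of `ℤ` restricts to finitely many semilinear subsets of `ℕ`, which are ultimately
periodic. -/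
lemma exists_period {H : Set (Unit → ℝ)} (hH : FV Unit H) :
    ∃ N p : ℕ, 0 < p ∧ ∀ x : ℝ, N ≤ x → ((fun _ => x) ∈ H ↔ (fun _ => x + p) ∈ H) := by
  obtain ⟨C, _, c, F, hc, h⟩ := hH
  have := Fintype.ofFinite C
  let φ : ℕ →+ (Unit → ℤ) :=
    { toFun := fun n _ => n
      map_zero' := by ext; simp
      map_add' := fun m n => by ext; simp }
  have hper : ∀ j : C, ∃ k, ∃ p > 0, ∀ n ≥ k, c (φ n) = j ↔ c (φ (n + p)) = j := fun j =>
    Nat.isSemilinearSet_iff_ultimately_periodic.1 ((hc j).preimage φ)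
  choose k p hp hk using hper
  have hmul : ∀ j n, k j ≤ n → ∀ m : ℕ, c (φ n) = j ↔ c (φ (n + m * p j)) = j := by
    intro j n hn m
    induction m with
    | zero => simp
    | succ m ih =>
      rw [ih, hk j _ (hn.trans (Nat.le_add_right _ _)), add_assoc]
      ring_nf
  refine ⟨∑ j, k j, ∏ j, p j, Finset.prod_pos fun j _ => hp j, fun x hx => ?_⟩
  have hx0 : 0 ≤ x := (Nat.cast_nonneg _).trans hx
  have hfl : ∀ m : ℕ, ifl (fun _ : Unit => x + m) = φ (⌊x⌋₊ + m) := by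
    intro m
    ext
    simp only [ifl, Int.floor_add_natCast, φ, AddMonoidHom.coe_mk, ZeroHom.coe_mk]
    push_cast
    rw [Int.natCast_floor_eq_floor hx0]
  have hfr : ∀ m : ℕ, ifr (fun _ : Unit => x + m) = ifr fun _ : Unit => x := by
    intro m
    ext
    simp [ifr]
  have hceq : c (ifl fun _ : Unit => x) = c (ifl fun _ : Unit => x + (∏ j, p j : ℕ)) := by
    have h0 := hfl 0
    simp only [Nat.cast_zero, add_zero] at h0
    rw [h0, hfl]
    obtain ⟨m, hm⟩ := Finset.dvd_prod_of_mem p (Finset.mem_univ (c (φ ⌊x⌋₊)))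
    rw [hm, mul_comm]
    refine ((hmul (c (φ ⌊x⌋₊)) ⌊x⌋₊ ?_ m).1 rfl).symm
    exact (Finset.single_le_sum (fun _ _ => Nat.zero_le _) (Finset.mem_univ _)).trans
      (Nat.le_floor hx)
  have hs : Same F (ifr fun _ : Unit => x) (ifr fun _ : Unit => x + (∏ j, p j : ℕ)) := by
    rw [hfr]
    exact fun _ _ => rfl
  exact ⟨h _ _ hceq hs, h _ _ hceq.symm hs.symm⟩

/-- The eventual periods of `H` towards `+∞`. -/
def periods (H : Set (Unit → ℝ)) : AddSubgroup ℝ where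
  carrier := {t | ∃ N : ℝ, ∀ x, N < x → ((fun _ => x) ∈ H ↔ (fun _ => x + t) ∈ H)}
  zero_mem' := ⟨0, by simp⟩
  add_mem' := by
    rintro s t ⟨N, hN⟩ ⟨M, hM⟩
    refine ⟨max N (M - s), fun x hx => ?_⟩
    rw [max_lt_iff] at hx
    rw [hN x hx.1, hM (x + s) (by linarith), add_assoc]
  neg_mem' := by
    rintro t ⟨N, hN⟩
    refine ⟨N + t, fun x hx => ?_⟩
    have := hN (x - t) (by linarith)
    rw [sub_add_cancel] at this
    rw [← this, sub_eq_add_neg]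

variable {D : ∀ (ι : Type) [Fintype ι], Set (ι → ℝ) → Prop}

/-- The group of eventual periods of `H` is definable, nontrivial by `exists_period`, and contained in
`(1/N)ℤ` by `exists_den`; hence it is `(a/N)ℤ` for some integer `a ≠ 0`, and rescaling it gives `ℤ`. -/
lemma int_of_unbounded (hD : DefClass D) {H : Set (Unit → ℝ)} (hH : D Unit H) (hfv : FV Unit H)
    (hc : H.Countable) (hub : ∀ M : ℝ, ∃ t ∈ H, M < t ()) :
    D Unit {x | ∃ k : ℤ, x () = k} := by
  obtain ⟨N, hN, hden⟩ := exists_den hfv hc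
  obtain ⟨M, p, hp, hper⟩ := exists_period hfv
  have hN' : (N : ℝ) ≠ 0 := by exact_mod_cast hN.ne'
  have hint : ∀ t ∈ periods H, ∃ m : ℤ, (N : ℝ) * t = m := by
    rintro t ⟨L, hL⟩
    obtain ⟨u, hu, hLu⟩ := hub L
    obtain ⟨a, ha⟩ := hden _ hu
    obtain ⟨b, hb⟩ := hden _ ((hL (u ()) hLu).1 hu)
    exact ⟨b - a, by push_cast; rw [← ha, ← hb]; ring⟩
  let S : AddSubgroup ℤ := (periods H).comap
    { toFun := fun m => (m : ℝ) / N
      map_zero' := by simp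
      map_add' := fun a b => by push_cast; ring }
  have hS : ∀ m : ℤ, m ∈ S ↔ (m : ℝ) / N ∈ periods H := fun _ => Iff.rfl
  obtain ⟨a, ha⟩ := Int.subgroup_cyclic S
  have hmem : ∀ m, m ∈ S ↔ ∃ k : ℤ, k * a = m := fun m => by
    rw [ha, AddSubgroup.mem_closure_singleton]
    simp
  have ha0 : a ≠ 0 := by
    rintro rfl
    have : (N * p : ℤ) ∈ S := by
      rw [hS]
      push_cast
      rw [mul_div_cancel_left₀ _ hN']
      exact ⟨M, fun x hx => hper x hx.le⟩
    obtain ⟨k, hk⟩ := (hmem _).1 this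
    rw [mul_zero, eq_comm] at hk
    have : (0 : ℤ) < N * p := by positivity
    omega
  have ha0' : (a : ℝ) ≠ 0 := by exact_mod_cast ha0
  have hT : D Unit {t | t () ∈ periods H} := by
    refine hD.exists_real (hD.forall_real (hD.imp (hD.lt (.coord _) (.coord _)) (hD.iff ?_ ?_)))
    · exact hD.preimage hH fun _ => .coord _
    · exact hD.preimage hH fun _ => .add (.coord _) (.coord _)
  convert hD.preimage hT (ι := Unit) (e := fun _ x => ((a / N : ℚ) : ℝ) * x ())
    (fun _ => (IsAff.coord ()).smul _) using 3 with x
  push_cast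
  constructor
  · rintro ⟨k, hk⟩
    have : ((k * a : ℤ) : ℝ) / N ∈ periods H := (hS _).1 ((hmem _).2 ⟨k, rfl⟩)
    change (a : ℝ) / N * x () ∈ periods H
    convert this using 1
    rw [hk]
    push_cast
    ring
  · intro hx
    obtain ⟨m, hm⟩ := hint _ hx
    have hm' : (a : ℝ) * x () = m := by
      rw [← hm]
      field_simp
    have : (m : ℝ) / N ∈ periods H := by
      have hx : (a : ℝ) / N * x () ∈ periods H := hx
      convert hx using 1
      rw [← hm']
      ring
    obtain ⟨k, hk⟩ := (hmem _).1 ((hS _).2 this)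
    refine ⟨k, mul_left_cancel₀ ha0' ?_⟩
    rw [hm', ← hk]
    push_cast
    ring

lemma int_of_infinite (hD : DefClass D) {H : Set (Unit → ℝ)} (hH : D Unit H) (hfv : FV Unit H)
    (hc : H.Countable) (hinf : H.Infinite) : D Unit {x | ∃ k : ℤ, x () = k} := by
  by_cases hub : ∀ M : ℝ, ∃ t ∈ H, M < t ()
  · exact int_of_unbounded hD hH hfv hc hub
  by_cases hlb : ∀ M : ℝ, ∃ t ∈ H, t () < -M
  · have haff : ∀ _ : Unit, IsAff fun x : Unit → ℝ => -x () := fun _ => (IsAff.coord ()).neg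
    refine int_of_unbounded hD (hD.preimage hH haff) (fv_defClass.preimage hfv haff) ?_ ?_
    · exact hc.preimage (f := fun (x : Unit → ℝ) (_ : Unit) => -x ()) fun x y h => by
        ext
        exact neg_injective (congrFun h ())
    · intro M
      obtain ⟨t, ht, hM⟩ := hlb M
      have h : (fun _ : Unit => - -t ()) ∈ H := by
        rw [neg_neg]
        exact ht
      exact ⟨fun _ => -t (), h, by linarith⟩
  push Not at hub hlb
  obtain ⟨A, hA⟩ := hub
  obtain ⟨B, hB⟩ := hlb
  obtain ⟨N, hN, hden⟩ := exists_den hfv hc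
  have hN' : (0 : ℝ) < N := by exact_mod_cast hN
  refine absurd (((Set.finite_Icc ⌊-(N * B)⌋ ⌈N * A⌉).image
    fun (m : ℤ) (_ : Unit) => (m : ℝ) / N).subset fun t ht => ?_) hinf
  obtain ⟨m, hm⟩ := hden t ht
  refine ⟨m, ⟨?_, ?_⟩, ?_⟩
  · have : ((⌊-(N * B)⌋ : ℤ) : ℝ) ≤ m := (Int.floor_le _).trans (by
      rw [← hm]; nlinarith [hB t ht])
    exact_mod_cast this
  · have : (m : ℝ) ≤ ((⌈N * A⌉ : ℤ) : ℝ) := le_trans (by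
      rw [← hm]; exact mul_le_mul_of_nonneg_left (hA t ht) hN'.le) (Int.le_ceil _)
    exact_mod_cast this
  · ext
    change (m : ℝ) / N = t ()
    rw [← hm]
    field_simp

end Line

/-! ### The dichotomy -/

/-- The theorem for an arbitrary class `D` containing `X` and a class `D'` not containing it. -/
lemma int_definable {D D' : ∀ (ι : Type) [Fintype ι], Set (ι → ℝ) → Prop} (hD : DefClass D)
    (hD' : DefClass D') {ι : Type} [Fintype ι] {X : Set (ι → ℝ)} (hX : D ι X) (hfv : FV ι X)
    (hX' : ¬ D' ι X) : D Unit {x | ∃ k : ℤ, x () = k} := by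
  classical
  obtain ⟨G, hG⟩ := fv_locConic hfv
  by_cases hinf : ∃ g ∈ G, (crit X G g).Infinite
  · obtain ⟨g, -, hg⟩ := hinf
    exact int_of_infinite hD (crit_def hD hX G g) (crit_def fv_defClass hfv G g)
      (crit_countable hG g) hg
  simp only [not_exists, not_and, Set.not_infinite] at hinf
  refine absurd ?_ hX'
  have hrat : ∀ g, ∀ t ∈ crit X G g, ∃ q : ℚ, t () = q := by
    intro g t ht
    obtain ⟨N, hN, hden⟩ := exists_den (crit_def fv_defClass hfv G g) (crit_countable hG g)
    obtain ⟨m, hm⟩ := hden t ht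
    have hN' : (N : ℝ) ≠ 0 := by exact_mod_cast hN.ne'
    refine ⟨m / N, ?_⟩
    push_cast
    rw [← hm]
    field_simp
  have hfin : ∀ g ∈ G, {q : ℚ | (fun _ : Unit => (q : ℝ)) ∈ crit X G g}.Finite := fun g hg =>
    (hinf g hg).preimage (f := fun (q : ℚ) (_ : Unit) => (q : ℝ)) fun q _ q' _ h => by
      simpa using congrFun h ()
  refine definable_of_same hD' (G.attach.biUnion fun g => (hfin g.1 g.2).toFinset.image
    fun q => (g.1, -q)) fun a b hab ha => mem_of_same hG _ (fun g hg t ht => ?_) hab ha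
  obtain ⟨q, hq⟩ := hrat g t ht
  have hqm : (fun _ : Unit => (q : ℝ)) ∈ crit X G g := mem_cong ht (by ext; exact hq)
  exact ⟨q, hq, Finset.mem_biUnion.2 ⟨⟨g, hg⟩, Finset.mem_attach _ _, Finset.mem_image.2
    ⟨q, (hfin g hg).mem_toFinset.2 hqm, rfl⟩⟩⟩

end NoIntermediate

/-- If `X ⊆ ℝ^n` is `⟨ℝ,+,<,ℤ⟩`-definable but not `⟨ℝ,+,<,1⟩`-definable, then `ℤ` is
definable without parameters in the structure `⟨ℝ,+,<,1,X⟩`. -/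
theorem stmt17 (n : ℕ) (hn : 1 ≤ n) (X : Set (Fin n → ℝ))
    (hLs : LsDefinable X) (hSs : ¬ SsDefinable X) :
    letI : (RelLang n).Structure ℝ := xStructure n X
    Set.Definable (∅ : Set ℝ) (SsLang.sum (RelLang n))
      {f : Fin 1 → ℝ | ∃ k : ℤ, f 0 = (k : ℝ)} := by
  let _ : (RelLang n).Structure ℝ := xStructure n X
  have h := NoIntermediate.int_definable (NoIntermediate.expansion_defClass n X)
    NoIntermediate.ss_defClass (NoIntermediate.expansion_definable n X)
    (NoIntermediate.fv_of_lsDefinable hLs) hSs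
  exact (NoIntermediate.expansion_defClass n X).reindex (fun _ : Unit => (0 : Fin 1)) h
end
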